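/- arXiv:1902.04194 — 5 statements merged into one kernel-verified Lean document; each statement's English description precedes it below -/
import Mathlib

section
/- Let n₀ and p₀ be positive integers such that X*(p₀, n₀) > 3.8 and p₀ > max{2·10⁶, exp(8(n₀−1))}, where X*(p, n) = (π/3)(2e)^{-1/2}((n+1)/n)^{n-1} · p^{1/4}/(log p)^{(n-1)/2} · (1 − ((n+1)/n) e^{-1/n} (log p)^{-1}). Set C = g(n₀, p₀), where g(n,p) = (π/3)√(2e) · (n/(n+1)) · ((1 + √2/(2B log p − 3)) / (1 − (π²/9)(log X*(p,n) + 9)/(3 X*(p,n))))^{1/2} with B = n/(2(n+1)). Then for every prime p ≥ p₀, every nonprincipal Dirichlet character χ modulo p, and every n ≤ n₀, the n-th smallest prime nonresidue qₙ of χ satisfies qₙ ≤ C p^{1/4} (log p)^{(n+1)/2}. -/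
open Real

/-- `X* = (π/3)(2e)^(-1/2) ((n+1)/n)^(n-1) p^(1/4)/(log p)^((n-1)/2)
       · (1 - ((n+1)/n) e^(-1/n) (log p)^(-1))`. -/
noncomputable def Xstar (n : ℕ) (p : ℝ) : ℝ :=
  (π / 3) * (2 * Real.exp 1) ^ (-(1 : ℝ) / 2) * (((n : ℝ) + 1) / (n : ℝ)) ^ (n - 1) *
    p ^ ((1 : ℝ) / 4) / Real.log p ^ (((n : ℝ) - 1) / 2) *
    (1 - ((n : ℝ) + 1) / (n : ℝ) * Real.exp (-1 / (n : ℝ)) / Real.log p)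

/-- `g(n,p) = (π/3)√(2e) (n/(n+1))
      ((1 + √2/(2B log p - 3))/(1 - (π²/9)(log X* + 9)/(3X*)))^(1/2)`
with `B = n/(2(n+1))`. -/
noncomputable def gconst (n : ℕ) (p : ℝ) : ℝ :=
  (π / 3) * Real.sqrt (2 * Real.exp 1) * ((n : ℝ) / ((n : ℝ) + 1)) *
    ((1 + Real.sqrt 2 / (2 * ((n : ℝ) / (2 * ((n : ℝ) + 1))) * Real.log p - 3)) /
        (1 - (π ^ 2 / 9) * (Real.log (Xstar n p) + 9) / (3 * Xstar n p))) ^ ((1 : ℝ) / 2)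

theorem linearIndependent_of_galois_semiinvariant {K Ω E : Type*} [Field K] [Field Ω] [Algebra K Ω]
    [IsGalois K Ω] (w : E → Ω) (hw : ∀ e, w e ≠ 0)
    (hroot : ∀ e (σ : Ω ≃ₐ[K] Ω), ∃ z : K, σ (w e) = algebraMap K Ω z * w e)
    (hdist : ∀ e e', e ≠ e' → ∀ k : K, w e ≠ algebraMap K Ω k * w e')
    (S : Finset E) (c : E → K) (hc : ∑ e ∈ S, algebraMap K Ω (c e) * w e = 0) :
    ∀ e ∈ S, c e = 0 := by
  classical
  induction S using Finset.induction_on generalizing c with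
  | empty => simp
  | insert e₀ S he₀ ih =>
    have hS : ∀ e ∈ S, c e = 0 := by
      intro e₁ he₁
      have hne : e₁ ≠ e₀ := fun h => he₀ (h ▸ he₁)
      have : ∃ σ : Ω ≃ₐ[K] Ω, σ (w e₁ / w e₀) ≠ w e₁ / w e₀ := by
        by_contra! hcon
        have := (InfiniteGalois.mem_bot_iff_fixed (k := K) (w e₁ / w e₀)).2 hcon
        obtain ⟨k, hk⟩ := IntermediateField.mem_bot.1 this
        exact hdist e₁ e₀ hne k (by rw [hk]; field_simp [hw e₀])
      obtain ⟨σ, hσ⟩ := this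
      choose z hz using fun e => hroot e σ
      have h1 : ∑ e ∈ insert e₀ S, algebraMap K Ω (z e * c e) * w e = 0 := by
        have := congrArg σ hc
        rw [map_sum, map_zero] at this
        rw [← this]
        refine Finset.sum_congr rfl fun e _ => ?_
        rw [map_mul σ, hz, AlgEquiv.commutes, map_mul]; ring
      have h2 : ∑ e ∈ S, algebraMap K Ω ((z e - z e₀) * c e) * w e = 0 := by
        have h3 : ∑ e ∈ insert e₀ S, algebraMap K Ω ((z e - z e₀) * c e) * w e = 0 := by
          have h4 : ∀ e ∈ insert e₀ S, algebraMap K Ω ((z e - z e₀) * c e) * w e =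
              algebraMap K Ω (z e * c e) * w e
                - algebraMap K Ω (z e₀) * (algebraMap K Ω (c e) * w e) := by
            intro e _
            simp only [map_mul, map_sub]; ring
          rw [Finset.sum_congr rfl h4, Finset.sum_sub_distrib, ← Finset.mul_sum, h1, hc]; simp
        rw [Finset.sum_insert he₀] at h3
        simpa using h3
      have h5 := ih _ h2 e₁ he₁
      rcases mul_eq_zero.1 h5 with h6 | h6
      · exfalso
        apply hσ
        have h7 : z e₁ = z e₀ := sub_eq_zero.1 h6
        have h8 : z e₀ ≠ 0 := by
          intro h
          have := hz e₀
          rw [h] at this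
          simp at this
          exact hw e₀ this
        have h9 : algebraMap K Ω (z e₀) ≠ 0 := by simpa using h8
        rw [map_div₀, hz, hz, h7]
        have := hw e₀
        field_simp
      · exact h6
    intro e he
    rcases Finset.mem_insert.1 he with rfl | he
    · rw [Finset.sum_insert he₀, Finset.sum_eq_zero (s := S)] at hc
      · simpa [hw e] using hc
      · intro e' he'
        simp [hS e' he']
    · exact hS e he

open Polynomial in
/-- Radical monomials with equal ratio up to `ℓ`-th powers have the same exponents. -/
theorem exponents_eq_of_pow_mul_prod_eq {F : Type*} [Field F] {ℓ s : ℕ} {a : Fin s → F}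
    (ha : Function.Injective a) {P Q : F[X]} (hP : P ≠ 0) (hQ : Q ≠ 0) {α β : F}
    (hα : α ≠ 0) (hβ : β ≠ 0)
    {e e' : Fin s → ℕ} (he : ∀ i, e i < ℓ) (he' : ∀ i, e' i < ℓ)
    (h : Q ^ ℓ * C α * ∏ i, (X + C (a i)) ^ e' i = P ^ ℓ * C β * ∏ i, (X + C (a i)) ^ e i) :
    e = e' := by
  classical
  funext j
  have hprod : ∀ f : Fin s → ℕ, rootMultiplicity (-a j) (∏ i, (X + C (a i)) ^ f i) = f j := by
    intro f
    rw [← count_roots, roots_prod]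
    · rw [Multiset.count_bind]
      simp only [roots_pow, Multiset.count_nsmul, roots_X_add_C, Multiset.count_singleton]
      rw [Finset.sum_map_val]
      simp [neg_inj, ha.eq_iff]
    · exact Finset.prod_ne_zero_iff.2 fun i _ => pow_ne_zero _ (X_add_C_ne_zero _)
  have hne : ∀ f : Fin s → ℕ, (∏ i, (X + C (a i)) ^ f i) ≠ 0 := fun f =>
    Finset.prod_ne_zero_iff.2 fun i _ => pow_ne_zero _ (X_add_C_ne_zero _)
  have key : ∀ (G : F[X]) (γ : F) (f : Fin s → ℕ), G ≠ 0 → γ ≠ 0 →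
      rootMultiplicity (-a j) (G ^ ℓ * C γ * ∏ i, (X + C (a i)) ^ f i)
        = ℓ * rootMultiplicity (-a j) G + f j := by
    intro G γ f hG hγ
    rw [rootMultiplicity_mul, rootMultiplicity_mul, hprod, rootMultiplicity_C, ← count_roots,
      roots_pow, Multiset.count_nsmul, count_roots]
    · simp
    · exact mul_ne_zero (pow_ne_zero _ hG) (C_ne_zero.2 hγ)
    · exact mul_ne_zero (mul_ne_zero (pow_ne_zero _ hG) (C_ne_zero.2 hγ)) (hne f)
  have h1 := congrArg (rootMultiplicity (-a j)) h
  rw [key _ _ _ hQ hα, key _ _ _ hP hβ] at h1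
  have h2 := congrArg (· % ℓ) h1
  simpa [Nat.mul_add_mod, Nat.mod_eq_of_lt (he j), Nat.mod_eq_of_lt (he' j)] using h2.symm

open Polynomial in
/-- The monomials in `ℓ`-th roots of `a i / (X + a i)` are linearly independent over `F[X]`. -/
theorem exists_radicals_linearIndependent {F : Type*} [Field F] {ℓ s : ℕ} [Fact ℓ.Prime]
    (hℓF : (ℓ : F) ≠ 0) {ζ : F} (hζ : IsPrimitiveRoot ζ ℓ) {a : Fin s → F}
    (ha : Function.Injective a) (ha0 : ∀ i, a i ≠ 0) :
    ∃ y : Fin s → SeparableClosure (RatFunc F),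
      (∀ i, algebraMap F[X] (SeparableClosure (RatFunc F)) (X + C (a i)) * y i ^ ℓ
        = algebraMap F[X] (SeparableClosure (RatFunc F)) (C (a i))) ∧
      ∀ c : (Fin s → ZMod ℓ) → F[X],
        ∑ e, algebraMap F[X] (SeparableClosure (RatFunc F)) (c e) * ∏ i, y i ^ (e i).val = 0 →
          c = 0 := by
  classical
  set Ω := SeparableClosure (RatFunc F)
  have hinj : Function.Injective (algebraMap F[X] Ω) := by
    rw [IsScalarTower.algebraMap_eq F[X] (RatFunc F) Ω]
    exact (algebraMap (RatFunc F) Ω).injective.comp (IsFractionRing.injective F[X] (RatFunc F))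
  have hℓ0 : ℓ ≠ 0 := (Fact.out : ℓ.Prime).ne_zero
  have hX0 : ∀ i, algebraMap F[X] Ω (X + C (a i)) ≠ 0 := fun i => by
    rw [Ne, map_eq_zero_iff _ hinj]; exact X_add_C_ne_zero _
  have hC0 : ∀ b : F, b ≠ 0 → algebraMap F[X] Ω (C b) ≠ 0 := fun b hb => by
    rw [Ne, map_eq_zero_iff _ hinj]; exact C_ne_zero.2 hb
  have : NeZero (ℓ : Ω) := ⟨by
    have := hC0 ℓ hℓF
    simpa using this⟩
  choose y hy using fun i => IsSepClosed.exists_pow_nat_eq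
    (algebraMap F[X] Ω (C (a i)) / algebraMap F[X] Ω (X + C (a i))) ℓ
  have hy' : ∀ i, algebraMap F[X] Ω (X + C (a i)) * y i ^ ℓ = algebraMap F[X] Ω (C (a i)) := by
    intro i
    rw [hy i, mul_div_cancel₀ _ (hX0 i)]
  have hy0 : ∀ i, y i ≠ 0 := by
    intro i h
    have := hy' i
    rw [h, zero_pow hℓ0, mul_zero] at this
    exact hC0 _ (ha0 i) this.symm
  refine ⟨y, hy', fun c hc => ?_⟩
  have hζΩ : IsPrimitiveRoot (algebraMap F[X] Ω (C ζ)) ℓ := by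
    have : Function.Injective ((algebraMap F[X] Ω).comp C) := hinj.comp C_injective
    exact hζ.map_of_injective (f := (algebraMap F[X] Ω).comp C) this
  have hσ : ∀ i (σ : Ω ≃ₐ[RatFunc F] Ω), ∃ z : RatFunc F, σ (y i) = algebraMap _ Ω z * y i := by
    intro i σ
    have h1 : (σ (y i) / y i) ^ ℓ = 1 := by
      have h2 := congrArg σ (hy' i)
      rw [map_mul, map_pow, IsScalarTower.algebraMap_apply F[X] (RatFunc F) Ω,
        IsScalarTower.algebraMap_apply F[X] (RatFunc F) Ω, AlgEquiv.commutes,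
        AlgEquiv.commutes, ← IsScalarTower.algebraMap_apply F[X] (RatFunc F) Ω,
        ← IsScalarTower.algebraMap_apply F[X] (RatFunc F) Ω, ← hy' i] at h2
      rw [div_pow, mul_left_cancel₀ (hX0 i) h2, div_self (pow_ne_zero _ (hy0 i))]
    obtain ⟨k, -, hk⟩ := hζΩ.eq_pow_of_pow_eq_one h1
    refine ⟨algebraMap F[X] (RatFunc F) (C ζ) ^ k, ?_⟩
    rw [map_pow, ← IsScalarTower.algebraMap_apply F[X] (RatFunc F) Ω, hk,
      div_mul_cancel₀ _ (hy0 i)]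
  have main := linearIndependent_of_galois_semiinvariant (K := RatFunc F) (Ω := Ω)
    (fun e : Fin s → ZMod ℓ => ∏ i, y i ^ (e i).val)
    (fun e => Finset.prod_ne_zero_iff.2 fun i _ => pow_ne_zero _ (hy0 i)) ?_ ?_
    Finset.univ (fun e => algebraMap F[X] (RatFunc F) (c e)) ?_
  · funext e
    have := main e (Finset.mem_univ _)
    exact (map_eq_zero_iff _ (IsFractionRing.injective F[X] (RatFunc F))).1 this
  · intro e σ
    choose z hz using fun i => hσ i σ
    refine ⟨∏ i, z i ^ (e i).val, ?_⟩
    simp only [map_prod, map_pow, hz, mul_pow, Finset.prod_mul_distrib]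
  · intro e e' hee k hk
    apply hee
    obtain ⟨P, Q, hQ, rfl⟩ := IsFractionRing.div_surjective (A := F[X]) k
    have hQ0 : Q ≠ 0 := nonZeroDivisors.ne_zero hQ
    have hQΩ : algebraMap F[X] Ω Q ≠ 0 := by rwa [Ne, map_eq_zero_iff _ hinj]
    rw [map_div₀, ← IsScalarTower.algebraMap_apply, ← IsScalarTower.algebraMap_apply] at hk
    have hP0 : P ≠ 0 := by
      rintro rfl
      simp only [map_zero, zero_div, zero_mul] at hk
      exact (Finset.prod_ne_zero_iff.2 fun i _ => pow_ne_zero _ (hy0 i)) hk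
    have h1 : algebraMap F[X] Ω Q * ∏ i, y i ^ (e i).val
        = algebraMap F[X] Ω P * ∏ i, y i ^ (e' i).val := by
      rw [hk, ← mul_assoc, mul_div_cancel₀ _ hQΩ]
    have h2 := congrArg (· ^ ℓ) h1
    simp only [mul_pow] at h2
    have hpow : ∀ f : Fin s → ZMod ℓ,
        (∏ i, y i ^ (f i).val) ^ ℓ * algebraMap F[X] Ω (∏ i, (X + C (a i)) ^ (f i).val)
          = algebraMap F[X] Ω (C (∏ i, a i ^ (f i).val)) := by
      intro f
      simp only [map_prod, map_pow]
      rw [← Finset.prod_pow, ← Finset.prod_mul_distrib]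
      refine Finset.prod_congr rfl fun i _ => ?_
      rw [← hy' i]; ring
    have h3 : Q ^ ℓ * C (∏ i, a i ^ (e i).val) * ∏ i, (X + C (a i)) ^ (e' i).val
        = P ^ ℓ * C (∏ i, a i ^ (e' i).val) * ∏ i, (X + C (a i)) ^ (e i).val := by
      apply hinj
      simp only [map_mul (algebraMap F[X] Ω), map_pow (algebraMap F[X] Ω)]
      rw [← hpow, ← hpow]
      linear_combination (algebraMap F[X] Ω (∏ i, (X + C (a i)) ^ (e i).val)) *
        (algebraMap F[X] Ω (∏ i, (X + C (a i)) ^ (e' i).val)) * h2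
    have h4 := exponents_eq_of_pow_mul_prod_eq ha hP0 hQ0
      (Finset.prod_ne_zero_iff.2 fun i _ => pow_ne_zero _ (ha0 i))
      (Finset.prod_ne_zero_iff.2 fun i _ => pow_ne_zero _ (ha0 i))
      (fun i => ZMod.val_lt (e i)) (fun i => ZMod.val_lt (e' i)) h3
    funext i
    exact ZMod.val_injective ℓ (congrFun h4 i)
  · simpa only [← IsScalarTower.algebraMap_apply F[X] (RatFunc F) Ω] using hc

/-- The factor in the multiplication rule for monomials in radicals `Y` with `t * Y ^ ℓ = a`. -/
def carryFactor {A : Type*} {ℓ : ℕ} (t a : A) (x y : ZMod ℓ) : A :=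
  if x.val + y.val < ℓ then t else a

theorem carryFactor_mul {A R : Type*} [CommRing A] [CommRing R] (φ : A →+* R) {ℓ : ℕ} [NeZero ℓ]
    {t a : A} {Y : R} (h : φ t * Y ^ ℓ = φ a) (x y : ZMod ℓ) :
    φ (carryFactor t a x y) * Y ^ (x + y).val = φ t * Y ^ x.val * Y ^ y.val := by
  unfold carryFactor
  split_ifs with hlt
  · rw [ZMod.val_add_of_lt hlt, pow_add]; ring
  · rw [mul_assoc, ← pow_add, ZMod.val_add_val_of_le (not_lt.1 hlt), ← h, pow_add]; ring

/-- Matrix of multiplication by `∑ c e * Y ^ e` on monomials in radicals. -/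
noncomputable def radicalMatrix {A : Type*} [CommRing A] {ℓ s : ℕ} (t a : Fin s → A)
    (c : (Fin s → ZMod ℓ) → A) : Matrix (Fin s → ZMod ℓ) (Fin s → ZMod ℓ) A :=
  Matrix.of fun e e' => c (e' - e) * ∏ i, carryFactor (t i) (a i) (e i) (e' i - e i)

theorem radicalMatrix_mulVec {A R : Type*} [CommRing A] [CommRing R] (φ : A →+* R) {ℓ s : ℕ}
    [NeZero ℓ] {t a : Fin s → A} {Y : Fin s → R} (h : ∀ i, φ (t i) * Y i ^ ℓ = φ (a i))
    (c : (Fin s → ZMod ℓ) → A) (e : Fin s → ZMod ℓ) :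
    ∑ e', φ (radicalMatrix t a c e e') * ∏ i, Y i ^ (e' i).val
      = (∏ i, φ (t i)) * (∏ i, Y i ^ (e i).val) * ∑ d, φ (c d) * ∏ i, Y i ^ (d i).val := by
  rw [← Equiv.sum_comp (Equiv.addLeft e), Finset.mul_sum]
  refine Finset.sum_congr rfl fun d _ => ?_
  simp only [radicalMatrix, Matrix.of_apply, Equiv.coe_addLeft, add_sub_cancel_left, Pi.add_apply,
    map_mul, map_prod]
  rw [mul_assoc, ← Finset.prod_mul_distrib, Finset.prod_congr rfl
    fun i _ => carryFactor_mul φ (h i) (e i) (d i), Finset.prod_mul_distrib,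
    Finset.prod_mul_distrib]
  ring

open Polynomial in
theorem natDegree_det_le_card_mul {A ι : Type*} [CommRing A] [Fintype ι] [DecidableEq ι]
    (M : Matrix ι ι A[X]) {B : ℕ} (h : ∀ i j, (M i j).natDegree ≤ B) :
    M.det.natDegree ≤ Fintype.card ι * B := by
  rw [Matrix.det_apply]
  refine natDegree_sum_le_of_forall_le _ _ fun σ _ => ?_
  refine (natDegree_smul_le _ _).trans ((natDegree_prod_le _ _).trans ?_)
  refine (Finset.sum_le_card_nsmul _ _ B fun i _ => h _ _).trans ?_
  simp

open Polynomial in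
theorem eq_zero_of_X_pow_dvd_sum {p : ℕ} [Fact p.Prime] {ℓ s B g : ℕ} [Fact ℓ.Prime]
    (hg : ℓ * g + 1 = p) {a : Fin s → ZMod p} (ha : Function.Injective a) (ha0 : ∀ i, a i ≠ 0)
    (c : (Fin s → ZMod ℓ) → (ZMod p)[X]) (hcB : ∀ e, (c e).natDegree ≤ B)
    (hB : ℓ ^ s * (B + s) < p)
    (hdvd : X ^ p ∣ ∑ e, c e * ∏ i, ((X + C (a i)) ^ g) ^ (e i).val) : c = 0 := by
  classical
  have hℓ : ℓ.Prime := Fact.out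
  have hpp : p.Prime := Fact.out
  have hℓp : ℓ < p := by
    have : g ≠ 0 := by
      rintro rfl
      simp at hg
      exact hpp.one_lt.ne hg
    nlinarith [Nat.pos_of_ne_zero this]
  have hℓF : (ℓ : ZMod p) ≠ 0 := by
    rw [Ne, ZMod.natCast_eq_zero_iff]
    exact fun h => absurd (Nat.le_of_dvd hℓ.pos h) (not_le.2 hℓp)
  obtain ⟨ζ, hζ⟩ : ∃ ζ : ZMod p, IsPrimitiveRoot ζ ℓ := by
    obtain ⟨γ, hγ⟩ := IsCyclic.exists_generator (α := (ZMod p)ˣ)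
    have ho : orderOf γ = p - 1 := by
      rw [orderOf_eq_card_of_forall_mem_zpowers hγ, Nat.card_eq_fintype_card,
        ZMod.card_units]
    have hγ' : IsPrimitiveRoot (γ : ZMod p) (p - 1) := by
      rw [IsPrimitiveRoot.coe_units_iff, ← ho]
      exact IsPrimitiveRoot.orderOf γ
    exact ⟨_, hγ'.pow (by have := hpp.two_le; omega) (by rw [mul_comm]; omega : p - 1 = g * ℓ)⟩
  obtain ⟨y, hy, hLI⟩ := exists_radicals_linearIndependent hℓF hζ ha ha0
  set M := radicalMatrix (fun i => X + C (a i)) (fun i => C (a i)) c with hM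
  have hdet : M.det = 0 := by
    let φ := Ideal.Quotient.mk (Ideal.span {(X : (ZMod p)[X]) ^ p})
    have hφ : ∀ f : (ZMod p)[X], φ f = 0 ↔ X ^ p ∣ f := fun f => by
      rw [Ideal.Quotient.eq_zero_iff_mem, Ideal.mem_span_singleton]
    have hY : ∀ i, φ (X + C (a i)) * (φ ((X + C (a i)) ^ g)) ^ ℓ = φ (C (a i)) := by
      intro i
      rw [← map_pow, ← map_mul, ← sub_eq_zero, ← map_sub, hφ]
      have : (X + C (a i)) * ((X + C (a i)) ^ g) ^ ℓ - C (a i) = X ^ p := by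
        rw [← pow_mul, ← pow_succ', mul_comm g, hg, add_pow_char, ← C_pow, ZMod.pow_card]; ring
      rw [this]
    have hmul : (M.map φ).mulVec (fun e => ∏ i, φ ((X + C (a i)) ^ g) ^ (e i).val) = 0 := by
      funext e
      have := radicalMatrix_mulVec φ hY c e
      rw [Matrix.mulVec, dotProduct]
      simp only [Matrix.map_apply, Pi.zero_apply]
      rw [this]
      have h0 : ∑ d, φ (c d) * ∏ i, φ ((X + C (a i)) ^ g) ^ (d i).val = 0 := by
        rw [← (hφ _).2 hdvd]
        simp
      rw [h0, mul_zero]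
    have h1 := congrArg (fun v => (M.map φ).adjugate.mulVec v 0) hmul
    simp only [Matrix.mulVec_mulVec, Matrix.adjugate_mul, Matrix.smul_mulVec, Matrix.one_mulVec,
      Matrix.mulVec_zero, Pi.zero_apply, Pi.smul_apply, ZMod.val_zero, pow_zero,
      Finset.prod_const_one, smul_eq_mul, mul_one] at h1
    rw [← RingHom.mapMatrix_apply, ← RingHom.map_det, hφ] at h1
    refine eq_zero_of_dvd_of_natDegree_lt h1 ?_
    rw [natDegree_X_pow]
    refine lt_of_le_of_lt (natDegree_det_le_card_mul M (B := B + s) fun e e' => ?_) ?_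
    · rw [hM, radicalMatrix, Matrix.of_apply]
      refine natDegree_mul_le.trans (add_le_add (hcB _) ?_)
      refine (natDegree_prod_le _ _).trans ((Finset.sum_le_card_nsmul _ _ 1 fun i _ => ?_).trans ?_)
      · unfold carryFactor
        split_ifs
        · exact (natDegree_X_add_C _).le
        · simp
      · simp
    · simpa [ZMod.card] using hB
  obtain ⟨v, hv0, hv⟩ := Matrix.exists_vecMul_eq_zero_iff.2 hdet
  set φ := algebraMap (ZMod p)[X] (SeparableClosure (RatFunc (ZMod p))) with hφ
  have hinj : Function.Injective φ := by
    rw [hφ, IsScalarTower.algebraMap_eq (ZMod p)[X] (RatFunc (ZMod p))]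
    exact (algebraMap (RatFunc (ZMod p)) _).injective.comp
      (IsFractionRing.injective (ZMod p)[X] (RatFunc (ZMod p)))
  have h1 : ∑ e, φ (v e) * ∑ e', φ (M e e') * ∏ i, y i ^ (e' i).val = 0 := by
    simp only [Finset.mul_sum]
    rw [Finset.sum_comm]
    refine Finset.sum_eq_zero fun e' _ => ?_
    have := congrArg φ (congrFun hv e')
    simp only [Matrix.vecMul, dotProduct, map_sum, map_mul, Pi.zero_apply, map_zero] at this
    simp only [← mul_assoc]
    rw [← Finset.sum_mul, this, zero_mul]
  have h2 : (∏ i, φ (X + C (a i))) * (∑ d, φ (c d) * ∏ i, y i ^ (d i).val) *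
      ∑ e, φ (v e) * ∏ i, y i ^ (e i).val = 0 := by
    rw [← h1, Finset.mul_sum]
    refine Finset.sum_congr rfl fun e _ => ?_
    rw [hM, radicalMatrix_mulVec φ hy c e]
    ring
  rcases mul_eq_zero.1 h2 with h3 | h3
  · rcases mul_eq_zero.1 h3 with h4 | h4
    · exfalso
      obtain ⟨i, -, hi⟩ := Finset.prod_eq_zero_iff.1 h4
      exact X_add_C_ne_zero _ ((map_eq_zero_iff _ hinj).1 hi)
    · exact hLI c h4
  · exact absurd (hLI v h3) hv0

open Polynomial in
theorem eq_zero_of_sum_X_pow_mul_eq_zero {p : ℕ} [Fact p.Prime] {ℓ s B g : ℕ} [Fact ℓ.Prime]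
    (hg : ℓ * g + 1 = p) {a : Fin s → ZMod p} (ha : Function.Injective a) (ha0 : ∀ i, a i ≠ 0)
    (hB : ℓ ^ s * (B + s) < p) (J : ℕ)
    (c : ℕ → (Fin s → ZMod ℓ) → (ZMod p)[X]) (hcB : ∀ j e, (c j e).natDegree ≤ B)
    (hsum : ∑ j ∈ Finset.range J, X ^ (p * j) *
      ∑ e, c j e * ∏ i, ((X + C (a i)) ^ g) ^ (e i).val = 0) :
    ∀ j < J, c j = 0 := by
  induction J generalizing c with
  | zero => simp
  | succ J ih =>
    rw [Finset.sum_range_succ'] at hsum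
    have h1 : ∀ j, X ^ (p * (j + 1)) * ∑ e, c (j + 1) e * ∏ i, ((X + C (a i)) ^ g) ^ (e i).val
        = X ^ p * (X ^ (p * j) *
          ∑ e, c (j + 1) e * ∏ i, ((X + C (a i)) ^ g) ^ (e i).val) := by
      intro j; ring
    simp only [h1, ← Finset.mul_sum, mul_zero, pow_zero, one_mul] at hsum
    have h0 : c 0 = 0 := by
      refine eq_zero_of_X_pow_dvd_sum hg ha ha0 (c 0) (hcB 0) hB ?_
      rw [eq_neg_of_add_eq_zero_right hsum]
      exact (Dvd.intro _ rfl).neg_right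
    simp only [h0, Pi.zero_apply, zero_mul, Finset.sum_const_zero, add_zero] at hsum
    have h2 := (mul_eq_zero.1 hsum).resolve_left (pow_ne_zero _ X_ne_zero)
    intro j hj
    rcases j with _ | j
    · exact h0
    · exact ih (fun j => c (j + 1)) (fun j e => hcB _ e) h2 j (by omega)

open Polynomial in
/-- The numerator of the logarithmic derivative of `∏ i, (X + a i) ^ f i`. -/
noncomputable def logDerivNumerator {F : Type*} [Field F] {s : ℕ} (a : Fin s → F)
    (f : Fin s → ℕ) : F[X] :=
  ∑ i, C (f i : F) * ∏ j ∈ Finset.univ.erase i, (X + C (a j))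

open Polynomial in
theorem derivative_prod_X_add_C_pow {F : Type*} [Field F] {s : ℕ} (a : Fin s → F)
    (f : Fin s → ℕ) :
    (∏ i, (X + C (a i))) * derivative (∏ i, (X + C (a i)) ^ f i)
      = logDerivNumerator a f * ∏ i, (X + C (a i)) ^ f i := by
  classical
  rw [derivative_prod_finset, logDerivNumerator, Finset.mul_sum, Finset.sum_mul]
  refine Finset.sum_congr rfl fun i _ => ?_
  rw [← Finset.mul_prod_erase _ (fun i => X + C (a i)) (Finset.mem_univ i),
    ← Finset.mul_prod_erase _ (fun i => (X + C (a i)) ^ f i) (Finset.mem_univ i)]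
  rw [derivative_X_add_C_pow]
  rcases Nat.eq_zero_or_pos (f i) with h | h
  · simp [h]
  · obtain ⟨k, hk⟩ := Nat.exists_eq_succ_of_ne_zero h.ne'
    rw [hk]
    simp only [Nat.succ_eq_add_one, Nat.add_sub_cancel, pow_succ]
    ring

open Polynomial in
/-- `twistedDeriv a f k c` is the polynomial `T` with
`W ^ k * D ^ k (c * Y) = T * Y`, where `W = ∏ (X + a i)` and `Y = ∏ (X + a i) ^ f i`. -/
noncomputable def twistedDeriv {F : Type*} [Field F] {s : ℕ} (a : Fin s → F) (f : Fin s → ℕ) :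
    ℕ → F[X] →ₗ[F] F[X]
  | 0 => LinearMap.id
  | k + 1 => LinearMap.mulLeft F (∏ i, (X + C (a i))) ∘ₗ derivative ∘ₗ twistedDeriv a f k
      + LinearMap.mulLeft F (logDerivNumerator a f - C (k : F) * derivative (∏ i, (X + C (a i))))
        ∘ₗ twistedDeriv a f k

open Polynomial in
theorem twistedDeriv_spec {F : Type*} [Field F] {s : ℕ} (a : Fin s → F) (f : Fin s → ℕ)
    (E : F[X]) (hE : derivative E = 0) (c : F[X]) (k : ℕ) :
    (∏ i, (X + C (a i))) ^ k * derivative^[k] (E * (c * ∏ i, (X + C (a i)) ^ f i))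
      = E * (twistedDeriv a f k c * ∏ i, (X + C (a i)) ^ f i) := by
  induction k with
  | zero => simp [twistedDeriv]
  | succ k ih =>
    have h1 := congrArg (fun q => (∏ i, (X + C (a i))) * derivative q) ih
    have hd := derivative_prod_X_add_C_pow a f
    set W : F[X] := ∏ i, (X + C (a i)) with hW
    set Y : F[X] := ∏ i, (X + C (a i)) ^ f i
    set D := derivative^[k] (E * (c * Y))
    simp only [derivative_mul, hE, derivative_pow] at h1
    rw [Function.iterate_succ_apply']
    simp only [twistedDeriv, LinearMap.add_apply, LinearMap.comp_apply, LinearMap.mulLeft_apply,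
      ← hW]
    have h2 : W * (C (k : F) * W ^ (k - 1) * derivative W * D)
        = C (k : F) * derivative W * (W ^ k * D) := by
      rcases Nat.eq_zero_or_pos k with h | h
      · subst h; simp
      · obtain ⟨k', rfl⟩ := Nat.exists_eq_succ_of_ne_zero h.ne'
        simp only [Nat.succ_eq_add_one, Nat.add_sub_cancel, pow_succ]
        ring
    rw [ih] at h2
    linear_combination h1 - h2 + E * (twistedDeriv a f k c) * hd

open Polynomial in
theorem natDegree_twistedDeriv_le {F : Type*} [Field F] {s : ℕ} (hs : 1 ≤ s) (a : Fin s → F)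
    (f : Fin s → ℕ) (c : F[X]) (k : ℕ) :
    (twistedDeriv a f k c).natDegree ≤ c.natDegree + k * (s - 1) := by
  have hW : (∏ i, (X + C (a i))).natDegree ≤ s := by
    refine (natDegree_prod_le _ _).trans ?_
    simp
  have hW' : (derivative (∏ i, (X + C (a i)))).natDegree ≤ s - 1 :=
    (natDegree_derivative_le _).trans (Nat.sub_le_sub_right hW 1)
  have hV : (logDerivNumerator a f).natDegree ≤ s - 1 := by
    refine natDegree_sum_le_of_forall_le _ _ fun i _ => ?_
    refine (natDegree_C_mul_le _ _).trans ((natDegree_prod_le _ _).trans ?_)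
    simp
  induction k with
  | zero => simp [twistedDeriv]
  | succ k ih =>
    simp only [twistedDeriv, LinearMap.add_apply, LinearMap.comp_apply, LinearMap.mulLeft_apply]
    set T := twistedDeriv a f k c
    rw [add_one_mul]
    refine (natDegree_add_le _ _).trans (max_le ?_ ?_)
    · by_cases h : T.natDegree = 0
      · rw [natDegree_eq_zero] at h
        obtain ⟨x, hx⟩ := h
        rw [← hx]; simp
      · have := natDegree_derivative_lt h
        refine natDegree_mul_le.trans ?_
        omega
    · refine natDegree_mul_le.trans ?_
      have : (logDerivNumerator a f - C (k : F) * derivative (∏ i, (X + C (a i)))).natDegree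
          ≤ s - 1 :=
        (natDegree_sub_le _ _).trans (max_le hV ((natDegree_C_mul_le _ _).trans hW'))
      omega

open Polynomial in
/-- Siegel-type lemma: coefficients making the auxiliary polynomial vanish to high order. -/
theorem exists_auxiliary_coeffs {p : ℕ} [Fact p.Prime] {ℓ s g : ℕ} [Fact ℓ.Prime]
    (hs : 1 ≤ s) (a θ : Fin s → ZMod p) {A J M : ℕ} (hA : 1 ≤ A) (hJ : 1 ≤ J)
    (hdim : ∑ k ∈ Finset.range M, (A + J - 1 + k * (s - 1)) < A * ℓ ^ s * J) :
    ∃ c : ℕ → (Fin s → ZMod ℓ) → (ZMod p)[X], (∀ j e, (c j e).natDegree ≤ A - 1) ∧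
      (∃ j < J, c j ≠ 0) ∧
      ∀ k < M, ∑ j ∈ Finset.range J, ∑ e, X ^ j * (C (∏ i, θ i ^ (e i).val) *
        twistedDeriv a (fun i => g * (e i).val) k (c j e)) = 0 := by
  classical
  let V := Fin J → (Fin s → ZMod ℓ) → degreeLT (ZMod p) A
  let Φ : V →ₗ[ZMod p] (Fin M → (ZMod p)[X]) := LinearMap.pi fun k => ∑ j : Fin J, ∑ e,
    LinearMap.mulLeft (ZMod p) (X ^ (j : ℕ) * C (∏ i, θ i ^ (e i).val)) ∘ₗ
      twistedDeriv a (fun i => g * (e i).val) k ∘ₗ (degreeLT (ZMod p) A).subtype ∘ₗ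
        LinearMap.proj e ∘ₗ LinearMap.proj j
  have hΦ_apply : ∀ (v : V) (k : Fin M), Φ v k = ∑ j : Fin J, ∑ e,
      X ^ (j : ℕ) * C (∏ i, θ i ^ (e i).val) *
        twistedDeriv a (fun i => g * (e i).val) k (v j e : (ZMod p)[X]) := by
    intro v k
    simp only [Φ, LinearMap.pi_apply, LinearMap.coe_sum, Finset.sum_apply, LinearMap.comp_apply,
      LinearMap.mulLeft_apply, Submodule.subtype_apply]
    rfl
  have hdeg : ∀ q : degreeLT (ZMod p) A, (q : (ZMod p)[X]).natDegree ≤ A - 1 := by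
    intro q
    have := mem_degreeLT.1 q.2
    by_cases h0 : (q : (ZMod p)[X]) = 0
    · simp [h0]
    · rw [← natDegree_lt_iff_degree_lt h0] at this; omega
  have hΦ : ∀ v (k : Fin M), Φ v k ∈ degreeLT (ZMod p) (A + J - 1 + (k : ℕ) * (s - 1)) := by
    intro v k
    rw [hΦ_apply]
    refine Submodule.sum_mem _ fun j _ => Submodule.sum_mem _ fun e _ => ?_
    rw [mem_degreeLT]
    refine lt_of_le_of_lt degree_le_natDegree ?_
    rw [Nat.cast_lt]
    refine lt_of_le_of_lt natDegree_mul_le ?_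
    have h1 := natDegree_twistedDeriv_le hs a (fun i => g * (e i).val) (v j e : (ZMod p)[X]) k
    have h2 := hdeg (v j e)
    have h3 : (X ^ (j : ℕ) * C (∏ i, θ i ^ (e i).val)).natDegree ≤ (j : ℕ) :=
      (natDegree_mul_C_le _ _).trans (natDegree_X_pow_le _)
    have := j.2
    omega
  let Ψ : V →ₗ[ZMod p] ((k : Fin M) → degreeLT (ZMod p) (A + J - 1 + (k : ℕ) * (s - 1))) :=
    LinearMap.pi fun k => LinearMap.codRestrict _ (LinearMap.proj k ∘ₗ Φ) fun v => hΦ v k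
  have hfin : ∀ n, Module.finrank (ZMod p) (degreeLT (ZMod p) n) = n := fun n => by
    rw [(degreeLTEquiv (ZMod p) n).finrank_eq]; simp
  have hf : ∀ n, Module.Finite (ZMod p) (degreeLT (ZMod p) n) := fun n =>
    Module.Finite.equiv (degreeLTEquiv (ZMod p) n).symm
  have hlt : Module.finrank (ZMod p)
      ((k : Fin M) → degreeLT (ZMod p) (A + J - 1 + (k : ℕ) * (s - 1)))
        < Module.finrank (ZMod p) V := by
    rw [Module.finrank_pi_fintype, Module.finrank_pi_fintype]
    simp only [Module.finrank_pi_fintype, hfin]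
    rw [Fin.sum_univ_eq_sum_range (fun k => A + J - 1 + k * (s - 1))]
    refine hdim.trans_eq ?_
    simp [ZMod.card]; ring
  obtain ⟨v, hv, hv0⟩ := Submodule.exists_mem_ne_zero_of_ne_bot
    (LinearMap.ker_ne_bot_of_finrank_lt (f := Ψ) hlt)
  rw [LinearMap.mem_ker] at hv
  refine ⟨fun j e => if h : j < J then (v ⟨j, h⟩ e : (ZMod p)[X]) else 0, ?_, ?_, ?_⟩
  · intro j e
    by_cases h : j < J
    · simpa only [h, dif_pos] using hdeg _
    · simp [h]
  · by_contra! hcon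
    apply hv0
    funext j e
    have h1 := congrFun (hcon j j.2) e
    simp only [j.2, dif_pos, Fin.eta, Pi.zero_apply] at h1
    exact Subtype.ext h1
  · intro k hk
    have h1 : Φ v ⟨k, hk⟩ = 0 := congrArg (fun w => ((w ⟨k, hk⟩ : degreeLT (ZMod p) _) : (ZMod p)[X])) hv
    rw [← h1, hΦ_apply, Finset.sum_range]
    refine Finset.sum_congr rfl fun j _ => Finset.sum_congr rfl fun e _ => ?_
    simp [mul_assoc]

open Polynomial in
theorem card_mul_le_of_stepanov {p : ℕ} [Fact p.Prime] {ℓ s g : ℕ} [Fact ℓ.Prime]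
    (hg : ℓ * g + 1 = p) (hs : 1 ≤ s) {a θ : Fin s → ZMod p} (ha : Function.Injective a)
    (ha0 : ∀ i, a i ≠ 0) (hθ : ∀ i, θ i ≠ 0) {A J M : ℕ} (hA : 1 ≤ A) (hJ : 1 ≤ J) (hM : 1 ≤ M)
    (hMp : M ≤ p)
    (hdim : ∑ k ∈ Finset.range M, (A + J - 1 + k * (s - 1)) < A * ℓ ^ s * J)
    (hind : ℓ ^ s * (A - 1 + s) < p)
    (S : Finset (ZMod p)) (hS : ∀ y ∈ S, ∀ i, (y + a i) ^ g = θ i) :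
    S.card * M ≤ (A - 1) + p * (J - 1) + s * (g * (ℓ - 1)) := by
  classical
  have hpp : p.Prime := Fact.out
  have hg0 : g ≠ 0 := by
    rintro rfl
    simp at hg
    exact hpp.one_lt.ne hg
  obtain ⟨c, hcdeg, ⟨j₀, hj₀, hc₀⟩, hc⟩ := exists_auxiliary_coeffs (ℓ := ℓ) (g := g) hs a θ hA hJ hdim
  set P : (ZMod p)[X] := ∑ j ∈ Finset.range J, X ^ (p * j) *
      ∑ e, c j e * ∏ i, ((X + C (a i)) ^ g) ^ (e i).val with hP
  have hP0 : P ≠ 0 := fun h =>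
    hc₀ (eq_zero_of_sum_X_pow_mul_eq_zero hg ha ha0 hind J c hcdeg h j₀ hj₀)
  have hPdeg : P.natDegree ≤ (A - 1) + p * (J - 1) + s * (g * (ℓ - 1)) := by
    refine natDegree_sum_le_of_forall_le _ _ fun j hj => ?_
    have hj' : j ≤ J - 1 := by have := Finset.mem_range.1 hj; omega
    refine natDegree_mul_le.trans ?_
    have h1 : (X ^ (p * j) : (ZMod p)[X]).natDegree ≤ p * (J - 1) :=
      (natDegree_X_pow_le _).trans (Nat.mul_le_mul_left _ hj')
    have h2 : (∑ e, c j e * ∏ i, ((X + C (a i)) ^ g) ^ (e i).val).natDegree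
        ≤ (A - 1) + s * (g * (ℓ - 1)) := by
      refine natDegree_sum_le_of_forall_le _ _ fun e _ => ?_
      refine natDegree_mul_le.trans (add_le_add (hcdeg j e) ?_)
      refine (natDegree_prod_le _ _).trans
        ((Finset.sum_le_card_nsmul _ _ (g * (ℓ - 1)) fun i _ => ?_).trans (by simp))
      rw [← pow_mul]
      refine natDegree_pow_le.trans ?_
      rw [natDegree_X_add_C, mul_one]
      exact Nat.mul_le_mul_left _ (by have := ZMod.val_lt (e i); omega)
    omega
  have hPsum : P = ∑ j ∈ Finset.range J, ∑ e, X ^ (p * j) *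
      (c j e * ∏ i, (X + C (a i)) ^ (g * (e i).val)) := by
    rw [hP]
    refine Finset.sum_congr rfl fun j _ => ?_
    rw [Finset.mul_sum]
    simp only [pow_mul]
  have hroot : ∀ y ∈ S, M ≤ rootMultiplicity y P := by
    intro y hy
    suffices h : M - 1 < rootMultiplicity y P by omega
    rw [lt_rootMultiplicity_iff_isRoot_iterate_derivative_of_mem_nonZeroDivisors hP0]
    · intro k hk
      have hW : (∏ i, (X + C (a i))).eval y ≠ 0 := by
        rw [eval_prod]
        refine Finset.prod_ne_zero_iff.2 fun i _ h => hθ i ?_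
        rw [← hS y hy i]
        simp only [eval_add, eval_X, eval_C] at h
        rw [h, zero_pow hg0]
      have h1 : (∏ i, (X + C (a i))) ^ k * derivative^[k] P
          = ∑ j ∈ Finset.range J, ∑ e, X ^ (p * j) *
            (twistedDeriv a (fun i => g * (e i).val) k (c j e) *
              ∏ i, (X + C (a i)) ^ (g * (e i).val)) := by
        rw [hPsum]
        simp only [iterate_derivative_sum, Finset.mul_sum]
        refine Finset.sum_congr rfl fun j _ => Finset.sum_congr rfl fun e _ => ?_
        exact twistedDeriv_spec a (fun i => g * (e i).val) _ (by simp [derivative_X_pow]) _ _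
      have h2 := congrArg (eval y) h1
      have h3 := congrArg (eval y) (hc k (by omega))
      rw [eval_mul, eval_pow] at h2
      have h4 : eval y (∑ j ∈ Finset.range J, ∑ e, X ^ (p * j) *
            (twistedDeriv a (fun i => g * (e i).val) k (c j e) *
              ∏ i, (X + C (a i)) ^ (g * (e i).val))) = 0 := by
        rw [eval_zero] at h3
        rw [← h3]
        simp only [eval_finsetSum]
        refine Finset.sum_congr rfl fun j _ => Finset.sum_congr rfl fun e _ => ?_
        simp only [eval_mul, eval_pow, eval_X, eval_prod, eval_add, eval_C, pow_mul, hS y hy,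
          ZMod.pow_card]
        ring
      rw [h4] at h2
      exact (mul_eq_zero.1 h2).resolve_left (pow_ne_zero _ hW)
    · rw [mem_nonZeroDivisors_iff_ne_zero, Ne, ZMod.natCast_eq_zero_iff, hpp.dvd_factorial]
      omega
  refine le_trans ?_ hPdeg
  refine le_trans ?_ (card_roots' P)
  have hle : M • S.val ≤ P.roots := by
    rw [Multiset.le_iff_count]
    intro y
    rw [Multiset.count_nsmul, count_roots]
    by_cases hy : y ∈ S
    · rw [Multiset.count_eq_one_of_mem S.nodup hy]; simpa using hroot y hy
    · rw [Multiset.count_eq_zero_of_notMem (by simpa using hy)]; simp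
  have := Multiset.card_le_card hle
  rw [Multiset.card_nsmul] at this
  rw [mul_comm]
  simpa using this

theorem log_ge_of_two_million_le {p : ℝ} (hp : 2 * 10 ^ 6 ≤ p) : 14.5 ≤ Real.log p := by
  have h1 : Real.exp 29 ≤ 4 * 10 ^ 12 := by
    have h := Real.exp_one_lt_d9
    have : Real.exp 29 = Real.exp 1 ^ 29 := by rw [← Real.exp_nat_mul]; norm_num
    rw [this]
    calc Real.exp 1 ^ 29 ≤ 2.7182818286 ^ 29 := by gcongr
      _ ≤ 4 * 10 ^ 12 := by norm_num
  have h2 : (29 : ℝ) ≤ Real.log (4 * 10 ^ 12) := by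
    rw [Real.le_log_iff_exp_le (by norm_num)]; exact h1
  have h3 : Real.log (4 * 10 ^ 12 : ℝ) = 2 * Real.log (2 * 10 ^ 6) := by
    rw [← Real.log_rpow (by norm_num)]; norm_num
  have h4 : Real.log (2 * 10 ^ 6) ≤ Real.log p := Real.log_le_log (by norm_num) hp
  linarith

set_option maxHeartbeats 800000 in
/-- The number of simultaneous solutions of `(y + a i) ^ g = θ i` when `ℓ ^ s` is about `√p`. -/
theorem card_le_of_pow_window {p : ℕ} [Fact p.Prime] {ℓ s g : ℕ} [Fact ℓ.Prime]
    (hg : ℓ * g + 1 = p) (hs : 2 ≤ s) (hlow : (ℓ : ℝ) ^ (s - 1) < √p) (hup : √p ≤ (ℓ : ℝ) ^ s)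
    (hR : (s : ℝ) + 1 + s * (s + 2) * ℓ ≤ √p)
    {a θ : Fin s → ZMod p} (ha : Function.Injective a)
    (ha0 : ∀ i, a i ≠ 0) (hθ : ∀ i, θ i ≠ 0)
    (S : Finset (ZMod p)) (hS : ∀ y ∈ S, ∀ i, (y + a i) ^ g = θ i) :
    (S.card : ℝ) ≤ √p * ((s + 1) / 2 + s * (1 - 1 / ℓ)) + 1 := by
  have hℓ : ℓ.Prime := Fact.out
  have hpp : p.Prime := Fact.out
  have hℓ2 : (2 : ℝ) ≤ ℓ := by exact_mod_cast hℓ.two_le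
  have hs2 : (2 : ℝ) ≤ s := by exact_mod_cast hs
  set R : ℝ := √p with hRdef
  have hR2 : R ^ 2 = p := Real.sq_sqrt (by positivity)
  have hR0 : 0 < R := by rw [hRdef]; exact Real.sqrt_pos.2 (by exact_mod_cast hpp.pos)
  set D := ℓ ^ s with hD
  have hDpos : 0 < D := pow_pos hℓ.pos s
  have hDR : (D : ℝ) = ℓ ^ s := by rw [hD]; push_cast; rfl
  have hD1 : R ≤ D := hDR ▸ hup
  have hD2 : (D : ℝ) < ℓ * R := by
    have : (ℓ : ℝ) ^ s = ℓ * ℓ ^ (s - 1) := by rw [← pow_succ']; congr 1; omega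
    rw [hDR, this]
    exact mul_lt_mul_of_pos_left hlow (by linarith)
  have hDp : (0 : ℝ) < D := by exact_mod_cast hDpos
  set t := p / D with ht
  have ht1 : D * t ≤ p := Nat.mul_div_le p D
  have ht2 : p < D * (t + 1) := Nat.lt_mul_div_succ p hDpos
  have ht1' : (D : ℝ) * t ≤ R ^ 2 := by rw [hR2]; exact_mod_cast ht1
  have ht2' : R ^ 2 < (D : ℝ) * (t + 1) := by rw [hR2]; exact_mod_cast ht2
  have htR : (t : ℝ) ≤ R := by
    have : R * t ≤ R * R := by nlinarith [(Nat.cast_nonneg t : (0 : ℝ) ≤ t)]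
    exact le_of_mul_le_mul_left this hR0
  have htl : R < ℓ * (t + 1) := by
    have : R * R < R * (ℓ * (t + 1)) := by nlinarith [(Nat.cast_nonneg t : (0 : ℝ) ≤ t)]
    exact lt_of_mul_lt_mul_left this hR0.le
  have hts : s ≤ t := by
    have : ((s : ℝ) * (s + 2)) * ℓ < (t + 1) * ℓ := by nlinarith
    have h2 : (s : ℝ) * (s + 2) < t + 1 := lt_of_mul_lt_mul_right this (by linarith)
    have : (s : ℝ) ≤ t := by nlinarith
    exact_mod_cast this
  set M := Nat.sqrt p + 1 with hM
  have hM1 : R < M := by rw [hM]; push_cast; exact Real.real_sqrt_lt_nat_sqrt_succ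
  have hM2 : (M : ℝ) ≤ R + 1 := by
    rw [hM]; push_cast; have := Real.nat_sqrt_le_real_sqrt (a := p); linarith
  set J := (s + 1) / 2 + 1 with hJ
  have hJ1 : (s : ℝ) / 2 + 1 ≤ J := by
    have : s ≤ 2 * ((s + 1) / 2) := by omega
    have : (s : ℝ) ≤ 2 * (((s + 1) / 2 : ℕ) : ℝ) := by exact_mod_cast this
    rw [hJ]; push_cast; linarith
  have hJ2 : (J : ℝ) - 1 ≤ (s + 1) / 2 := by
    have : 2 * ((s + 1) / 2) ≤ s + 1 := by omega
    have : 2 * (((s + 1) / 2 : ℕ) : ℝ) ≤ (s : ℝ) + 1 := by exact_mod_cast this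
    rw [hJ]; push_cast; linarith
  set A := t - s + 1 with hA
  have hAr : (A : ℝ) = t - s + 1 := by rw [hA]; push_cast [Nat.cast_sub hts]; ring
  have hdim : ∑ k ∈ Finset.range M, (A + J - 1 + k * (s - 1)) < A * ℓ ^ s * J := by
    have hsum : ((∑ k ∈ Finset.range M, (A + J - 1 + k * (s - 1)) : ℕ) : ℝ)
        = M * (A + J - 1) + (s - 1) * (M * (M - 1) / 2) := by
      have hg : (∑ k ∈ Finset.range M, (k : ℝ)) = M * (M - 1) / 2 := by
        have := Finset.sum_range_id_mul_two M
        have h2 : ((∑ k ∈ Finset.range M, k : ℕ) : ℝ) * 2 = M * ((M - 1 : ℕ) : ℝ) := by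
          exact_mod_cast this
        rw [Nat.cast_sub (by omega)] at h2
        push_cast at h2
        linarith
      have h1 : ∀ k, ((A + J - 1 + k * (s - 1) : ℕ) : ℝ) = (A + J - 1) + k * (s - 1) := by
        intro k
        rw [Nat.cast_add, Nat.cast_sub (by omega), Nat.cast_mul, Nat.cast_sub (by omega)]
        push_cast; ring
      rw [Nat.cast_sum, Finset.sum_congr rfl fun k _ => h1 k, Finset.sum_add_distrib,
        ← Finset.sum_mul, hg]
      simp; ring
    have hgoal : ((∑ k ∈ Finset.range M, (A + J - 1 + k * (s - 1)) : ℕ) : ℝ)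
        < ((A * ℓ ^ s * J : ℕ) : ℝ) := by
      rw [hsum]
      push_cast
      rw [← hDR]
      have hA0 : (0 : ℝ) ≤ A := Nat.cast_nonneg A
      have hAD : R ^ 2 - s * (ℓ * R) ≤ A * D := by rw [hAr]; nlinarith
      have hAR : A * R ≤ A * D := mul_le_mul_of_nonneg_left hD1 hA0
      have hAle : (A : ℝ) ≤ R - 1 := by rw [hAr]; linarith
      have h1 : (A * D : ℝ) * (s / 2 + 1) ≤ A * D * J :=
        mul_le_mul_of_nonneg_left hJ1 (by positivity)
      have h2 : (M : ℝ) * (A + J - 1) ≤ (R + 1) * (A + (s + 1) / 2) := by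
        apply mul_le_mul hM2 (by linarith) (by linarith) (by linarith)
      have h3 : ((s : ℝ) - 1) * (M * (M - 1) / 2) ≤ (s - 1) * ((R + 1) * R / 2) := by
        apply mul_le_mul_of_nonneg_left _ (by linarith)
        have : (M : ℝ) * (M - 1) ≤ (R + 1) * R :=
          mul_le_mul hM2 (by linarith) (by linarith) (by linarith)
        linarith
      have h4 : (s / 2 : ℝ) * (R ^ 2 - s * (ℓ * R)) ≤ s / 2 * (A * D) :=
        mul_le_mul_of_nonneg_left hAD (by linarith)
      have h5 : ((s : ℝ) + 1 + s * (s + 2) * ℓ) * R ≤ R * R :=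
        mul_le_mul_of_nonneg_right hR hR0.le
      have h6 : (2 : ℝ) * (s * R) ≤ ℓ * (s * R) :=
        mul_le_mul_of_nonneg_right hℓ2 (by positivity)
      have h7 : 2 * R ≤ s * R := mul_le_mul_of_nonneg_right hs2 hR0.le
      have h8 : (s : ℝ) ≤ R := by
        have : (0 : ℝ) ≤ s * (s + 2) * ℓ := by positivity
        linarith
      linarith
    exact_mod_cast hgoal
  have hind : ℓ ^ s * (A - 1 + s) < p := by
    have : A - 1 + s = t := by omega
    rw [this]
    refine lt_of_le_of_ne ht1 fun h => ?_
    have h1 : ℓ ∣ p := by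
      rw [← h]
      exact Dvd.dvd.mul_right (dvd_pow_self ℓ (by omega)) t
    rw [← hg] at h1
    have := (Nat.dvd_add_right (Dvd.intro g rfl)).1 h1
    exact hℓ.one_lt.ne' (Nat.dvd_one.1 this)
  have hMp : M ≤ p := by
    have := Nat.sqrt_lt_self hpp.one_lt
    omega
  have hmain := card_mul_le_of_stepanov hg (by omega) ha ha0 hθ (A := A) (J := J) (M := M)
    (by omega) (by omega) (by omega) hMp hdim hind S hS
  have hmainR : (S.card : ℝ) * M ≤ (A - 1) + p * (J - 1) + s * (g * (ℓ - 1)) := by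
    have h1 : ((A - 1 : ℕ) : ℝ) = A - 1 := by rw [Nat.cast_sub (by omega)]; simp
    have h2 : ((J - 1 : ℕ) : ℝ) = J - 1 := by rw [Nat.cast_sub (by omega)]; simp
    have h3 : ((ℓ - 1 : ℕ) : ℝ) = ℓ - 1 := by rw [Nat.cast_sub hℓ.one_le]; simp
    rw [← h1, ← h2, ← h3]
    exact_mod_cast hmain
  have hgR : (g : ℝ) * (ℓ - 1) ≤ R ^ 2 * (1 - 1 / ℓ) := by
    have : (ℓ : ℝ) * g + 1 = R ^ 2 := by rw [hR2]; exact_mod_cast hg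
    have h1 : (g : ℝ) = (R ^ 2 - 1) / ℓ := by
      rw [eq_div_iff (by linarith)]; linarith
    rw [h1]
    have h2 : (R ^ 2 - 1) / ℓ * (ℓ - 1) = (R ^ 2 - 1) * (1 - 1 / ℓ) := by
      field_simp
    rw [h2]
    apply mul_le_mul_of_nonneg_right (by linarith)
    have : 1 / (ℓ : ℝ) ≤ 1 := by rw [div_le_one (by linarith)]; linarith
    linarith
  have hfin : R * S.card ≤ R * (R * ((s + 1) / 2 + s * (1 - 1 / ℓ)) + 1) := by
    have h1 : R * S.card ≤ S.card * M := by
      rw [mul_comm]; exact mul_le_mul_of_nonneg_left hM1.le (Nat.cast_nonneg _)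
    have h2 : (p : ℝ) * (J - 1) ≤ R ^ 2 * ((s + 1) / 2) := by
      rw [hR2]; exact mul_le_mul_of_nonneg_left hJ2 (Nat.cast_nonneg _)
    have h3 : (s : ℝ) * (g * (ℓ - 1)) ≤ s * (R ^ 2 * (1 - 1 / ℓ)) :=
      mul_le_mul_of_nonneg_left hgR (by linarith)
    have h4 : (A : ℝ) ≤ R := by rw [hAr]; linarith
    nlinarith
  exact le_of_mul_le_mul_left hfin hR0

theorem quadratic_mul_le_pow {ℓ s : ℕ} (hℓ : 2 ≤ ℓ) (hs : 3 ≤ s) (h : 17 ≤ ℓ ∨ 9 ≤ s) :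
    s + 1 + s * (s + 2) * ℓ ≤ ℓ ^ (s - 1) := by
  have key : s * (s + 2) * ℓ + s + 1 ≤ ℓ * ℓ ^ (s - 2) := by
    rcases Nat.lt_or_ge s 9 with hs9 | hs9
    · have h17 : 17 ≤ ℓ := h.resolve_right (by omega)
      have := Nat.mul_le_mul_left ℓ (Nat.pow_le_pow_left h17 (s - 2))
      refine le_trans ?_ this
      interval_cases s <;> norm_num <;> omega
    · have h2 : ∀ s, 9 ≤ s → s * (s + 2) + s ≤ 2 ^ (s - 2) := by
        intro s hs
        induction s, hs using Nat.le_induction with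
        | base => norm_num
        | succ s hs ih =>
          rw [show s + 1 - 2 = (s - 2) + 1 by omega, pow_succ]
          nlinarith
      have := Nat.mul_le_mul_left ℓ (le_trans (h2 s hs9) (Nat.pow_le_pow_left hℓ (s - 2)))
      nlinarith
  have : ℓ ^ (s - 1) = ℓ * ℓ ^ (s - 2) := by
    rw [← pow_succ']; congr 1; omega
  omega

theorem exists_shift_bound {p : ℕ} [Fact p.Prime] {ℓ g : ℕ} [Fact ℓ.Prime]
    (hg : ℓ * g + 1 = p) (hp : 2 * 10 ^ 6 ≤ p) :
    ∃ s : ℕ, 1 ≤ s ∧ (s : ℝ) ≤ 0.7214 * Real.log p + 1 ∧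
      ∀ a θ : Fin s → ZMod p, Function.Injective a → (∀ i, a i ≠ 0) → (∀ i, θ i ≠ 0) →
        ∀ S : Finset (ZMod p), (∀ y ∈ S, ∀ i, (y + a i) ^ g = θ i) →
          (S.card : ℝ) ≤ (0.7214 * Real.log p + 1.51) * √p := by
  have hℓ : ℓ.Prime := Fact.out
  have hpp : p.Prime := Fact.out
  have hL : 14.5 ≤ Real.log p := log_ge_of_two_million_le (by exact_mod_cast hp)
  have hℓ2 : (2 : ℝ) ≤ ℓ := by exact_mod_cast hℓ.two_le
  set R : ℝ := √p with hRdef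
  have hR2 : R ^ 2 = p := Real.sq_sqrt (by positivity)
  have hR1414 : 1414 ≤ R := by
    rw [hRdef]; apply Real.le_sqrt_of_sq_le
    have : ((2 * 10 ^ 6 : ℕ) : ℝ) ≤ p := by exact_mod_cast hp
    norm_num at this ⊢; linarith
  have hlogR : Real.log p = 2 * Real.log R := by
    rw [← hR2, Real.log_pow]; norm_num
  by_cases hbig : R / 9 < ℓ
  · refine ⟨1, le_rfl, by push_cast; linarith, fun a θ _ _ _ S hS => ?_⟩
    have hg0 : 0 < g := by
      rcases Nat.eq_zero_or_pos g with h | h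
      · subst h; simp at hg; exact absurd hg hpp.one_lt.ne
      · exact h
    have hcard : S.card ≤ g := by
      classical
      have hsub : S.image (· + a 0) ⊆ (Polynomial.nthRoots g (θ 0)).toFinset := by
        intro x hx
        obtain ⟨y, hy, rfl⟩ := Finset.mem_image.1 hx
        rw [Multiset.mem_toFinset, Polynomial.mem_nthRoots hg0]
        exact hS y hy 0
      have h1 := Finset.card_le_card hsub
      rw [Finset.card_image_of_injective _ (add_left_injective _)] at h1
      exact h1.trans ((Multiset.toFinset_card_le _).trans (Polynomial.card_nthRoots _ _))
    have hcard' : (S.card : ℝ) ≤ g := by exact_mod_cast hcard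
    have h1 : (ℓ : ℝ) * g + 1 = R ^ 2 := by rw [hR2]; exact_mod_cast hg
    have h2 : (g : ℝ) * (R / 9) ≤ g * ℓ := by
      apply mul_le_mul_of_nonneg_left hbig.le; positivity
    have h3 : (g : ℝ) ≤ 9 * R := by
      have : (g : ℝ) * R ≤ (9 * R) * R := by nlinarith
      exact le_of_mul_le_mul_right this (by linarith)
    nlinarith
  · push Not at hbig
    have hex : ∃ s : ℕ, R ≤ (ℓ : ℝ) ^ s := by
      obtain ⟨s, hs⟩ := pow_unbounded_of_one_lt R (show (1 : ℝ) < ℓ by linarith)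
      exact ⟨s, hs.le⟩
    classical
    set s := Nat.find hex with hsdef
    have hup : R ≤ (ℓ : ℝ) ^ s := Nat.find_spec hex
    have hs2 : 2 ≤ s := by
      by_contra! hlt
      interval_cases h : s
      · simp at hup; linarith
      · simp at hup; linarith
    have hlow : (ℓ : ℝ) ^ (s - 1) < R := by
      have := Nat.find_min hex (show s - 1 < Nat.find hex by omega)
      exact not_le.1 this
    have hcond : (s : ℝ) + 1 + s * (s + 2) * ℓ ≤ R := by
      rcases Nat.lt_or_ge s 3 with h3 | h3
      · have : s = 2 := by omega
        rw [this]; push_cast; linarith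
      · by_cases h : 17 ≤ ℓ ∨ 9 ≤ s
        · have := quadratic_mul_le_pow hℓ.two_le h3 h
          have h' : (s : ℝ) + 1 + s * (s + 2) * ℓ ≤ (ℓ : ℝ) ^ (s - 1) := by exact_mod_cast this
          linarith
        · push Not at h
          have h16 : ℓ ≤ 16 := by omega
          have h8 : s ≤ 8 := by omega
          have : s + 1 + s * (s + 2) * ℓ ≤ 8 + 1 + 8 * (8 + 2) * 16 := by gcongr
          have h' : (s : ℝ) + 1 + s * (s + 2) * ℓ ≤ ((8 + 1 + 8 * (8 + 2) * 16 : ℕ) : ℝ) := by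
            exact_mod_cast this
          norm_num at h'
          linarith
    have hlog : ((s : ℝ) - 1) * Real.log ℓ ≤ Real.log p / 2 := by
      have h1 := Real.log_le_log (by positivity) hlow.le
      rw [Real.log_pow, Nat.cast_sub (by omega)] at h1
      rw [hlogR]; push_cast at h1; linarith
    have hsr : (2 : ℝ) ≤ s := by exact_mod_cast hs2
    have hbound : ∀ a θ : Fin s → ZMod p, Function.Injective a → (∀ i, a i ≠ 0) →
        (∀ i, θ i ≠ 0) → ∀ S : Finset (ZMod p), (∀ y ∈ S, ∀ i, (y + a i) ^ g = θ i) →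
          (S.card : ℝ) ≤ R * ((s + 1) / 2 + s * (1 - 1 / ℓ)) + 1 :=
      fun a θ ha ha0 hθ S hS => card_le_of_pow_window hg hs2 hlow hup hcond ha ha0 hθ S hS
    rcases Nat.lt_or_ge ℓ 3 with h3 | h3
    · have hℓeq : ℓ = 2 := by have := hℓ.two_le; omega
      have hs1 : (s : ℝ) - 1 ≤ 0.7214 * Real.log p := by
        have h2 := Real.log_two_gt_d9
        rw [hℓeq] at hlog
        push_cast at hlog
        nlinarith
      refine ⟨s, by omega, by linarith, fun a θ ha ha0 hθ S hS => ?_⟩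
      refine (hbound a θ ha ha0 hθ S hS).trans ?_
      rw [hℓeq]; push_cast
      nlinarith
    · have hlog3 : 1.0974 ≤ Real.log 3 := by
        have h1 : Real.log (2 ^ 19 : ℝ) ≤ Real.log (3 ^ 12) :=
          Real.log_le_log (by norm_num) (by norm_num)
        rw [Real.log_pow, Real.log_pow] at h1
        have h2 := Real.log_two_gt_d9
        push_cast at h1
        linarith
      have hlogℓ : 1.0974 ≤ Real.log ℓ :=
        hlog3.trans (Real.log_le_log (by norm_num) (by exact_mod_cast h3))
      have hs1 : (s : ℝ) - 1 ≤ 0.457 * Real.log p := by nlinarith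
      refine ⟨s, by omega, by linarith, fun a θ ha ha0 hθ S hS => ?_⟩
      refine (hbound a θ ha ha0 hθ S hS).trans ?_
      have hinv : 0 ≤ 1 / (ℓ : ℝ) := by positivity
      have : (s : ℝ) * (1 - 1 / ℓ) ≤ s := by nlinarith
      nlinarith

/-- `w` starts a block of `h` consecutive elements on which `v ↦ v ^ g` is constant and nonzero,
up to at most `k` exceptions. -/
def IsAlmostConstantBlock {p : ℕ} (g h k : ℕ) (w : ZMod p) : Prop :=
  ∃ E : Finset ℕ, E.card ≤ k ∧ ∃ c : ZMod p, c ≠ 0 ∧ ∀ m < h, m ∉ E → (w + m) ^ g = c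

theorem IsAlmostConstantBlock.reflect {p g h k : ℕ} [Fact p.Prime] {w : ZMod p}
    (hw : IsAlmostConstantBlock g (h + 1) k w) :
    IsAlmostConstantBlock g (h + 1) k (-w - (h : ZMod p)) := by
  classical
  obtain ⟨E, hE, c, hc, hwc⟩ := hw
  refine ⟨E.image (h - ·), Finset.card_image_le.trans hE, (-1) ^ g * c,
    mul_ne_zero (pow_ne_zero _ (by simp)) hc, fun m hm hmE => ?_⟩
  rw [← hwc (h - m) (by omega) fun hmem =>
    hmE (Finset.mem_image.2 ⟨h - m, hmem, by omega⟩), ← mul_pow, Nat.cast_sub (by omega)]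
  congr 1
  ring

theorem card_almostConstantBlock_le {p g s k : ℕ} [Fact p.Prime] (hg : g ≠ 0)
    (hh : s + 1 + k < p) {B : ℝ}
    (hbound : ∀ a θ : Fin s → ZMod p, Function.Injective a → (∀ i, a i ≠ 0) → (∀ i, θ i ≠ 0) →
        ∀ S : Finset (ZMod p), (∀ y ∈ S, ∀ i, (y + a i) ^ g = θ i) → (S.card : ℝ) ≤ B)
    (G : Finset (ZMod p)) (hG : ∀ w ∈ G, IsAlmostConstantBlock g (s + 1 + k) k w) :
    (G.card : ℝ) ≤ (s + 1 + k).choose k * B := by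
  classical
  let GS : Finset ℕ → Finset (ZMod p) := fun S =>
    G.filter fun w => ∃ c : ZMod p, c ≠ 0 ∧ ∀ m ∈ S, (w + m) ^ g = c
  have hcover : G ⊆ ((Finset.range (s + 1 + k)).powersetCard (s + 1)).biUnion GS := by
    intro w hw
    obtain ⟨E, hE, c, hc, hwc⟩ := hG w hw
    have hcard : s + 1 ≤ (Finset.range (s + 1 + k) \ E).card := by
      have := Finset.le_card_sdiff E (Finset.range (s + 1 + k))
      rw [Finset.card_range] at this
      omega
    obtain ⟨S, hS, hScard⟩ := Finset.exists_subset_card_eq hcard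
    refine Finset.mem_biUnion.2 ⟨S, Finset.mem_powersetCard.2
      ⟨hS.trans Finset.sdiff_subset, hScard⟩, Finset.mem_filter.2 ⟨hw, c, hc, fun m hm => ?_⟩⟩
    have := Finset.mem_sdiff.1 (hS hm)
    exact hwc m (Finset.mem_range.1 this.1) this.2
  have hGS : ∀ S ∈ (Finset.range (s + 1 + k)).powersetCard (s + 1), ((GS S).card : ℝ) ≤ B := by
    intro S hS
    obtain ⟨hSsub, hScard⟩ := Finset.mem_powersetCard.1 hS
    let f := S.orderEmbOfFin hScard
    have hfmem : ∀ i, f i ∈ S := fun i => Finset.orderEmbOfFin_mem S hScard i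
    have hflt : ∀ i, f i < p := fun i => by
      have := Finset.mem_range.1 (hSsub (hfmem i)); omega
    have hfinj : ∀ i j, (f i : ZMod p) = f j → i = j := by
      intro i j h
      rw [ZMod.natCast_eq_natCast_iff] at h
      exact f.injective (Nat.ModEq.eq_of_lt_of_lt h (hflt i) (hflt j))
    have hn : ∀ i : Fin s, ((f i.succ : ZMod p) - f 0) ≠ 0 := by
      intro i h
      exact Fin.succ_ne_zero i (hfinj _ _ (sub_eq_zero.1 h))
    have hinj : Function.Injective fun w : ZMod p => (w + f 0)⁻¹ := by
      intro w w' h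
      simpa using h
    rw [← Finset.card_image_of_injective (GS S) hinj]
    refine hbound (fun i => ((f i.succ : ZMod p) - f 0)⁻¹)
      (fun i => (((f i.succ : ZMod p) - f 0) ^ g)⁻¹) ?_ (fun i => inv_ne_zero (hn i))
      (fun i => inv_ne_zero (pow_ne_zero _ (hn i))) _ ?_
    · intro i j h
      have := hfinj _ _ (sub_left_injective (inv_injective h))
      exact Fin.succ_injective _ this
    · intro y hy i
      obtain ⟨w, hw, rfl⟩ := Finset.mem_image.1 hy
      obtain ⟨-, c, hc, hwc⟩ := Finset.mem_filter.1 hw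
      have h0 := hwc _ (hfmem 0)
      have h1 := hwc _ (hfmem i.succ)
      have hw0 : w + f 0 ≠ 0 := by
        intro h
        rw [h, zero_pow hg] at h0
        exact hc h0.symm
      have hni := hn i
      have : (w + f 0)⁻¹ + ((f i.succ : ZMod p) - f 0)⁻¹
          = (w + f i.succ) * (w + f 0)⁻¹ * ((f i.succ : ZMod p) - f 0)⁻¹ := by
        field_simp
        ring
      simp only [this, mul_pow, inv_pow, h0, h1, mul_inv_cancel₀ hc, one_mul]
  calc (G.card : ℝ)
      ≤ ((((Finset.range (s + 1 + k)).powersetCard (s + 1)).biUnion GS).card : ℝ) := by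
        exact_mod_cast Finset.card_le_card hcover
    _ ≤ ∑ S ∈ (Finset.range (s + 1 + k)).powersetCard (s + 1), ((GS S).card : ℝ) := by
        exact_mod_cast Finset.card_biUnion_le
    _ ≤ ((Finset.range (s + 1 + k)).powersetCard (s + 1)).card • B :=
        Finset.sum_le_card_nsmul _ _ _ hGS
    _ = (s + 1 + k).choose k * B := by
        rw [Finset.card_powersetCard, Finset.card_range, nsmul_eq_mul,
          Nat.choose_symm_add (a := s + 1) (b := k)]

theorem pow_eq_one_of_prime_factors {M : Type*} [CommSemiring M] {g : ℕ} {z : ℕ} (hz : z ≠ 0)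
    (h : ∀ r : ℕ, r.Prime → r ∣ z → (r : M) ^ g = 1) : (z : M) ^ g = 1 := by
  induction z using induction_on_primes with
  | zero => exact absurd rfl hz
  | one => simp
  | prime_mul r a hr ih =>
    rw [Nat.cast_mul, mul_pow, h r hr (Dvd.intro _ rfl), one_mul]
    exact ih (fun ha => hz (by simp [ha])) fun q hq hqa => h q hq (Dvd.dvd.mul_left hqa r)

theorem card_coprime_progression {u d : ℕ} (hu : Squarefree u) {τ : ℤ}
    (hτ : ∀ r : ℕ, r.Prime → r ∣ u → r ∣ d → ¬ (r : ℤ) ∣ τ) {α Λ : ℝ} (S : Finset ℤ)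
    (hS : ∀ x : ℤ, α < x → (x : ℝ) < α + Λ → (∀ r : ℕ, r.Prime → r ∣ u → ¬ (r : ℤ) ∣ d * x - τ) →
      x ∈ S) :
    (u.totient : ℝ) * (Λ / u - 1) ≤ S.card := by
  have hu0 : u ≠ 0 := hu.ne_zero
  have : NeZero u := ⟨hu0⟩
  have hupos : (0 : ℝ) < u := by exact_mod_cast Nat.pos_of_ne_zero hu0
  set D := d + u / Nat.gcd u d with hD
  have hfac : u.gcd d * (u / u.gcd d) = u := Nat.mul_div_cancel' (Nat.gcd_dvd_left u d)
  have hnd : ∀ r : ℕ, r.Prime → r ∣ u → ¬ r ∣ d → r ∣ u / u.gcd d := by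
    intro r hr hru hrd
    rw [← hfac] at hru
    exact (hr.dvd_mul.1 hru).resolve_left fun h => hrd (h.trans (Nat.gcd_dvd_right u d))
  have hcop : D.Coprime u := by
    refine Nat.Coprime.symm (Nat.coprime_of_dvd fun r hr hru hrD => ?_)
    by_cases hrd : r ∣ d
    · have h1 : r ∣ u / u.gcd d := (Nat.dvd_add_right hrd).1 hrD
      have h2 : r * r ∣ u := by
        rw [← hfac]; exact mul_dvd_mul (Nat.dvd_gcd hru hrd) h1
      exact hr.one_lt.ne' (Nat.isUnit_iff.1 (hu r h2))
    · exact hrd ((Nat.dvd_add_left (hnd r hr hru hrd)).1 hrD)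
  let δ : (ZMod u)ˣ := ZMod.unitOfCoprime D hcop
  let j := ⌈Λ / u⌉₊ - 1
  let x₀ : ℤ := ⌊α⌋ + 1
  let F : Fin j × (ZMod u)ˣ → ℤ := fun bv =>
    x₀ + (bv.1 : ℕ) * u + (((bv.2 + τ) * (δ⁻¹ : (ZMod u)ˣ) - x₀ : ZMod u).val : ℤ)
  have hFcast : ∀ bv, ((F bv : ℤ) : ZMod u) = (bv.2 + τ) * (δ⁻¹ : (ZMod u)ˣ) := by
    intro bv
    simp [F]
  have hFinj : Function.Injective F := by
    rintro ⟨b, v⟩ ⟨b', v'⟩ h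
    have h1 := congrArg (fun x : ℤ => (x : ZMod u)) h
    simp only [hFcast] at h1
    have h2 : v = v' := by
      rw [Units.mul_left_inj] at h1
      exact Units.ext (add_right_cancel h1)
    subst h2
    simp only [F] at h
    have h3 : ((b : ℕ) : ℤ) * u = (b' : ℕ) * u := by linarith
    have h4 : ((b : ℕ) : ℤ) = (b' : ℕ) := mul_right_cancel₀ (by exact_mod_cast hu0) h3
    ext
    · exact_mod_cast h4
    · rfl
  have hmaps : ∀ bv, F bv ∈ S := by
    rintro ⟨b, v⟩
    have hval := ZMod.val_lt ((v + τ) * (δ⁻¹ : (ZMod u)ˣ) - x₀ : ZMod u)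
    have hx1 : x₀ ≤ F (b, v) := by simp only [F]; nlinarith
    have hx2 : F (b, v) ≤ x₀ + j * u - 1 := by
      have hb : ((b : ℕ) : ℤ) + 1 ≤ j := by exact_mod_cast b.2
      have h1 : (((b : ℕ) : ℤ) + 1) * u ≤ j * u :=
        mul_le_mul_of_nonneg_right hb (by positivity)
      simp only [F]
      have h2 : (((v + τ) * (δ⁻¹ : (ZMod u)ˣ) - x₀ : ZMod u).val : ℤ) + 1 ≤ u := by
        exact_mod_cast hval
      linarith
    have hx1' : (x₀ : ℝ) ≤ F (b, v) := by exact_mod_cast hx1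
    have hx2' : (F (b, v) : ℝ) ≤ x₀ + j * u - 1 := by exact_mod_cast hx2
    have hx₀ : (x₀ : ℝ) = ⌊α⌋ + 1 := by simp [x₀]
    have hju : (j : ℝ) * u < Λ := by
      rw [← lt_div_iff₀ hupos, ← Nat.lt_ceil]
      have := b.2
      omega
    have hfl := Int.lt_floor_add_one α
    have hfl' := Int.floor_le α
    refine hS _ (by linarith) (by linarith) fun r hr hru hdvd => ?_
    by_cases hrd : r ∣ d
    · refine hτ r hr hru hrd ?_
      have h1 : (r : ℤ) ∣ d * F (b, v) := Dvd.dvd.mul_right (by exact_mod_cast hrd) _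
      exact (dvd_sub_right h1).1 hdvd
    · have h1 : (r : ℤ) ∣ D * F (b, v) - τ := by
        have h2 : (r : ℤ) ∣ ((u / u.gcd d : ℕ) : ℤ) * F (b, v) :=
          Dvd.dvd.mul_right (by exact_mod_cast hnd r hr hru hrd) _
        have h3 := dvd_add hdvd h2
        have h4 : (D : ℤ) * F (b, v) - τ = d * F (b, v) - τ + ((u / u.gcd d : ℕ) : ℤ) * F (b, v) := by
          rw [hD]; push_cast; ring
        rwa [h4]
      have : Fact r.Prime := ⟨hr⟩
      have h5 : ((D * F (b, v) - τ : ℤ) : ZMod u) = v := by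
        push_cast
        rw [hFcast]
        have : (D : ZMod u) = (δ : ZMod u) := rfl
        rw [this, mul_left_comm, Units.mul_inv, mul_one]
        ring
      have h6 : ((D * F (b, v) - τ : ℤ) : ZMod r) = 0 := (ZMod.intCast_zmod_eq_zero_iff_dvd _ _).2 h1
      have h7 := congrArg (ZMod.castHom hru (ZMod r)) h5
      rw [map_intCast, h6] at h7
      have h8 : IsUnit (ZMod.castHom hru (ZMod r) (v : ZMod u)) := v.isUnit.map _
      rw [← h7] at h8
      exact not_isUnit_zero h8
  have hcard : j * u.totient ≤ S.card := by
    have := Finset.card_le_card_of_injOn (s := Finset.univ) F (fun bv _ => hmaps bv)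
      hFinj.injOn
    simpa [Fintype.card_prod, ZMod.card_units_eq_totient] using this
  have hj : Λ / u - 1 ≤ j := by
    have h1 := Nat.le_ceil (Λ / u)
    have h2 : (⌈Λ / u⌉₊ : ℝ) ≤ j + 1 := by
      have : ⌈Λ / u⌉₊ ≤ j + 1 := by omega
      exact_mod_cast this
    linarith
  have hcard' : (j : ℝ) * u.totient ≤ S.card := by exact_mod_cast hcard
  have : (u.totient : ℝ) * (Λ / u - 1) ≤ u.totient * j :=
    mul_le_mul_of_nonneg_left hj (Nat.cast_nonneg _)
  linarith

theorem prime_dvd_prod_primes {Q : Finset ℕ} (hQ : ∀ r ∈ Q, r.Prime) {r : ℕ} (hr : r.Prime) :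
    r ∣ ∏ q ∈ Q, q ↔ r ∈ Q := by
  constructor
  · intro h
    obtain ⟨q, hq, hrq⟩ := (Prime.dvd_finsetProd_iff hr.prime _).1 h
    rwa [(Nat.prime_dvd_prime_iff_eq hr (hQ q hq)).1 hrq]
  · exact fun h => Finset.dvd_prod_of_mem _ h

theorem squarefree_prod_primes {Q : Finset ℕ} (hQ : ∀ r ∈ Q, r.Prime) :
    Squarefree (∏ q ∈ Q, q) := by
  refine Finset.squarefree_prod_of_pairwise_isCoprime ?_ fun r hr => (hQ r hr).squarefree
  intro a ha b hb hab
  exact Nat.coprime_iff_isRelPrime.1 ((Nat.coprime_primes (hQ a ha) (hQ b hb)).2 hab)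

theorem isAlmostConstantBlock_of_point {p g h : ℕ} [Fact p.Prime] (hh : 1 ≤ h)
    {Q₁ Q₂ : Finset ℕ} (hQ₁ : ∀ r ∈ Q₁, r.Prime ∧ r ≠ p)
    (hQ₂ : ∀ r ∈ Q₂, r.Prime ∧ r ≠ p ∧ r ∉ Q₁ ∧ h + 1 ≤ r) {H : ℝ} (hHp : H ≤ p)
    (hres : ∀ r : ℕ, r.Prime → (r : ℝ) < H → r ∉ Q₁ → r ∉ Q₂ → (r : ZMod p) ^ g = 1)
    {d t z : ℕ} {x : ℤ} (hd : 0 < d) (ht : t.Coprime d) (hz : (z : ℤ) = d * x - t * p)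
    (hz0 : 0 < z) (hzH : (z : ℝ) + d * (∏ q ∈ Q₁, q : ℕ) * h < H)
    (hcop : ∀ r : ℕ, r.Prime → r ∣ ∏ q ∈ Q₁, q → ¬ r ∣ z) :
    IsAlmostConstantBlock g (h + 1) Q₂.card ((x : ZMod p) / ((∏ q ∈ Q₁, q : ℕ) : ZMod p)) := by
  classical
  have hpp : p.Prime := Fact.out
  have hsq := squarefree_prod_primes fun r hr => (hQ₁ r hr).1
  have hdvd : ∀ r : ℕ, r.Prime → (r ∣ ∏ q ∈ Q₁, q ↔ r ∈ Q₁) := fun r hr =>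
    prime_dvd_prod_primes (fun r hr => (hQ₁ r hr).1) hr
  set u := ∏ q ∈ Q₁, q with hu
  have hu0 : 0 < u := Nat.pos_of_ne_zero hsq.ne_zero
  have huF : (u : ZMod p) ≠ 0 := by
    rw [Ne, ZMod.natCast_eq_zero_iff, hdvd p hpp]
    exact fun h => (hQ₁ p h).2 rfl
  have hdF : (d : ZMod p) ≠ 0 := by
    rw [Ne, ZMod.natCast_eq_zero_iff]
    intro h1
    have h2 := Nat.le_of_dvd hd h1
    have h3 : d ≤ d * u * h := by
      calc d = d * 1 * 1 := by ring
        _ ≤ d * u * h := by gcongr; omega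
    have h4 : (p : ℝ) ≤ d * u * h := by exact_mod_cast h2.trans h3
    have h5 : (0 : ℝ) < z := by exact_mod_cast hz0
    linarith
  have hzF : (z : ZMod p) = d * x := by
    have := congrArg (fun y : ℤ => (y : ZMod p)) hz
    simpa using this
  let E := Q₂.biUnion fun r => (Finset.range (h + 1)).filter fun m => r ∣ z + d * u * m
  refine ⟨E, ?_, (((u * d : ℕ) : ZMod p) ^ g)⁻¹, ?_, ?_⟩
  · refine (Finset.card_biUnion_le).trans ?_
    refine (Finset.sum_le_card_nsmul _ _ 1 fun r hr => ?_).trans (by simp)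
    obtain ⟨hrp, hrne, hrQ, hrh⟩ := hQ₂ r hr
    rw [Finset.card_le_one]
    have key : ∀ m m' : ℕ, m ≤ m' → m' < h + 1 → r ∣ z + d * u * m → r ∣ z + d * u * m' →
        m = m' := by
      intro m m' hmm hm' h1 h2
      have h3 : r ∣ d * u * (m' - m) := by
        have := Nat.dvd_sub h2 h1
        rwa [show z + d * u * m' - (z + d * u * m) = d * u * (m' - m) by
          rw [Nat.mul_sub]; omega] at this
      rcases hrp.dvd_mul.1 h3 with h4 | h4
      · exfalso
        rcases hrp.dvd_mul.1 h4 with h5 | h5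
        · have h6 : r ∣ z := (Nat.dvd_add_left (Dvd.dvd.mul_right (Dvd.dvd.mul_right h5 _) _)).1 h1
          have h7 : (r : ℤ) ∣ ((t * p : ℕ) : ℤ) := by
            have h8 : (r : ℤ) ∣ d * x := Dvd.dvd.mul_right (by exact_mod_cast h5) _
            have h9 : (r : ℤ) ∣ d * x - t * p := by rw [← hz]; exact_mod_cast h6
            have := (dvd_sub_right h8).1 h9
            exact_mod_cast this
          rcases hrp.dvd_mul.1 (Int.natCast_dvd_natCast.1 h7) with h8 | h8
          · have := Nat.dvd_gcd h8 h5
            rw [ht] at this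
            exact hrp.one_lt.ne' (Nat.dvd_one.1 this)
          · exact hrne ((Nat.prime_dvd_prime_iff_eq hrp hpp).1 h8)
        · exact hrQ ((hdvd r hrp).1 h5)
      · by_contra hne
        have := Nat.le_of_dvd (by omega) h4
        omega
    intro m hm m' hm'
    simp only [Finset.mem_filter, Finset.mem_range] at hm hm'
    rcases le_total m m' with hle | hle
    · exact key m m' hle hm'.1 hm.2 hm'.2
    · exact (key m' m hle hm.1 hm'.2 hm.2).symm
  · rw [Nat.cast_mul]
    exact inv_ne_zero (pow_ne_zero _ (mul_ne_zero huF hdF))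
  · intro m hm hmE
    have h1 : ((z + d * u * m : ℕ) : ZMod p) ^ g = 1 := by
      refine pow_eq_one_of_prime_factors (by omega) fun r hr hrz => ?_
      have hle : (r : ℝ) ≤ z + d * u * m := by
        have := Nat.le_of_dvd (by omega) hrz
        exact_mod_cast this
      have hmh : (d : ℝ) * u * m ≤ d * u * h := by
        have : m ≤ h := by omega
        gcongr
      refine hres r hr (by linarith) ?_ ?_
      · intro hrQ
        have hru := (hdvd r hr).2 hrQ
        refine hcop r hr hru ?_
        exact (Nat.dvd_add_left (Dvd.dvd.mul_right (Dvd.dvd.mul_left hru _) _)).1 hrz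
      · intro hrQ
        exact hmE (Finset.mem_biUnion.2 ⟨r, hrQ, Finset.mem_filter.2
          ⟨Finset.mem_range.2 hm, hrz⟩⟩)
    have h2 : ((z + d * u * m : ℕ) : ZMod p) = ((u * d : ℕ) : ZMod p) * ((x : ZMod p) / u + m) := by
      push_cast
      rw [hzF]
      field_simp
    rw [h2, mul_pow] at h1
    exact eq_inv_of_mul_eq_one_right h1

theorem point_injective {p d t d' t' z z' : ℕ} {x x' : ℤ}
    (hd : 0 < d) (hd' : 0 < d') (ht : t.Coprime d) (ht' : t'.Coprime d') (htd : t < d)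
    (htd' : t' < d') (hz : (z : ℤ) = d * x - t * p) (hz' : (z' : ℤ) = d' * x' - t' * p)
    (h1 : d' * z < p) (h2 : d * z' < p) (hx : (p : ℤ) ∣ x - x') :
    d = d' ∧ t = t' ∧ x = x' := by
  obtain ⟨k, hk⟩ := hx
  have e1 : ((d' * z : ℕ) : ℤ) - ((d * z' : ℕ) : ℤ) = p * (d * d' * k - (d' * t - d * t')) := by
    push_cast
    rw [hz, hz']
    linear_combination (d : ℤ) * d' * hk
  have e2 : d' * z = d * z' := by
    have h3 : d' * z ≡ d * z' [MOD p] := by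
      rw [← Int.natCast_modEq_iff]
      exact (Int.modEq_iff_dvd.2 ⟨_, e1⟩).symm
    exact Nat.ModEq.eq_of_lt_of_lt h3 h1 h2
  have hp0 : (p : ℤ) ≠ 0 := by
    have : 0 < p := by omega
    exact_mod_cast this.ne'
  have e3 : (d : ℤ) * d' * k = d' * t - d * t' := by
    rw [e2, sub_self] at e1
    have := (mul_eq_zero.1 e1.symm).resolve_left hp0
    linarith
  have c1 : d ∣ d' := by
    have : (d : ℤ) ∣ ((t * d' : ℕ) : ℤ) := ⟨d' * k + t', by push_cast; linear_combination -e3⟩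
    exact ht.symm.dvd_of_dvd_mul_left (Int.natCast_dvd_natCast.1 this)
  have c2 : d' ∣ d := by
    have : (d' : ℤ) ∣ ((t' * d : ℕ) : ℤ) := ⟨t - d * k, by push_cast; linear_combination e3⟩
    exact ht'.symm.dvd_of_dvd_mul_left (Int.natCast_dvd_natCast.1 this)
  have hdd : d = d' := Nat.dvd_antisymm c1 c2
  subst hdd
  have hd0 : (d : ℤ) ≠ 0 := by exact_mod_cast hd.ne'
  have e4 : (d : ℤ) * k = t - t' := by
    have : (d : ℤ) * (d * k) = d * (t - t') := by linarith
    exact mul_left_cancel₀ hd0 this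
  have hk0 : k = 0 := by
    have ha : (t : ℤ) < d := by exact_mod_cast htd
    have hb : (t' : ℤ) < d := by exact_mod_cast htd'
    have h5 : (d : ℤ) * k < d * 1 := by have := Int.natCast_nonneg t'; linarith
    have h6 : (d : ℤ) * (-1) < d * k := by have := Int.natCast_nonneg t; linarith
    have h7 := lt_of_mul_lt_mul_left h5 (by positivity)
    have h8 := lt_of_mul_lt_mul_left h6 (by positivity)
    omega
  subst hk0
  refine ⟨rfl, ?_, by linarith⟩
  have : (t : ℤ) = t' := by linarith
  exact_mod_cast this

theorem point_ne_reflected {p u h d t d' t' z z' : ℕ} {x x' : ℤ} {X : ℝ}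
    (hd : 0 < d) (hd' : 0 < d') (hdX : (d : ℝ) ≤ X) (hdX' : (d' : ℝ) ≤ X) (hz0 : 0 < z)
    (hz : (z : ℤ) = d * x - t * p) (hz' : (z' : ℤ) = d' * x' - t' * p)
    (hzH : (z : ℝ) + d * u * h < X * u * (h + 1)) (hzH' : (z' : ℝ) + d' * u * h < X * u * (h + 1))
    (hXp : X ^ 2 * u * (h + 2) ≤ p) : ¬ (p : ℤ) ∣ x + x' + u * h := by
  intro hdvd
  have h1 : (p : ℤ) ∣ ((d' * z + d * z' + d * d' * u * h : ℕ) : ℤ) := by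
    obtain ⟨k, hk⟩ := hdvd
    refine ⟨d * d' * k - (d' * t + d * t'), ?_⟩
    push_cast
    rw [hz, hz']
    linear_combination (d : ℤ) * d' * hk
  have h2 := Nat.le_of_dvd (by positivity) (Int.natCast_dvd_natCast.1 h1)
  have h3 : (p : ℝ) ≤ d' * z + d * z' + d * d' * u * h := by exact_mod_cast h2
  have hdr : (0 : ℝ) < d := by exact_mod_cast hd
  have hdr' : (0 : ℝ) < d' := by exact_mod_cast hd'
  have h4 : (d' : ℝ) * (z + d * u * h) < d' * (X * u * (h + 1)) := mul_lt_mul_of_pos_left hzH hdr'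
  have h5 : (d : ℝ) * (z' + d' * u * h) < d * (X * u * (h + 1)) := mul_lt_mul_of_pos_left hzH' hdr
  have h6 : ((d : ℝ) + d') * X * (h + 1) - d * d' * h ≤ X ^ 2 * (h + 2) := by
    have ha : 0 ≤ (X - d) * ((X - d') * h) :=
      mul_nonneg (by linarith) (mul_nonneg (by linarith) (Nat.cast_nonneg h))
    have hb : 0 ≤ (X - d) * X := mul_nonneg (by linarith) (by linarith)
    have hc : 0 ≤ (X - d') * X := mul_nonneg (by linarith) (by linarith)
    nlinarith
  have h7 : (u : ℝ) * (((d : ℝ) + d') * X * (h + 1) - d * d' * h) ≤ u * (X ^ 2 * (h + 2)) :=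
    mul_le_mul_of_nonneg_left h6 (Nat.cast_nonneg u)
  nlinarith

/-- Weighted count of reduced fractions `t / d` with `d ≤ X`. -/
noncomputable def fareyWeight (X : ℝ) : ℝ :=
  ∑ d ∈ Finset.Icc 1 ⌊X⌋₊, (d.totient : ℝ) * (X / d - 1)

theorem fareyWeight_le_card {p g h : ℕ} [Fact p.Prime] (hh : 1 ≤ h)
    {Q₁ Q₂ : Finset ℕ} (hQ₁ : ∀ r ∈ Q₁, r.Prime ∧ r ≠ p)
    (hQ₂ : ∀ r ∈ Q₂, r.Prime ∧ r ≠ p ∧ r ∉ Q₁ ∧ h + 1 ≤ r) {X : ℝ} (hX : 1 ≤ X)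
    (hXp : X ^ 2 * (∏ q ∈ Q₁, q : ℕ) * (h + 2) ≤ p)
    (hres : ∀ r : ℕ, r.Prime → (r : ℝ) < X * (∏ q ∈ Q₁, q : ℕ) * (h + 1) → r ∉ Q₁ → r ∉ Q₂ →
      (r : ZMod p) ^ g = 1)
    (G : Finset (ZMod p)) (hG : ∀ w, IsAlmostConstantBlock g (h + 1) Q₂.card w → w ∈ G) :
    2 * ((∏ q ∈ Q₁, q).totient : ℝ) * (h + 1) * fareyWeight X ≤ G.card := by
  classical
  have hpp : p.Prime := Fact.out
  have hsq := squarefree_prod_primes fun r hr => (hQ₁ r hr).1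
  have hup : ¬ p ∣ ∏ q ∈ Q₁, q := by
    rw [prime_dvd_prod_primes (fun r hr => (hQ₁ r hr).1) hpp]
    exact fun h => (hQ₁ p h).2 rfl
  have hblock := @isAlmostConstantBlock_of_point p g h _ hh Q₁ Q₂ hQ₁ hQ₂
    (X * (∏ q ∈ Q₁, q : ℕ) * (h + 1))
  set u := ∏ q ∈ Q₁, q with hu
  have hu0 : 0 < u := Nat.pos_of_ne_zero hsq.ne_zero
  have hur : (1 : ℝ) ≤ u := by exact_mod_cast hu0
  have hHp : X * (X * u * (h + 1)) ≤ p := by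
    have : 0 ≤ X ^ 2 * u := by positivity
    nlinarith
  have hHp' : X * u * (h + 1) ≤ p := by
    have : 0 ≤ X * u * (h + 1) := by positivity
    nlinarith
  have huF : (u : ZMod p) ≠ 0 := by rwa [Ne, ZMod.natCast_eq_zero_iff]
  let I : Finset (Σ _ : ℕ, ℕ) := (Finset.Icc 1 ⌊X⌋₊).sigma fun d =>
    (Finset.range d).filter fun t => d.Coprime t
  let α : (Σ _ : ℕ, ℕ) → ℝ := fun i => (i.2 * p : ℝ) / i.1
  let Λ : (Σ _ : ℕ, ℕ) → ℝ := fun i => X * u * (h + 1) / i.1 - u * h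
  let P : (Σ _ : ℕ, ℕ) → Finset ℤ := fun i => (Finset.Ioo ⌊α i⌋ ⌈α i + Λ i⌉).filter fun x =>
    ∀ r : ℕ, r.Prime → r ∣ u → ¬ (r : ℤ) ∣ i.1 * x - (i.2 * p : ℕ)
  let T : Finset (Σ _ : (Σ _ : ℕ, ℕ), ℤ) := I.sigma P
  have hpoint : ∀ y ∈ T, ∃ z : ℕ, 0 < y.1.1 ∧ (y.1.1 : ℝ) ≤ X ∧ y.1.2 < y.1.1 ∧
      y.1.2.Coprime y.1.1 ∧ 0 < z ∧ (z : ℤ) = y.1.1 * y.2 - y.1.2 * p ∧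
      (z : ℝ) + y.1.1 * u * h < X * u * (h + 1) ∧
      ∀ r : ℕ, r.Prime → r ∣ u → ¬ r ∣ z := by
    rintro ⟨⟨d, t⟩, x⟩ hy
    simp only [T, I, P, Finset.mem_sigma, Finset.mem_Icc, Finset.mem_filter, Finset.mem_range,
      Finset.mem_Ioo, Int.floor_lt, Int.lt_ceil] at hy
    obtain ⟨⟨⟨hd1, hdX⟩, htd, hcop⟩, ⟨hx1, hx2⟩, hxu⟩ := hy
    have hdr : (0 : ℝ) < d := by exact_mod_cast hd1
    have hx1' : (t * p : ℝ) < x * d := (div_lt_iff₀ hdr).1 hx1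
    have hx1'' : (0 : ℤ) < d * x - t * p := by
      have : ((t * p : ℤ) : ℝ) < ((x * d : ℤ) : ℝ) := by push_cast; exact hx1'
      have := Int.cast_lt.1 this
      linarith
    obtain ⟨z, hz⟩ := Int.eq_ofNat_of_zero_le hx1''.le
    refine ⟨z, hd1, (Nat.le_floor_iff (by linarith)).1 hdX, htd, hcop.symm, ?_, hz.symm, ?_, ?_⟩
    · rw [hz] at hx1''; exact_mod_cast hx1''
    · have hzr : (z : ℝ) = d * x - t * p := by
        have := congrArg (fun y : ℤ => (y : ℝ)) hz.symm
        simpa using this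
      have h3 : (d : ℝ) * x < d * (α ⟨d, t⟩ + Λ ⟨d, t⟩) := mul_lt_mul_of_pos_left hx2 hdr
      have h4 : (d : ℝ) * (α ⟨d, t⟩ + Λ ⟨d, t⟩) = t * p + X * u * (h + 1) - d * u * h := by
        simp only [α, Λ]; field_simp; ring
      simp only
      linarith
    · intro r hr hru hrz
      refine hxu r hr hru ?_
      push_cast
      rw [hz]; exact_mod_cast hrz
  let w : (Σ _ : (Σ _ : ℕ, ℕ), ℤ) → ZMod p := fun y => (y.2 : ZMod p) / u
  let w' : (Σ _ : (Σ _ : ℕ, ℕ), ℤ) → ZMod p := fun y => -w y - (h : ZMod p)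
  have hzlt : ∀ d z : ℕ, (d : ℝ) ≤ X → ∀ d₁ : ℕ, (z : ℝ) + d₁ * u * h < X * u * (h + 1) →
      d * z < p := by
    intro d z hd d₁ hz
    have h0 : (0 : ℝ) ≤ d₁ * u * h := by positivity
    have h1 : (d : ℝ) * z ≤ X * z := mul_le_mul_of_nonneg_right hd (Nat.cast_nonneg z)
    have h2 : X * z < X * (X * u * (h + 1)) := mul_lt_mul_of_pos_left (by linarith) (by linarith)
    have : (d : ℝ) * z < p := by linarith
    exact_mod_cast this
  have hwinj : Set.InjOn w T := by
    intro y hy y' hy' hyy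
    obtain ⟨z, hd, hdX, htd, hcop, hz0, hz, hzH, hzu⟩ := hpoint y hy
    obtain ⟨z', hd', hdX', htd', hcop', hz0', hz', hzH', hzu'⟩ := hpoint y' hy'
    have h1 : (y.2 : ZMod p) = y'.2 := by
      have : (y.2 : ZMod p) / u = y'.2 / u := hyy
      field_simp at this
      exact this
    have h2 : (p : ℤ) ∣ y.2 - y'.2 := by
      rw [← ZMod.intCast_zmod_eq_zero_iff_dvd]; push_cast; rw [h1, sub_self]
    obtain ⟨e1, e2, e3⟩ := point_injective hd hd' hcop hcop' htd htd' hz hz'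
      (hzlt _ _ hdX' _ hzH) (hzlt _ _ hdX _ hzH') h2
    obtain ⟨⟨d, t⟩, x⟩ := y
    obtain ⟨⟨d', t'⟩, x'⟩ := y'
    simp only at e1 e2 e3
    subst e1 e2 e3
    rfl
  have hw'inj : Set.InjOn w' T := by
    intro y hy y' hy' hyy
    refine hwinj hy hy' ?_
    have : -w y - (h : ZMod p) = -w y' - h := hyy
    exact neg_injective (sub_left_injective this)
  have hdisj : Disjoint (T.image w) (T.image w') := by
    rw [Finset.disjoint_left]
    intro v hv hv'
    obtain ⟨y, hy, rfl⟩ := Finset.mem_image.1 hv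
    obtain ⟨y', hy', hyy⟩ := Finset.mem_image.1 hv'
    obtain ⟨z, hd, hdX, htd, hcop, hz0, hz, hzH, hzu⟩ := hpoint y hy
    obtain ⟨z', hd', hdX', htd', hcop', hz0', hz', hzH', hzu'⟩ := hpoint y' hy'
    refine point_ne_reflected hd hd' hdX hdX' hz0 hz hz' hzH hzH' hXp ?_
    rw [← ZMod.intCast_zmod_eq_zero_iff_dvd]
    have h1 : -((y'.2 : ZMod p) / u) - h = y.2 / u := hyy
    push_cast
    field_simp at h1
    linear_combination -h1
  have hsub : T.image w ∪ T.image w' ⊆ G := by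
    have hw : ∀ y ∈ T, IsAlmostConstantBlock g (h + 1) Q₂.card (w y) := by
      intro y hy
      obtain ⟨z, hd, hdX, htd, hcop, hz0, hz, hzH, hzu⟩ := hpoint y hy
      exact hblock hHp' hres hd hcop hz hz0 hzH hzu
    intro v hv
    rcases Finset.mem_union.1 hv with hv | hv
    · obtain ⟨y, hy, rfl⟩ := Finset.mem_image.1 hv
      exact hG _ (hw y hy)
    · obtain ⟨y, hy, rfl⟩ := Finset.mem_image.1 hv
      exact hG _ (hw y hy).reflect
  have hcard : 2 * T.card ≤ G.card := by
    have := Finset.card_le_card hsub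
    rw [Finset.card_union_of_disjoint hdisj, Finset.card_image_of_injOn hwinj,
      Finset.card_image_of_injOn hw'inj] at this
    omega
  have hP : ∀ i ∈ I, (u.totient : ℝ) * ((h + 1) * (X / i.1 - 1)) ≤ (P i).card := by
    rintro ⟨d, t⟩ hi
    simp only [I, Finset.mem_sigma, Finset.mem_Icc, Finset.mem_filter, Finset.mem_range] at hi
    obtain ⟨⟨hd1, hdX⟩, htd, hcop⟩ := hi
    have hdr : (0 : ℝ) < d := by exact_mod_cast hd1
    have h1 := card_coprime_progression (u := u) (d := d) hsq (τ := (t * p : ℕ)) (α := α ⟨d, t⟩)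
      (Λ := Λ ⟨d, t⟩) ?_ (P ⟨d, t⟩) ?_
    · refine le_trans (le_of_eq ?_) h1
      simp only [Λ]
      field_simp
      ring
    · intro r hr hru hrd hrt
      rcases hr.dvd_mul.1 (Int.natCast_dvd_natCast.1 hrt) with h | h
      · have := Nat.dvd_gcd hrd h
        rw [hcop] at this
        exact hr.one_lt.ne' (Nat.dvd_one.1 this)
      · exact hup ((Nat.prime_dvd_prime_iff_eq hr hpp).1 h ▸ hru)
    · intro x hx1 hx2 hxr
      exact Finset.mem_filter.2 ⟨Finset.mem_Ioo.2 ⟨Int.floor_lt.2 hx1, Int.lt_ceil.2 hx2⟩, hxr⟩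
  have hT : (u.totient : ℝ) * (h + 1) * fareyWeight X ≤ T.card := by
    rw [Finset.card_sigma, Nat.cast_sum]
    refine le_trans (le_of_eq ?_) (Finset.sum_le_sum hP)
    rw [Finset.sum_sigma, fareyWeight, Finset.mul_sum]
    refine Finset.sum_congr rfl fun d _ => ?_
    simp only [Finset.sum_const, nsmul_eq_mul]
    rw [Nat.totient_eq_card_coprime d]
    ring
  have hcard' : (2 : ℝ) * T.card ≤ G.card := by exact_mod_cast hcard
  linarith

theorem one_sub_sum_le_prod_one_sub {ι : Type*} (s : Finset ι) {f : ι → ℝ}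
    (h0 : ∀ i ∈ s, 0 ≤ f i) (h1 : ∀ i ∈ s, f i ≤ 1) :
    1 - ∑ i ∈ s, f i ≤ ∏ i ∈ s, (1 - f i) := by
  classical
  induction s using Finset.induction_on with
  | empty => simp
  | insert a s ha ih =>
    rw [Finset.sum_insert ha, Finset.prod_insert ha]
    have h2 := ih (fun i hi => h0 i (Finset.mem_insert_of_mem hi))
      fun i hi => h1 i (Finset.mem_insert_of_mem hi)
    have h3 := h0 a (Finset.mem_insert_self a s)
    have h4 := h1 a (Finset.mem_insert_self a s)
    have h5 : ∏ i ∈ s, (1 - f i) ≤ 1 := Finset.prod_le_one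
      (fun i hi => sub_nonneg.2 (h1 i (Finset.mem_insert_of_mem hi)))
      fun i hi => sub_le_self _ (h0 i (Finset.mem_insert_of_mem hi))
    nlinarith

theorem sum_Icc_sub (Y : ℝ) (N : ℕ) :
    ∑ k ∈ Finset.Icc 1 N, (Y - k) = N * Y - N * (N + 1) / 2 := by
  induction N with
  | zero => simp
  | succ N ih =>
    rw [Finset.sum_Icc_succ_top (by omega), ih]
    push_cast
    ring

theorem sum_Icc_floor_sub_le {Y : ℝ} : ∑ k ∈ Finset.Icc 1 ⌊Y⌋₊, (Y - k) ≤ Y ^ 2 / 2 := by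
  rw [sum_Icc_sub]
  have : (0 : ℝ) ≤ ⌊Y⌋₊ := Nat.cast_nonneg _
  nlinarith [sq_nonneg (Y - ⌊Y⌋₊)]

theorem le_sum_Icc_floor_sub {Y : ℝ} (hY : 0 ≤ Y) :
    (Y ^ 2 - Y) / 2 ≤ ∑ k ∈ Finset.Icc 1 ⌊Y⌋₊, (Y - k) := by
  rw [sum_Icc_sub]
  nlinarith [Nat.floor_le hY, Nat.lt_floor_add_one Y]

theorem sum_inv_sq_odd_le (N : ℕ) :
    ∑ j ∈ Finset.Icc 2 N, (1 : ℝ) / ((2 * j + 1 : ℕ) : ℝ) ^ 2 ≤ 1 / 8 := by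
  suffices h : ∀ M : ℕ, ∑ j ∈ Finset.Icc 2 (M + 1), (1 : ℝ) / ((2 * j + 1 : ℕ) : ℝ) ^ 2
      ≤ 1 / 8 - 1 / (4 * (M + 2)) by
    rcases N with _ | M
    · simp
    · refine (h M).trans (sub_le_self _ (by positivity))
  intro M
  induction M with
  | zero => simp; norm_num
  | succ M ih =>
    rw [Finset.sum_Icc_succ_top (by omega)]
    have : (1 : ℝ) / ((2 * (M + 1 + 1) + 1 : ℕ) : ℝ) ^ 2
        ≤ 1 / (4 * (M + 2)) - 1 / (4 * ((M + 1 : ℕ) + 2)) := by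
      push_cast
      rw [div_sub_div _ _ (by positivity) (by positivity),
        div_le_div_iff₀ (by positivity) (by positivity)]
      nlinarith [(Nat.cast_nonneg M : (0 : ℝ) ≤ M)]
    linarith

theorem sum_inv_sq_primes_le (N : ℕ) :
    ∑ r ∈ (Finset.Icc 1 N).filter Nat.Prime, (1 : ℝ) / (r : ℝ) ^ 2 ≤ 35 / 72 := by
  have hsub : (Finset.Icc 1 N).filter Nat.Prime ⊆
      {2, 3} ∪ (Finset.Icc 2 N).image fun j => 2 * j + 1 := by
    intro r hr
    obtain ⟨hr1, hr2⟩ := Finset.mem_filter.1 hr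
    have hr3 := Finset.mem_Icc.1 hr1
    rcases hr2.eq_two_or_odd with h | h
    · simp [h]
    · rw [Finset.mem_union, Finset.mem_image]
      by_cases h3 : r = 3
      · simp [h3]
      · have := hr2.two_le
        exact Or.inr ⟨r / 2, Finset.mem_Icc.2 ⟨by omega, by omega⟩, by omega⟩
  have h1 : ∑ r ∈ (Finset.Icc 2 N).image (fun j : ℕ => 2 * j + 1), (1 : ℝ) / (r : ℝ) ^ 2 ≤ 1 / 8 := by
    rw [Finset.sum_image fun a _ b _ (h : 2 * a + 1 = 2 * b + 1) => by omega]
    exact sum_inv_sq_odd_le N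
  have h2 : ∑ r ∈ ({2, 3} : Finset ℕ), (1 : ℝ) / (r : ℝ) ^ 2 = 13 / 36 := by
    rw [Finset.sum_pair (by norm_num)]
    norm_num
  have h3 : Disjoint ({2, 3} : Finset ℕ) ((Finset.Icc 2 N).image fun j => 2 * j + 1) := by
    rw [Finset.disjoint_left]
    intro r hr hr'
    obtain ⟨j, hj, rfl⟩ := Finset.mem_image.1 hr'
    have := (Finset.mem_Icc.1 hj).1
    simp only [Finset.mem_insert, Finset.mem_singleton] at hr
    omega
  calc _ ≤ ∑ r ∈ ({2, 3} ∪ (Finset.Icc 2 N).image (fun j : ℕ => 2 * j + 1) : Finset ℕ), (1 : ℝ) / (r : ℝ) ^ 2 :=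
        Finset.sum_le_sum_of_subset_of_nonneg hsub fun _ _ _ => by positivity
    _ ≤ 35 / 72 := by
        rw [Finset.sum_union h3]
        linarith

theorem totient_ge (d : ℕ) :
    (d : ℝ) * (1 - ∑ r ∈ d.primeFactors, (1 : ℝ) / r) ≤ (d.totient : ℝ) := by
  have h := Nat.totient_eq_mul_prod_factors d
  have h' : (d.totient : ℝ) = d * ∏ r ∈ d.primeFactors, (1 - (1 : ℝ) / r) := by
    have := congrArg (fun x : ℚ => (x : ℝ)) h
    push_cast at this
    simpa using this
  rw [h']
  refine mul_le_mul_of_nonneg_left (one_sub_sum_le_prod_one_sub _ ?_ ?_) (Nat.cast_nonneg d)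
  · intros; positivity
  · intro r hr
    have : (1 : ℝ) ≤ r := by exact_mod_cast (Nat.prime_of_mem_primeFactors hr).one_lt.le
    rw [div_le_one (by linarith)]
    exact this

theorem sum_multiples_le {X : ℝ} {r : ℕ} (hr : 0 < r) :
    ∑ d ∈ (Finset.Icc 1 ⌊X⌋₊).filter (r ∣ ·), (X - d) * (1 / r) ≤ X ^ 2 / 2 * (1 / (r : ℝ) ^ 2) := by
  have h : (Finset.Icc 1 ⌊X⌋₊).filter (r ∣ ·) = (Finset.Icc 1 (⌊X⌋₊ / r)).image (r * ·) := by
    ext d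
    simp only [Finset.mem_filter, Finset.mem_Icc, Finset.mem_image]
    constructor
    · rintro ⟨⟨h1, h2⟩, k, rfl⟩
      refine ⟨k, ⟨Nat.pos_of_ne_zero ?_, (Nat.le_div_iff_mul_le hr).2 (by linarith)⟩, rfl⟩
      rintro rfl
      simp at h1
    · rintro ⟨k, ⟨h1, h2⟩, rfl⟩
      refine ⟨⟨Nat.mul_pos hr h1, ?_⟩, dvd_mul_right _ _⟩
      have := (Nat.le_div_iff_mul_le hr).1 h2
      linarith
  have hr' : (r : ℝ) ≠ 0 := by exact_mod_cast hr.ne'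
  rw [h, Finset.sum_image fun a _ b _ h => Nat.eq_of_mul_eq_mul_left hr h,
    ← Nat.floor_div_natCast]
  calc _ = ∑ k ∈ Finset.Icc 1 ⌊X / r⌋₊, (X / r - k) := by
        refine Finset.sum_congr rfl fun k _ => ?_
        push_cast
        field_simp
    _ ≤ (X / r) ^ 2 / 2 := sum_Icc_floor_sub_le
    _ = _ := by field_simp

theorem le_fareyWeight {X : ℝ} (hX : 0 ≤ X) : 37 / 144 * X ^ 2 - X / 2 ≤ fareyWeight X := by
  have h1 : ∑ d ∈ Finset.Icc 1 ⌊X⌋₊, ((X - d) - ∑ r ∈ d.primeFactors, (X - d) * (1 / r))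
      ≤ fareyWeight X := by
    refine Finset.sum_le_sum fun d hd => ?_
    obtain ⟨hd1, hd2⟩ := Finset.mem_Icc.1 hd
    have hd0 : (0 : ℝ) < d := by exact_mod_cast hd1
    have hdX : (d : ℝ) ≤ X := (Nat.le_floor_iff hX).1 hd2
    have h2 : 0 ≤ X / d - 1 := by
      rw [sub_nonneg, le_div_iff₀ hd0]
      linarith
    refine le_trans (le_of_eq ?_) (mul_le_mul_of_nonneg_right (totient_ge d) h2)
    rw [← Finset.mul_sum]
    field_simp
  have h2 : ∑ d ∈ Finset.Icc 1 ⌊X⌋₊, ∑ r ∈ d.primeFactors, (X - d) * (1 / (r : ℝ))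
      = ∑ r ∈ (Finset.Icc 1 ⌊X⌋₊).filter Nat.Prime,
        ∑ d ∈ (Finset.Icc 1 ⌊X⌋₊).filter (r ∣ ·), (X - d) * (1 / (r : ℝ)) := by
    refine Finset.sum_comm' fun d r => ?_
    simp only [Finset.mem_filter, Finset.mem_Icc, Nat.mem_primeFactors]
    constructor
    · rintro ⟨⟨h1, h2⟩, h3, h4, h5⟩
      exact ⟨⟨⟨h1, h2⟩, h4⟩, ⟨h3.one_lt.le, (Nat.le_of_dvd h1 h4).trans h2⟩, h3⟩
    · rintro ⟨⟨⟨h1, h2⟩, h4⟩, h5, h3⟩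
      exact ⟨⟨h1, h2⟩, h3, h4, by omega⟩
  have h3 : ∑ r ∈ (Finset.Icc 1 ⌊X⌋₊).filter Nat.Prime,
      ∑ d ∈ (Finset.Icc 1 ⌊X⌋₊).filter (r ∣ ·), (X - d) * (1 / (r : ℝ)) ≤ X ^ 2 / 2 * (35 / 72) := by
    calc _ ≤ ∑ r ∈ (Finset.Icc 1 ⌊X⌋₊).filter Nat.Prime, X ^ 2 / 2 * (1 / (r : ℝ) ^ 2) :=
          Finset.sum_le_sum fun r hr => sum_multiples_le (Finset.mem_filter.1 hr).2.pos
      _ ≤ _ := by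
          rw [← Finset.mul_sum]
          exact mul_le_mul_of_nonneg_left (sum_inv_sq_primes_le _) (by positivity)
  rw [Finset.sum_sub_distrib, h2] at h1
  linarith [le_sum_Icc_floor_sub hX]

theorem exists_prime_index_of_ne_one {p : ℕ} [Fact p.Prime] {χ : DirichletCharacter ℂ p}
    (hχ : χ ≠ 1) :
    ∃ ℓ g : ℕ, ℓ.Prime ∧ ℓ * g + 1 = p ∧ ∀ v : ZMod p, χ v = 1 → v ^ g = 1 := by
  have hp : p.Prime := Fact.out
  obtain ⟨γ, hγ⟩ := IsCyclic.exists_monoid_generator (α := (ZMod p)ˣ)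
  set a := MulChar.toUnitHom χ γ with ha
  have ha1 : a ≠ 1 := by
    intro h
    refine hχ (MulChar.ext fun x => ?_)
    obtain ⟨j, rfl⟩ := Submonoid.mem_powers_iff _ _ |>.1 (hγ x)
    rw [MulChar.one_apply_coe, ← MulChar.coe_toUnitHom, map_pow, ← ha, h]
    simp
  have hcard : γ ^ (p - 1) = 1 := ZMod.units_pow_card_sub_one_eq_one p γ
  have hk : orderOf a ∣ p - 1 := by
    rw [orderOf_dvd_iff_pow_eq_one, ha, ← map_pow, hcard, map_one]
  have hk1 : orderOf a ≠ 1 := by rwa [Ne, orderOf_eq_one_iff]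
  obtain ⟨g, hg⟩ := (Nat.minFac_dvd (orderOf a)).trans hk
  refine ⟨_, g, Nat.minFac_prime hk1, by have := hp.one_lt; omega, fun v hv => ?_⟩
  have hv0 : v ≠ 0 := by
    rintro rfl
    rw [MulChar.map_zero] at hv
    exact zero_ne_one hv
  obtain ⟨j, hj⟩ := Submonoid.mem_powers_iff _ _ |>.1 (hγ (Units.mk0 v hv0))
  have h1 : a ^ j = 1 := by
    rw [ha, ← map_pow, hj]
    ext
    rw [MulChar.coe_toUnitHom]
    simpa using hv
  obtain ⟨i, rfl⟩ := (Nat.minFac_dvd _).trans (orderOf_dvd_of_pow_eq_one h1)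
  have h2 : (Units.mk0 v hv0) ^ g = 1 := by
    rw [← hj, ← pow_mul, mul_right_comm, ← hg, pow_mul, hcard, one_pow]
  simpa using congrArg Units.val h2

theorem half_le_div_succ {n : ℕ} (hn : 0 < n) : (1 : ℝ) / 2 ≤ n / (n + 1) := by
  have : (1 : ℝ) ≤ n := by exact_mod_cast hn
  rw [div_le_div_iff₀ (by norm_num) (by positivity)]
  linarith

theorem log_le_of_ge {X : ℝ} (hX : 3.8 ≤ X) : Real.log X ≤ 1.336 + (X - 3.8) := by
  have h1 : Real.log 3.8 ≤ 1.336 := by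
    rw [Real.log_le_iff_le_exp (by norm_num)]
    have h2 : Real.exp 1.336 = Real.exp 1 * Real.exp 0.336 := by
      rw [← Real.exp_add]
      norm_num
    have h3 := Real.sum_le_exp_of_nonneg (show (0 : ℝ) ≤ 0.336 by norm_num) 5
    norm_num [Finset.sum_range_succ, Nat.factorial] at h3
    have h4 := Real.exp_one_gt_d9
    norm_num at h2 h4 ⊢
    rw [h2]
    nlinarith
  have h2 : Real.log X = Real.log 3.8 + Real.log (X / 3.8) := by
    rw [← Real.log_mul (by norm_num) (by positivity)]
    congr 1
    field_simp
  have h3 := Real.log_le_sub_one_of_pos (show 0 < X / 3.8 by positivity)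
  have h4 : X / 3.8 - 1 ≤ X - 3.8 := by
    rw [sub_le_iff_le_add, div_le_iff₀ (by norm_num)]
    linarith
  linarith

theorem le_gconst {n : ℕ} {p : ℝ} (hn : 0 < n) (hp : 2 * 10 ^ 6 ≤ p) (hX : 3.8 < Xstar n p) :
    π / 3 * √(2 * Real.exp 1) * (n / (n + 1)) ≤ gconst n p := by
  have hL := log_ge_of_two_million_le hp
  have hn2 := half_le_div_succ hn
  set X := Xstar n p
  rw [gconst]
  refine le_mul_of_one_le_right (by positivity) (Real.one_le_rpow ?_ (by norm_num))
  have hlog := log_le_of_ge hX.le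
  have hlog0 : 0 ≤ Real.log X := Real.log_nonneg (by linarith)
  have hpi : π ^ 2 / 9 ≤ 1.09663 := by nlinarith [Real.pi_lt_d6, Real.pi_gt_three]
  have hX0 : 0 < X := by linarith
  have h1 : π ^ 2 / 9 * (Real.log X + 9) / (3 * X) < 1 := by
    rw [div_lt_one (by positivity)]
    have : π ^ 2 / 9 * (Real.log X + 9) ≤ 1.09663 * (1.336 + (X - 3.8) + 9) := by gcongr
    linarith
  have h2 : 0 ≤ π ^ 2 / 9 * (Real.log X + 9) / (3 * X) := by positivity
  have h3 : 0 ≤ √2 / (2 * ((n : ℝ) / (2 * ((n : ℝ) + 1))) * Real.log p - 3) := by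
    refine div_nonneg (by positivity) ?_
    have : 2 * ((n : ℝ) / (2 * ((n : ℝ) + 1))) = n / (n + 1) := by field_simp
    rw [this]
    nlinarith
  rw [le_div_iff₀ (by linarith)]
  linarith

theorem succ_div_pow_le {n : ℕ} (hn : 0 < n) :
    (((n : ℝ) + 1) / n) ^ (n - 1) ≤ Real.exp 1 * (n / (n + 1)) := by
  have hn0 : (0 : ℝ) < n := by exact_mod_cast hn
  have h1 : (((n : ℝ) + 1) / n) ^ n ≤ Real.exp 1 := by
    have h2 : ((n : ℝ) + 1) / n ≤ Real.exp (1 / n) := by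
      have := Real.add_one_le_exp (1 / (n : ℝ))
      refine le_trans (le_of_eq ?_) this
      field_simp
      ring
    calc (((n : ℝ) + 1) / n) ^ n ≤ Real.exp (1 / n) ^ n := by gcongr
      _ = Real.exp 1 := by
        rw [← Real.exp_nat_mul]
        congr 1
        field_simp
  have h2 : (((n : ℝ) + 1) / n) ^ n = (((n : ℝ) + 1) / n) ^ (n - 1) * (((n : ℝ) + 1) / n) := by
    rw [← pow_succ, Nat.sub_add_cancel hn]
  rw [h2] at h1
  rw [← le_div_iff₀ (by positivity)] at h1
  refine h1.trans (le_of_eq ?_)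
  field_simp

theorem rpow_quarter_div_log_mono {a : ℝ} {x y : ℝ} (ha : 0 ≤ a) (hx : 1 < x) (hxy : x ≤ y)
    (hax : 2 * a ≤ Real.log x) :
    x ^ ((1 : ℝ) / 4) / Real.log x ^ (a / 2) ≤ y ^ ((1 : ℝ) / 4) / Real.log y ^ (a / 2) := by
  have hLx : 0 < Real.log x := Real.log_pos hx
  have hLxy : Real.log x ≤ Real.log y := Real.log_le_log (by linarith) hxy
  have hLy : 0 < Real.log y := by linarith
  rw [div_le_div_iff₀ (by positivity) (by positivity)]
  rw [Real.rpow_def_of_pos (by linarith : 0 < x), Real.rpow_def_of_pos (by linarith : 0 < y),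
    Real.rpow_def_of_pos hLx, Real.rpow_def_of_pos hLy, ← Real.exp_add, ← Real.exp_add,
    Real.exp_le_exp]
  have h1 := Real.log_le_sub_one_of_pos (show 0 < Real.log y / Real.log x by positivity)
  rw [Real.log_div hLy.ne' hLx.ne'] at h1
  have h2 : (Real.log y / Real.log x - 1) * Real.log x = Real.log y - Real.log x := by
    field_simp
  have h3 : 0 ≤ Real.log y / Real.log x - 1 := by
    rw [sub_nonneg, le_div_iff₀ hLx]
    linarith
  nlinarith [mul_le_mul_of_nonneg_left h1 ha, mul_le_mul_of_nonneg_right hax h3]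

theorem le_rpow_quarter {n : ℕ} {p₀ p : ℝ} (hn : 0 < n) (hp₀ : 2 * 10 ^ 6 ≤ p₀)
    (hexp : Real.exp (8 * ((n : ℝ) - 1)) < p₀) (hX : 3.8 < Xstar n p₀) (hp : p₀ ≤ p) :
    3.8 * (3 / π) * √(2 * Real.exp 1) / Real.exp 1 * ((n + 1) / n)
      * Real.log p ^ (((n : ℝ) - 1) / 2) ≤ p ^ ((1 : ℝ) / 4) := by
  have hn1 : (1 : ℝ) ≤ n := by exact_mod_cast hn
  have hL₀ := log_ge_of_two_million_le hp₀
  have hL := log_ge_of_two_million_le (hp₀.trans hp)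
  have hL8 : 8 * ((n : ℝ) - 1) ≤ Real.log p₀ := by
    rw [Real.le_log_iff_exp_le (by linarith)]
    exact hexp.le
  have hp₀0 : 0 < p₀ := by linarith
  have hL₀0 : 0 < Real.log p₀ := by linarith
  have hp0 : 0 < p := by linarith
  have hL0 : 0 < Real.log p := by linarith
  set a : ℝ := (n : ℝ) - 1 with ha
  have ha0 : 0 ≤ a := by linarith
  have hmono := rpow_quarter_div_log_mono ha0 (by linarith : 1 < p₀) hp (by linarith)
  have h1 : 3.8 < π / 3 * (2 * Real.exp 1) ^ (-(1 : ℝ) / 2) * (((n : ℝ) + 1) / (n : ℝ)) ^ (n - 1) *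
      (p₀ ^ ((1 : ℝ) / 4) / Real.log p₀ ^ (a / 2)) := by
    refine hX.trans_le ?_
    rw [Xstar, ← ha, mul_div_assoc]
    refine mul_le_of_le_one_right (by positivity) (sub_le_self _ (by positivity))
  set Q := p ^ ((1 : ℝ) / 4) / Real.log p ^ (a / 2) with hQ
  have hQ0 : 0 ≤ Q := by positivity
  have hs : (2 * Real.exp 1) ^ (-(1 : ℝ) / 2) = 1 / √(2 * Real.exp 1) := by
    rw [neg_div, Real.rpow_neg (by positivity), ← Real.sqrt_eq_rpow, one_div]
  have h2 : 3.8 ≤ π / 3 * (1 / √(2 * Real.exp 1)) * (Real.exp 1 * (n / (n + 1))) * Q := by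
    refine h1.le.trans ?_
    rw [hs]
    gcongr
    exact succ_div_pow_le hn
  have hLp : 0 < Real.log p ^ (a / 2) := by positivity
  rw [← le_div_iff₀ hLp, ← hQ]
  have hpi := Real.pi_pos
  have h3 : π / 3 * (1 / √(2 * Real.exp 1)) * (Real.exp 1 * (n / (n + 1))) * Q
    * ((3 / π) * √(2 * Real.exp 1) / Real.exp 1 * ((n + 1) / n)) = Q := by
    field_simp
  rw [← h3]
  calc _ = 3.8 * ((3 / π) * √(2 * Real.exp 1) / Real.exp 1 * ((n + 1) / n)) := by ring
    _ ≤ _ := by gcongr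

theorem log_rpow_half {L : ℝ} (hL : 0 ≤ L) (k : ℕ) : L ^ ((k : ℝ) / 2) = √L ^ k := by
  rw [Real.sqrt_eq_rpow, ← Real.rpow_natCast, ← Real.rpow_mul hL]
  congr 1
  ring

theorem size_bounds {n₀ n : ℕ} {p₀ p : ℝ} (hn : 1 ≤ n) (hnn : n ≤ n₀) (hp₀ : 2 * 10 ^ 6 ≤ p₀)
    (hexp : Real.exp (8 * ((n₀ : ℝ) - 1)) < p₀) (hX : 3.8 < Xstar n₀ p₀) (hp : p₀ ≤ p) {Y : ℝ}
    (hY : Y = gconst n₀ p₀ * p ^ ((1 : ℝ) / 4) * Real.log p ^ (((n : ℝ) + 1) / 2)) :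
    5.96 * (n / (n + 1)) ^ 2 * √p * Real.log p ^ (n + 1) ≤ Y ^ 2 ∧
    7.6 * Real.log p ^ n ≤ Y ∧ (n = 1 → 45.8 * Real.log p ≤ Y) ∧
    9.68 * ((n + 1) / n) ^ 2 * Real.log p ^ (n - 1) ≤ √p ∧
    8 * ((n : ℝ) - 1) < Real.log p := by
  have hn0 : 0 < n₀ := by omega
  have hp2 : 2 * 10 ^ 6 ≤ p := hp₀.trans hp
  have hL := log_ge_of_two_million_le hp2
  have hC := le_gconst hn0 hp₀ hX
  have hP := le_rpow_quarter hn0 hp₀ hexp hX hp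
  set L := Real.log p
  have hL0 : 0 ≤ L := by linarith
  set C := gconst n₀ p₀
  set P := p ^ ((1 : ℝ) / 4) with hPdef
  have hP0 : 0 < P := by positivity
  have hPP : P ^ 2 = √p := by
    rw [hPdef, ← Real.rpow_natCast, ← Real.rpow_mul (by linarith), Real.sqrt_eq_rpow]
    norm_num
  set W := √L with hW
  have hWL : W ^ 2 = L := Real.sq_sqrt hL0
  have hW1 : 1 ≤ W := by
    rw [hW, Real.one_le_sqrt]
    linarith
  have e1 : L ^ (((n : ℝ) + 1) / 2) = W ^ (n + 1) := by
    rw [← log_rpow_half hL0]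
    push_cast
    rfl
  have e2 : L ^ (((n₀ : ℝ) - 1) / 2) = W ^ (n₀ - 1) := by
    rw [← log_rpow_half hL0]
    push_cast [Nat.cast_sub hn0]
    rfl
  rw [e2] at hP
  rw [e1] at hY
  set S := √(2 * Real.exp 1) with hS
  have hS2 : S ^ 2 = 2 * Real.exp 1 := Real.sq_sqrt (by positivity)
  have hS0 : 0 < S := by positivity
  have hn1' : (1 : ℝ) ≤ n := by exact_mod_cast hn
  have hnn' : (n : ℝ) ≤ n₀ := by exact_mod_cast hnn
  have hfrac : (n : ℝ) / (n + 1) ≤ n₀ / (n₀ + 1) := by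
    rw [div_le_div_iff₀ (by positivity) (by positivity)]
    nlinarith
  have hpi0 := Real.pi_pos
  have hpi1 := Real.pi_gt_d6
  have hpi2 := Real.pi_lt_d6
  have he1 := Real.exp_one_gt_d9
  have he2 := Real.exp_one_lt_d9
  have hC0 : 0 < C := lt_of_lt_of_le (by positivity) hC
  have hpS : 5.96 ≤ (π / 3 * S) ^ 2 := by
    rw [mul_pow, hS2]
    have : (3.141592 / 3 : ℝ) ^ 2 * (2 * 2.718) ≤ (π / 3) ^ 2 * (2 * Real.exp 1) := by
      gcongr
      linarith
    norm_num at this ⊢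
    linarith
  have hpS' : 2.44 ≤ π / 3 * S := by
    refine le_of_sq_le_sq ?_ (by positivity)
    refine le_trans ?_ hpS
    norm_num
  refine ⟨?_, ?_, ?_, ?_, ?_⟩
  · have h1 : 5.96 * ((n : ℝ) / (n + 1)) ^ 2 ≤ C ^ 2 := by
      calc 5.96 * ((n : ℝ) / (n + 1)) ^ 2 ≤ (π / 3 * S) ^ 2 * (n₀ / (n₀ + 1)) ^ 2 := by gcongr
        _ = (π / 3 * S * (n₀ / (n₀ + 1))) ^ 2 := by ring
        _ ≤ C ^ 2 := by gcongr
    calc _ ≤ C ^ 2 * √p * L ^ (n + 1) := by gcongr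
      _ = Y ^ 2 := by
        rw [hY, ← hPP, ← hWL]
        ring
  · calc 7.6 * L ^ n = 7.6 * W ^ (n - 1) * W ^ (n + 1) := by
          rw [← hWL, ← pow_mul, mul_assoc, ← pow_add]
          congr 2
          omega
      _ ≤ 7.6 * W ^ (n₀ - 1) * W ^ (n + 1) := by gcongr
      _ = (π / 3 * S * (n₀ / (n₀ + 1))) * (3.8 * (3 / π) * S / Real.exp 1 * ((n₀ + 1) / n₀)
          * W ^ (n₀ - 1)) * W ^ (n + 1) := by
          have : (n₀ : ℝ) ≠ 0 := by positivity
          field_simp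
          rw [hS2]
          ring
      _ ≤ C * P * W ^ (n + 1) := by gcongr
      _ = Y := hY.symm
  · rintro rfl
    have h1 : 37.6 ≤ P := by
      have : ((37.6 : ℝ) ^ (4 : ℝ)) ^ ((1 : ℝ) / 4) ≤ P := by
        rw [hPdef]
        refine Real.rpow_le_rpow (by positivity) ?_ (by norm_num)
        norm_num at hp2 ⊢
        linarith
      rw [← Real.rpow_mul (by norm_num)] at this
      norm_num at this ⊢
      exact this
    have h2 : 1.22 ≤ C := by
      have h3 := half_le_div_succ hn0
      have : 2.44 * (1 / 2) ≤ π / 3 * S * (n₀ / (n₀ + 1)) := by gcongr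
      norm_num at this ⊢
      linarith
    calc 45.8 * L ≤ 1.22 * 37.6 * L := by gcongr; norm_num
      _ ≤ C * P * L := by gcongr
      _ = Y := by rw [hY, ← hWL]
  · have h1 : 9.68 ≤ (3.8 * (3 / π) * S / Real.exp 1) ^ 2 := by
      have : (3.8 * (3 / π) * S / Real.exp 1) ^ 2 = 259.92 / (π ^ 2 * Real.exp 1) := by
        rw [div_pow, mul_pow, hS2]
        field_simp
        norm_num
      rw [this, le_div_iff₀ (by positivity)]
      have : π ^ 2 * Real.exp 1 ≤ 3.141593 ^ 2 * 2.7182818286 := by gcongr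
      norm_num at this ⊢
      linarith
    have h2 : (((n : ℝ) + 1) / n) ^ 2 * L ^ (n - 1) ≤ ((n₀ + 1) / n₀) ^ 2 * L ^ (n₀ - 1) := by
      rcases hnn.eq_or_lt with rfl | hlt
      · rfl
      · have h3 : ((n : ℝ) + 1) / n ≤ 2 := by
          rw [div_le_iff₀ (by linarith)]
          linarith
        have h4 : 1 ≤ ((n₀ : ℝ) + 1) / n₀ := by
          rw [le_div_iff₀ (by linarith)]
          linarith
        have h5 : L ^ (n - 1) * 14.5 ≤ L ^ (n₀ - 1) := by
          calc L ^ (n - 1) * 14.5 ≤ L ^ (n - 1) * L := by gcongr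
            _ = L ^ n := by rw [← pow_succ, Nat.sub_add_cancel hn]
            _ ≤ L ^ (n₀ - 1) := pow_le_pow_right₀ (by linarith) (by omega)
        have h6 : 0 ≤ L ^ (n - 1) := by positivity
        calc (((n : ℝ) + 1) / n) ^ 2 * L ^ (n - 1) ≤ 2 ^ 2 * L ^ (n - 1) := by gcongr
          _ ≤ 1 ^ 2 * L ^ (n₀ - 1) := by linarith
          _ ≤ _ := by gcongr
    calc _ ≤ 9.68 * (((n₀ + 1) / n₀) ^ 2 * L ^ (n₀ - 1)) := by rw [mul_assoc]; gcongr
      _ ≤ (3.8 * (3 / π) * S / Real.exp 1) ^ 2 * (((n₀ + 1) / n₀) ^ 2 * L ^ (n₀ - 1)) := by gcongr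
      _ = (3.8 * (3 / π) * S / Real.exp 1 * ((n₀ + 1) / n₀) * W ^ (n₀ - 1)) ^ 2 := by
        rw [← hWL]
        ring
      _ ≤ P ^ 2 := by gcongr
      _ = √p := hPP
  · have h1 : 8 * ((n₀ : ℝ) - 1) < L := by
      rw [Real.lt_log_iff_exp_lt (by linarith)]
      exact hexp.trans_le hp
    linarith

theorem succ_mul_choose_le {h k : ℕ} (hk : 1 ≤ k) :
    (h + 1) * h.choose k ≤ h * (h + 1).choose k := by
  rw [mul_comm (h + 1), Nat.choose_mul_succ_eq, mul_comm h]
  exact Nat.mul_le_mul_left _ (by omega)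

theorem choose_le_pow_mul_exp (H k : ℕ) : (H.choose k : ℝ) ≤ 8 ^ k * Real.exp (H / 8) := by
  rcases lt_or_ge H k with h | h
  · rw [Nat.choose_eq_zero_of_lt h, Nat.cast_zero]
    positivity
  · have h1 : (1 / 8 : ℝ) ^ k * 1 ^ (H - k) * H.choose k ≤ (1 / 8 + 1) ^ H := by
      rw [add_pow]
      exact Finset.single_le_sum (f := fun m => (1 / 8 : ℝ) ^ m * 1 ^ (H - m) * H.choose m)
        (fun _ _ => by positivity) (Finset.mem_range.2 (by omega))
    have h2 : (1 / 8 + 1 : ℝ) ^ H ≤ Real.exp (H / 8) := by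
      calc (1 / 8 + 1 : ℝ) ^ H ≤ Real.exp (1 / 8) ^ H := by
            gcongr
            exact Real.add_one_le_exp _
        _ = _ := by rw [← Real.exp_nat_mul]; ring_nf
    have h3 : (H.choose k : ℝ) = 8 ^ k * ((1 / 8 : ℝ) ^ k * 1 ^ (H - k) * H.choose k) := by
      rw [one_pow, mul_one, ← mul_assoc, ← mul_pow]
      norm_num
    rw [h3]
    gcongr
    exact h1.trans h2

theorem exp_add_ge {a c t : ℝ} (hc : a ≤ Real.exp c) (ht : 0 ≤ t) :
    a * (1 + t + t ^ 2 / 2 + t ^ 3 / 6 + t ^ 4 / 24 + t ^ 5 / 120) ≤ Real.exp (c + t) := by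
  rw [Real.exp_add]
  have h := Real.sum_le_exp_of_nonneg ht 6
  norm_num [Finset.sum_range_succ, Nat.factorial] at h
  exact mul_le_mul hc (by linarith) (by positivity) (Real.exp_pos c).le

theorem pow_le_exp_natCast (c : ℕ) : (2.718 : ℝ) ^ c ≤ Real.exp c := by
  rw [← Real.exp_one_pow]
  gcongr
  linarith [Real.exp_one_gt_d9]

theorem exp_dominates_of_five_le {L m : ℝ} (hL : 40 ≤ L) (hm : 8 * m ≤ L) :
    Real.exp (3 * Real.log 2 * m + (0.7214 * L + 3 + m) / 8) * (0.7214 * L + 1.51)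
      < 0.47 * Real.exp (L / 2) := by
  have hlog := Real.log_two_lt_d9
  have hlog0 := Real.log_two_gt_d9
  have h1 : 3 * Real.log 2 * m + (0.7214 * L + 3 + m) / 8 ≤ 0.36576 * L + 0.375 := by
    rcases le_total m 0 with h | h
    · nlinarith
    · have : 3 * Real.log 2 * m ≤ 3 * 0.69315 * m := by gcongr; linarith
      linarith
  have h2 : Real.exp (L / 2) = Real.exp (0.36576 * L + 0.375) * Real.exp (0.13424 * L - 0.375) := by
    rw [← Real.exp_add]
    ring_nf
  have h3 := exp_add_ge (c := (4 : ℕ)) (t := 0.13424 * L - 4.375) (pow_le_exp_natCast 4)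
    (by linarith)
  rw [show (((4 : ℕ) : ℝ)) + (0.13424 * L - 4.375) = 0.13424 * L - 0.375 by push_cast; ring] at h3
  have h4 : (0.7214 * L + 1.51) < 0.47 * Real.exp (0.13424 * L - 0.375) := by
    set t := 0.13424 * L - 4.375 with ht
    have ht0 : 0 ≤ t := by linarith
    have : 2.718 ^ 4 * (1 + t) ≤ Real.exp (0.13424 * L - 0.375) := by
      refine le_trans ?_ h3
      have : 0 ≤ t ^ 2 / 2 + t ^ 3 / 6 + t ^ 4 / 24 + t ^ 5 / 120 := by positivity
      exact mul_le_mul_of_nonneg_left (by linarith) (by positivity)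
    norm_num at this ⊢
    linarith
  calc _ ≤ Real.exp (0.36576 * L + 0.375) * (0.7214 * L + 1.51) := by gcongr
    _ < Real.exp (0.36576 * L + 0.375) * (0.47 * Real.exp (0.13424 * L - 0.375)) := by gcongr
    _ = _ := by rw [h2]; ring

theorem taylor_le_exp_half (c : ℕ) {t : ℝ} (ht : 0 ≤ t) :
    2.718 ^ c * (1 + t + t ^ 2 / 2 + t ^ 3 / 6 + t ^ 4 / 24 + t ^ 5 / 120)
      ≤ Real.exp ((2 * t + 2 * c) / 2) := by
  rw [show (2 * t + 2 * (c : ℝ)) / 2 = c + t by ring]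
  exact exp_add_ge (pow_le_exp_natCast c) ht

theorem linear_lt_exp_half {L : ℝ} (hL : 14.5 ≤ L) :
    (0.7214 * L + 4) * (0.7214 * L + 1.51) < 0.47 * Real.exp (L / 2) := by
  obtain ⟨t, rfl⟩ : ∃ t, L = 2 * t + 2 * (7 : ℕ) := ⟨L / 2 - 7, by push_cast; ring⟩
  have ht : 0 ≤ t := by
    push_cast at hL
    linarith
  have h := taylor_le_exp_half 7 ht
  have h2 := pow_nonneg ht 2
  have h3 := pow_nonneg ht 3
  have h4 := pow_nonneg ht 4
  have h5 := pow_nonneg ht 5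
  norm_num at h ⊢
  nlinarith

theorem quadratic_lt_exp_half {L : ℝ} (hL : 20 ≤ L) :
    (0.7214 * L + 5) * (0.7214 * L + 4) / 2 * (0.7214 * L + 1.51) < 0.47 * Real.exp (L / 2) := by
  obtain ⟨t, rfl⟩ : ∃ t, L = 2 * t + 2 * (10 : ℕ) := ⟨L / 2 - 10, by push_cast; ring⟩
  have ht : 0 ≤ t := by
    push_cast at hL
    linarith
  have h := taylor_le_exp_half 10 ht
  have h2 := pow_nonneg ht 2
  have h3 := pow_nonneg ht 3
  have h4 := pow_nonneg ht 4
  have h5 := pow_nonneg ht 5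
  norm_num at h ⊢
  nlinarith

theorem cubic_lt_exp_half {L : ℝ} (hL : 24 ≤ L) :
    (0.7214 * L + 6) ^ 3 / 6 * (0.7214 * L + 1.51) < 0.47 * Real.exp (L / 2) := by
  obtain ⟨t, rfl⟩ : ∃ t, L = 2 * t + 2 * (12 : ℕ) := ⟨L / 2 - 12, by push_cast; ring⟩
  have ht : 0 ≤ t := by
    push_cast at hL
    linarith
  have h := taylor_le_exp_half 12 ht
  have h2 := pow_nonneg ht 2
  have h3 := pow_nonneg ht 3
  have h4 := pow_nonneg ht 4
  have h5 := pow_nonneg ht 5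
  norm_num at h ⊢
  nlinarith

theorem quartic_lt_exp_half {L : ℝ} (hL : 32 ≤ L) :
    (0.7214 * L + 7) ^ 4 / 24 * (0.7214 * L + 1.51) < 0.47 * Real.exp (L / 2) := by
  obtain ⟨t, rfl⟩ : ∃ t, L = 2 * t + 2 * (16 : ℕ) := ⟨L / 2 - 16, by push_cast; ring⟩
  have ht : 0 ≤ t := by
    push_cast at hL
    linarith
  have h := taylor_le_exp_half 16 ht
  have h2 := pow_nonneg ht 2
  have h3 := pow_nonneg ht 3
  have h4 := pow_nonneg ht 4
  have h5 := pow_nonneg ht 5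
  norm_num at h ⊢
  nlinarith

theorem two_pow_mul_le_of_small {m k j : ℕ} {L H : ℝ} (hkj : k + j = m) (hm : 3 ≤ m) (hm4 : m ≤ 4)
    (hL : 8 * (m : ℝ) < L) (hH0 : 0 ≤ H) (hH : H ≤ 0.7214 * L + 3 + j) :
    (2 : ℝ) ^ k * (H ^ j / j.factorial) ≤ (0.7214 * L + 3 + m) ^ m / m.factorial := by
  have h1 : H ≤ 0.7214 * L + 3 + m := by
    have : (j : ℝ) ≤ m := by exact_mod_cast (by omega : j ≤ m)
    linarith
  have h2 : (20 : ℝ) ≤ 0.7214 * L + 3 + m := by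
    have : (3 : ℝ) ≤ m := by exact_mod_cast hm
    linarith
  set Z := 0.7214 * L + 3 + m
  have h3 : H ^ j ≤ Z ^ j := by gcongr
  have h4 : (2 : ℝ) ^ k * (H ^ j / j.factorial) ≤ 2 ^ k * (Z ^ j / j.factorial) := by gcongr
  refine h4.trans ?_
  have z2 : 20 * Z ≤ Z ^ 2 := by nlinarith
  have z3 : 20 * Z ^ 2 ≤ Z ^ 3 := by nlinarith
  have z4 : 20 * Z ^ 3 ≤ Z ^ 4 := by nlinarith [pow_pos (by linarith : 0 < Z) 3]
  have hj : j ≤ m := by omega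
  obtain rfl : k = m - j := by omega
  interval_cases m <;> interval_cases j <;> norm_num [Nat.factorial] <;> nlinarith

/-- The estimate behind the second of the two choices of the Farey height. -/
theorem choose_weight_lt {m k j s : ℕ} {L R : ℝ} (hkj : k + j = m) (hs : 1 ≤ s)
    (hsL : (s : ℝ) ≤ 0.7214 * L + 1) (hL : 14.5 ≤ L) (hmL : 8 * (m : ℝ) < L)
    (hR : Real.exp (L / 2) ≤ R) (hR2 : m = 2 → 17.2 * L ^ 2 ≤ R) :
    ((s + 1 + j : ℕ) + 1 : ℝ) * (2 ^ k * (s + 1 + j).choose j) * (0.7214 * L + 1.51)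
      < 0.47 * R * (s + 1 + j : ℕ) := by
  set h := s + 1 + j with hh
  have hh0 : (0 : ℝ) < (h : ℕ) := by exact_mod_cast (by omega : 0 < h)
  have hν : 0 < 0.7214 * L + 1.51 := by linarith
  suffices H : ∃ M : ℝ, (h + 1 : ℝ) * (2 ^ k * h.choose j) ≤ h * M ∧
      M * (0.7214 * L + 1.51) < 0.47 * R by
    obtain ⟨M, h1, h2⟩ := H
    calc _ ≤ h * M * (0.7214 * L + 1.51) := by gcongr
      _ = M * (0.7214 * L + 1.51) * h := by ring
      _ < 0.47 * R * h := by gcongr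
  have hlin := linear_lt_exp_half hL
  have hH : (h : ℝ) + 1 ≤ 0.7214 * L + 3 + j := by
    rw [hh]
    push_cast
    linarith
  have hzero : j = 0 → (h + 1 : ℝ) * (2 ^ k * h.choose j) ≤ h * (2 ^ m * 1.5) := by
    rintro rfl
    obtain rfl : k = m := by omega
    have : (2 : ℝ) ≤ h := by exact_mod_cast (by omega : 2 ≤ h)
    have h2 : (0 : ℝ) < 2 ^ k := by positivity
    simp only [Nat.choose_zero_right, Nat.cast_one]
    nlinarith
  have hpos : 1 ≤ j → (h + 1 : ℝ) * (2 ^ k * h.choose j) ≤ h * (2 ^ k * (h + 1).choose j) := by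
    intro hj
    have h1 : ((h + 1 : ℕ) : ℝ) * h.choose j ≤ h * (h + 1).choose j := by
      exact_mod_cast succ_mul_choose_le hj
    push_cast at h1
    calc _ = 2 ^ k * ((h + 1 : ℝ) * h.choose j) := by ring
      _ ≤ 2 ^ k * (h * (h + 1).choose j) := by gcongr
      _ = _ := by ring
  rcases lt_or_ge m 3 with hm | hm
  · interval_cases m
    · obtain rfl : j = 0 := by omega
      exact ⟨_, hzero rfl, by nlinarith⟩
    · rcases Nat.eq_zero_or_pos j with hj | hj
      · exact ⟨_, hzero hj, by nlinarith⟩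
      · obtain rfl : j = 1 := by omega
        obtain rfl : k = 0 := by omega
        refine ⟨_, hpos le_rfl, ?_⟩
        push_cast [Nat.choose_one_right] at hH ⊢
        nlinarith
    · have hL16 : 16 < L := by norm_num at hmL; linarith
      have hquad : (0.7214 * L + 5) * (0.7214 * L + 4) / 2 * (0.7214 * L + 1.51) < 0.47 * R := by
        rcases le_total L 20 with h20 | h20
        · have := hR2 rfl
          have h8 : (0.7214 * L + 5) * (0.7214 * L + 4) / 2 * (0.7214 * L + 1.51)
              < 0.47 * (17.2 * L ^ 2) := by
            nlinarith [mul_nonneg (sub_nonneg.2 h20) (sq_nonneg L),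
              mul_nonneg (sub_nonneg.2 hL16.le) (sub_nonneg.2 h20)]
          linarith
        · linarith [quadratic_lt_exp_half h20]
      have hle : ∀ M : ℝ, M ≤ (0.7214 * L + 5) * (0.7214 * L + 4) / 2 →
          M * (0.7214 * L + 1.51) < 0.47 * R := fun M hM =>
        (mul_le_mul_of_nonneg_right hM hν.le).trans_lt hquad
      rcases Nat.eq_zero_or_pos j with hj | hj
      · exact ⟨_, hzero hj, hle _ (by nlinarith)⟩
      · refine ⟨_, hpos hj, hle _ ?_⟩
        have hj2 : j ≤ 2 := by omega
        obtain rfl : k = 2 - j := by omega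
        interval_cases j
        · push_cast [Nat.choose_one_right] at hH ⊢
          nlinarith
        · rw [Nat.cast_choose_two]
          push_cast at hH ⊢
          norm_num
          nlinarith
  · rcases lt_or_ge m 5 with hm5 | hm5
    · have hfin : (0.7214 * L + 3 + m) ^ m / m.factorial * (0.7214 * L + 1.51) < 0.47 * R := by
        interval_cases m
        · have := cubic_lt_exp_half (L := L) (by norm_num at hmL; linarith)
          norm_num [Nat.factorial, add_assoc] at this ⊢
          linarith
        · have := quartic_lt_exp_half (L := L) (by norm_num at hmL; linarith)
          norm_num [Nat.factorial, add_assoc] at this ⊢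
          linarith
      have hle : ∀ M : ℝ, M ≤ (0.7214 * L + 3 + m) ^ m / m.factorial →
          M * (0.7214 * L + 1.51) < 0.47 * R := fun M hM =>
        (mul_le_mul_of_nonneg_right hM hν.le).trans_lt hfin
      rcases Nat.eq_zero_or_pos j with hj | hj
      · refine ⟨_, hzero hj, hle _ ?_⟩
        have h3 : (20 : ℝ) ≤ 0.7214 * L + 3 + m := by
          have : (3 : ℝ) ≤ m := by exact_mod_cast hm
          linarith
        have h4 : (20 : ℝ) ^ m ≤ (0.7214 * L + 3 + m) ^ m := by gcongr
        rw [le_div_iff₀ (by positivity)]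
        refine le_trans ?_ h4
        interval_cases m <;> norm_num [Nat.factorial]
      · refine ⟨_, hpos hj, hle _ (le_trans ?_ (two_pow_mul_le_of_small hkj hm (by omega) hmL
          (by positivity) hH))⟩
        gcongr
        exact_mod_cast Nat.choose_le_pow_div j (h + 1)
    · have h40 : 40 ≤ L := by
        have : (5 : ℝ) ≤ m := by exact_mod_cast hm5
        linarith
      have hexp := exp_dominates_of_five_le h40 hmL.le
      have h8 : (8 : ℝ) ^ m = Real.exp (3 * Real.log 2 * m) := by
        rw [show 3 * Real.log 2 * m = Real.log 8 * m by
          rw [show (8 : ℝ) = 2 ^ 3 by norm_num, Real.log_pow]; norm_num,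
          mul_comm, Real.exp_nat_mul, Real.exp_log (by norm_num)]
      have hle : ∀ M : ℝ, M ≤ 8 ^ m * Real.exp ((0.7214 * L + 3 + m) / 8) →
          M * (0.7214 * L + 1.51) < 0.47 * R := fun M hM => by
        rw [h8, ← Real.exp_add] at hM
        have := mul_le_mul_of_nonneg_right hM hν.le
        linarith
      rcases Nat.eq_zero_or_pos j with hj | hj
      · refine ⟨_, hzero hj, hle _ ?_⟩
        have h1 : (2 : ℝ) ^ m ≤ 8 ^ m := by gcongr; norm_num
        have h2 : 1.5 ≤ Real.exp ((0.7214 * L + 3 + m) / 8) := by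
          have := Real.add_one_le_exp ((0.7214 * L + 3 + m) / 8)
          have : (0 : ℝ) ≤ m := by positivity
          linarith
        gcongr
      · refine ⟨_, hpos hj, hle _ ?_⟩
        have hjm : (j : ℝ) ≤ m := by exact_mod_cast (by omega : j ≤ m)
        calc (2 : ℝ) ^ k * (h + 1).choose j
            ≤ 8 ^ k * (8 ^ j * Real.exp ((h + 1 : ℕ) / 8)) := by
              gcongr
              · norm_num
              · exact choose_le_pow_mul_exp _ _
          _ = 8 ^ m * Real.exp ((h + 1 : ℕ) / 8) := by rw [← mul_assoc, ← pow_add, hkj]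
          _ ≤ _ := by
              push_cast
              exact mul_le_mul_of_nonneg_left (Real.exp_le_exp.2 (by linarith)) (by positivity)

theorem totient_prod_primes {Q : Finset ℕ} (hQ : ∀ r ∈ Q, r.Prime) :
    (∏ q ∈ Q, q).totient = ∏ q ∈ Q, (q - 1) := by
  induction Q using Finset.induction_on with
  | empty => simp
  | insert a s ha ih =>
    have has : ∀ r ∈ s, r.Prime := fun r hr => hQ r (Finset.mem_insert_of_mem hr)
    have hap := hQ a (Finset.mem_insert_self a s)
    rw [Finset.prod_insert ha, Finset.prod_insert ha, Nat.totient_mul, ih has,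
      Nat.totient_prime hap]
    refine Nat.Coprime.prod_right fun r hr => (Nat.coprime_primes hap (has r hr)).2 ?_
    rintro rfl
    exact ha hr

theorem cast_totient_prod_primes {Q : Finset ℕ} (hQ : ∀ r ∈ Q, r.Prime) :
    ((∏ q ∈ Q, q : ℕ).totient : ℝ) = ∏ q ∈ Q, ((q : ℝ) - 1) := by
  rw [totient_prod_primes hQ, Nat.cast_prod]
  refine Finset.prod_congr rfl fun q hq => ?_
  rw [Nat.cast_sub (hQ q hq).one_lt.le, Nat.cast_one]

theorem prod_primes_le_two_pow_mul_totient {Q : Finset ℕ} (hQ : ∀ r ∈ Q, r.Prime) :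
    ((∏ q ∈ Q, q : ℕ) : ℝ) ≤ (∏ q ∈ Q, q : ℕ).totient * 2 ^ Q.card := by
  rw [cast_totient_prod_primes hQ, ← Finset.prod_const, ← Finset.prod_mul_distrib, Nat.cast_prod]
  refine Finset.prod_le_prod (fun _ _ => by positivity) fun r hr => ?_
  have : (2 : ℝ) ≤ r := by exact_mod_cast (hQ r hr).two_le
  linarith

theorem prod_primes_sq_le {Q : Finset ℕ} {L : ℝ} (hL : 4.5 ≤ L)
    (hQ : ∀ r ∈ Q, r.Prime) (hQL : ∀ r ∈ Q, (r : ℝ) + 1.25 ≤ L) :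
    ((∏ q ∈ Q, q : ℕ) : ℝ) ^ 2 ≤ (∏ q ∈ Q, q : ℕ).totient * L ^ Q.card := by
  rw [cast_totient_prod_primes hQ, ← Finset.prod_const, ← Finset.prod_mul_distrib, Nat.cast_prod,
    ← Finset.prod_pow]
  refine Finset.prod_le_prod (fun _ _ => by positivity) fun r hr => ?_
  have hr2 := (hQ r hr).two_le
  have h1 := hQL r hr
  rcases lt_or_ge r 5 with h5 | h5
  · interval_cases r
    · norm_num
      linarith
    · norm_num
      linarith
    · exact absurd (hQ 4 hr) (by norm_num)
  · have : (5 : ℝ) ≤ r := by exact_mod_cast h5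
    nlinarith

theorem prod_primes_le_pow {Q : Finset ℕ} {L : ℝ} (hQL : ∀ r ∈ Q, (r : ℝ) ≤ L) :
    ((∏ q ∈ Q, q : ℕ) : ℝ) ≤ L ^ Q.card := by
  rw [← Finset.prod_const, Nat.cast_prod]
  exact Finset.prod_le_prod (fun _ _ => by positivity) hQL

theorem count_contradiction_of_small {u φ h c ν R L Y f x X : ℝ} {m : ℕ} (hu : 0 < u) (hφ : 0 < φ)
    (hh : 0 < h) (hν : 0 ≤ ν) (hR : 0 < R) (hL : 0 < L) (hX : X = Y / (u * h)) (hx : 0 < x)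
    (hxX : x ≤ X) (huc : u ^ 2 * c ≤ φ * L ^ m) (hY : 5.96 * f * R * L ^ (m + 2) ≤ Y ^ 2)
    (hx' : 0 ≤ 37 / 72 - 1 / x) (hfin : ν * h < 5.96 * f * L ^ 2 * (37 / 72 - 1 / x)) :
    c * (ν * R) < 2 * φ * h * (37 / 144 * X ^ 2 - X / 2) := by
  have hX0 : 0 < X := hx.trans_le hxX
  have hYX : Y = X * (u * h) := by rw [hX]; field_simp
  have h1 : X ≤ X ^ 2 * (1 / x) := by
    rw [mul_one_div, le_div_iff₀ hx]
    nlinarith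
  have h2 : X ^ 2 * (37 / 72 - 1 / x) / 2 ≤ 37 / 144 * X ^ 2 - X / 2 := by linarith
  refine lt_of_lt_of_le ?_ (mul_le_mul_of_nonneg_left h2 (by positivity))
  have h3 : 0 < u ^ 2 * h := by positivity
  refine lt_of_mul_lt_mul_left ?_ h3.le
  calc u ^ 2 * h * (c * (ν * R)) = u ^ 2 * c * (ν * h * R) := by ring
    _ ≤ φ * L ^ m * (ν * h * R) := by gcongr
    _ < φ * L ^ m * (5.96 * f * L ^ 2 * (37 / 72 - 1 / x) * R) := by gcongr
    _ = φ * (37 / 72 - 1 / x) * (5.96 * f * R * L ^ (m + 2)) := by ring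
    _ ≤ φ * (37 / 72 - 1 / x) * Y ^ 2 := by gcongr
    _ = _ := by rw [hYX]; ring

theorem count_contradiction_of_large {u φ h c ν R X : ℝ} {k : ℕ} (hu : 0 < u) (hφ : 0 < φ)
    (hh : 0 < h) (hc : 0 ≤ c) (hν : 0 ≤ ν) (hR : 0 < R) (hX : 25 ≤ X)
    (hXR : X ^ 2 * (u * (h + 1)) = R ^ 2) (huφ : u ≤ φ * 2 ^ k)
    (hfin : (h + 1) * (2 ^ k * c) * ν < 0.47 * R * h) :
    c * (ν * R) < 2 * φ * h * (37 / 144 * X ^ 2 - X / 2) := by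
  have h2 : 0.47 * X ^ 2 / 2 ≤ 37 / 144 * X ^ 2 - X / 2 := by nlinarith
  refine lt_of_lt_of_le ?_ (mul_le_mul_of_nonneg_left h2 (by positivity))
  have h3 : 0 < u * (h + 1) := by positivity
  refine lt_of_mul_lt_mul_left ?_ h3.le
  calc u * (h + 1) * (c * (ν * R)) ≤ φ * 2 ^ k * (h + 1) * (c * (ν * R)) := by gcongr
    _ = φ * R * ((h + 1) * (2 ^ k * c) * ν) := by ring
    _ < φ * R * (0.47 * R * h) := by gcongr
    _ = φ * h * 0.47 * R ^ 2 := by ring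
    _ = _ := by rw [← hXR]; ring

theorem thirty_one_mul_le_exp_half {L : ℝ} (hL : 14.5 ≤ L) : 31 * L ≤ Real.exp (L / 2) := by
  obtain ⟨t, rfl⟩ : ∃ t, L = 2 * t + 2 * (7 : ℕ) := ⟨L / 2 - 7, by push_cast; ring⟩
  have ht : 0 ≤ t := by
    push_cast at hL
    linarith
  have h := taylor_le_exp_half 7 ht
  have h2 : 0 ≤ t ^ 2 / 2 + t ^ 3 / 6 + t ^ 4 / 24 + t ^ 5 / 120 := by positivity
  norm_num at h ⊢
  linarith

theorem weight_lt_sq_of_eq_one {L : ℝ} (hL : 14.5 ≤ L) :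
    (0.7214 * L + 1.51) * (0.7214 * L + 2) < 5.96 * (1 / 4) * L ^ 2 * (37 / 72 - 1 / 50) := by
  norm_num at hL ⊢
  nlinarith

theorem weight_lt_sq_of_two_le {L : ℝ} (hL : 14.5 ≤ L) :
    (0.7214 * L + 1.51) * (0.8464 * L + 2) < 5.96 * (4 / 9) * L ^ 2 * (37 / 72 - 1 / 7.6) := by
  norm_num at hL ⊢
  nlinarith

set_option maxHeartbeats 1000000 in
theorem not_all_residues_below {p : ℕ} [Fact p.Prime] {ℓ g n : ℕ} [Fact ℓ.Prime]
    (hg : ℓ * g + 1 = p) (hp : (2 * 10 ^ 6 : ℝ) ≤ p) (hn : 1 ≤ n) {Y : ℝ}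
    (hY2 : 5.96 * (n / (n + 1)) ^ 2 * √p * Real.log p ^ (n + 1) ≤ Y ^ 2)
    (hYn : 7.6 * Real.log p ^ n ≤ Y) (hY1 : n = 1 → 45.8 * Real.log p ≤ Y)
    (hR : 9.68 * ((n + 1) / n) ^ 2 * Real.log p ^ (n - 1) ≤ √p)
    (hLn : 8 * ((n : ℝ) - 1) < Real.log p)
    {Q : Finset ℕ} (hQ : ∀ r ∈ Q, r.Prime ∧ r ≠ p) (hcard : Q.card = n - 1)
    (hres : ∀ r : ℕ, r.Prime → (r : ℝ) < Y → r ≠ p → r ∉ Q → (r : ZMod p) ^ g = 1) : False := by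
  classical
  have hL := log_ge_of_two_million_le hp
  have hpp : p.Prime := Fact.out
  obtain ⟨s, hs1, hsL, hshift⟩ := exists_shift_bound hg (by exact_mod_cast hp)
  have hp0 : (0 : ℝ) < p := by linarith
  have hexp : Real.exp (Real.log p / 2) = √p := by
    rw [Real.exp_half, Real.exp_log hp0]
  obtain ⟨m, rfl⟩ : ∃ m, n = m + 1 := ⟨n - 1, by omega⟩
  simp only [Nat.add_sub_cancel] at hcard hR
  set L := Real.log p with hLdef
  have hmL : 8 * (m : ℝ) < L := by
    push_cast at hLn
    linarith
  set Q₁ := Q.filter (· < s + 1 + m) with hQ₁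
  set Q₂ := Q.filter (¬ · < s + 1 + m) with hQ₂
  have hkj : Q₁.card + Q₂.card = m := by
    rw [hQ₁, hQ₂, Finset.card_filter_add_card_filter_not, hcard]
  set j := Q₂.card with hj
  set k := Q₁.card with hk
  have hjm : (j : ℝ) ≤ m := by exact_mod_cast (by omega : j ≤ m)
  have hprime₁ : ∀ r ∈ Q₁, r.Prime := fun r hr => (hQ r (Finset.mem_filter.1 hr).1).1
  have hQ₁L : ∀ r ∈ Q₁, (r : ℝ) + 1.25 ≤ L := by
    intro r hr
    have h1 : (r : ℝ) ≤ s + m := by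
      have := (Finset.mem_filter.1 hr).2
      exact_mod_cast (by omega : r ≤ s + m)
    have hm1 : 1 ≤ m := by
      have : 0 < k := Finset.card_pos.2 ⟨r, hr⟩
      omega
    rcases hm1.eq_or_lt with h | h
    · rw [← h] at h1
      push_cast at h1
      linarith
    · have : (2 : ℝ) ≤ m := by exact_mod_cast h
      linarith
  have hsq := prod_primes_sq_le (by linarith) hprime₁ hQ₁L
  have hu2 := prod_primes_le_two_pow_mul_totient hprime₁
  have huL := prod_primes_le_pow (L := L) (fun r hr => by linarith [hQ₁L r hr])
  have hu0 : 0 < ∏ q ∈ Q₁, q := Finset.prod_pos fun r hr => (hprime₁ r hr).pos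
  have hfarey := fun X : ℝ => fareyWeight_le_card (p := p) (g := g) (h := s + j) (Q₁ := Q₁)
    (Q₂ := Q₂) (X := X)
    (by omega) (fun r hr => hQ r (Finset.mem_filter.1 hr).1) (by
      intro r hr
      obtain ⟨h1, h2⟩ := Finset.mem_filter.1 hr
      refine ⟨(hQ r h1).1, (hQ r h1).2, fun h => h2 (Finset.mem_filter.1 h).2, by omega⟩)
  set u := ∏ q ∈ Q₁, q with hu
  have hu0' : (0 : ℝ) < u := by exact_mod_cast hu0
  have hφ0 : (0 : ℝ) < u.totient := by exact_mod_cast Nat.totient_pos.2 hu0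
  have hhL : ((s + 1 + j : ℕ) : ℝ) ≤ 0.7214 * L + 2 + j := by
    push_cast
    linarith
  have hblock := card_almostConstantBlock_le (p := p) (g := g) (s := s) (k := j)
    (by rintro rfl; have := hpp.one_lt; omega) (by
      have : (L : ℝ) ≤ p - 1 := Real.log_le_sub_one_of_pos hp0
      have : ((s + 1 + j : ℕ) : ℝ) < p := by linarith
      exact_mod_cast this) hshift
    (Finset.univ.filter fun w => IsAlmostConstantBlock g (s + 1 + j) j w)
    (fun w hw => (Finset.mem_filter.1 hw).2)
  set h := s + 1 + j with hh
  have hh0 : (0 : ℝ) < h := by exact_mod_cast (by omega : 0 < h)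
  have hh2 : (2 : ℝ) ≤ h := by exact_mod_cast (by omega : 2 ≤ h)
  have hhL' : (h : ℝ) ≤ L := by linarith
  have hcast : ((s + j : ℕ) : ℝ) + 1 = h := by
    rw [hh]
    push_cast
    ring
  have hR0 : 0 < √(p : ℝ) := by positivity
  have hRR : √(p : ℝ) ^ 2 = p := Real.sq_sqrt hp0.le
  have hmain : ∀ X : ℝ, 1 ≤ X → X ^ 2 * (u * (h + 1)) ≤ p → X * (u * h) ≤ Y →
      2 * (u.totient : ℝ) * h * (37 / 144 * X ^ 2 - X / 2)
        ≤ h.choose j * ((0.7214 * L + 1.51) * √p) := by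
    intro X hX hXp hXY
    have hHp : X * (u * h) ≤ p := by
      refine le_trans ?_ hXp
      have : X * 1 ≤ X * X := by gcongr
      calc X * (u * h) ≤ (X * X) * (u * (h + 1)) := by gcongr <;> linarith
        _ = _ := by ring
    have h1 := hfarey X hX (by rw [← hcast] at hXp; linarith) (by
      intro r hr hrX hr1 hr2
      rw [hcast] at hrX
      refine hres r hr (by linarith) ?_ ?_
      · rintro rfl
        linarith
      · intro hrQ
        by_cases hlt : r < s + 1 + m
        · exact hr1 (Finset.mem_filter.2 ⟨hrQ, hlt⟩)
        · exact hr2 (Finset.mem_filter.2 ⟨hrQ, hlt⟩))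
      (Finset.univ.filter fun w => IsAlmostConstantBlock g h j w) (by
        intro w hw
        refine Finset.mem_filter.2 ⟨Finset.mem_univ w, ?_⟩
        convert hw using 1
        omega)
    rw [hcast] at h1
    refine le_trans ?_ (h1.trans hblock)
    exact mul_le_mul_of_nonneg_left (le_fareyWeight (by linarith)) (by positivity)
  have hν0 : 0 ≤ 0.7214 * L + 1.51 := by linarith
  have hL0 : 0 < L := by linarith
  have huh : u * h ≤ L ^ (m + 1) := by
    calc (u : ℝ) * h ≤ L ^ k * L := by gcongr
      _ = L ^ (k + 1) := by ring
      _ ≤ L ^ (m + 1) := pow_le_pow_right₀ (by linarith) (by omega)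
  have hX₁ : 7.6 ≤ Y / (u * h) := by
    rw [le_div_iff₀ (by positivity)]
    refine le_trans ?_ hYn
    gcongr
  by_cases hcase : (Y / (u * h)) ^ 2 * (u * (h + 1)) ≤ p
  · refine absurd (hmain _ (by linarith) hcase (by field_simp; rfl)) (not_le.2 ?_)
    have huc : (u : ℝ) ^ 2 * h.choose j ≤ u.totient * L ^ m := by
      have h1 : (h.choose j : ℝ) ≤ L ^ j := by
        calc (h.choose j : ℝ) ≤ (h : ℝ) ^ j := by exact_mod_cast Nat.choose_le_pow h j
          _ ≤ L ^ j := by gcongr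
      calc (u : ℝ) ^ 2 * h.choose j ≤ (u.totient * L ^ k) * L ^ j := by gcongr
        _ = u.totient * L ^ m := by rw [mul_assoc, ← pow_add, hkj]
    rcases Nat.eq_zero_or_pos m with hm | hm
    · have hj0 : (j : ℝ) = 0 := by exact_mod_cast (by omega : j = 0)
      have hu1 : (u : ℝ) ≤ 1 := by
        have : k = 0 := by omega
        rw [← hk, this, pow_zero] at huL
        exact huL
      refine count_contradiction_of_small hu0' hφ0 hh0 hν0 hR0 hL0 rfl
        (show (0 : ℝ) < 50 by norm_num) ?_ huc hY2 (by norm_num) ?_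
      · rw [le_div_iff₀ (by positivity)]
        have := hY1 (by omega)
        have : (u : ℝ) * h ≤ 1 * h := by gcongr
        linarith
      · have : (0.7214 * L + 1.51) * h ≤ (0.7214 * L + 1.51) * (0.7214 * L + 2) := by
          gcongr
          linarith
        refine this.trans_lt ((weight_lt_sq_of_eq_one hL).trans_eq ?_)
        rw [hm]
        norm_num
    · refine count_contradiction_of_small hu0' hφ0 hh0 hν0 hR0 hL0 rfl
        (show (0 : ℝ) < 7.6 by norm_num) hX₁ huc hY2 (by norm_num) ?_
      have hm1 : (1 : ℝ) ≤ m := by exact_mod_cast hm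
      have hf : (4 / 9 : ℝ) ≤ (((m + 1 : ℕ) : ℝ) / ((m + 1 : ℕ) + 1)) ^ 2 := by
        have : (2 / 3 : ℝ) ≤ ((m + 1 : ℕ) : ℝ) / ((m + 1 : ℕ) + 1) := by
          push_cast
          rw [div_le_div_iff₀ (by norm_num) (by positivity)]
          linarith
        calc (4 / 9 : ℝ) = (2 / 3) ^ 2 := by norm_num
          _ ≤ _ := by gcongr
      have h1 : (0.7214 * L + 1.51) * h ≤ (0.7214 * L + 1.51) * (0.8464 * L + 2) := by
        gcongr
        linarith
      calc _ ≤ _ := h1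
        _ < 5.96 * (4 / 9) * L ^ 2 * (37 / 72 - 1 / 7.6) := weight_lt_sq_of_two_le hL
        _ ≤ _ := by
          gcongr
  · set X := √((p : ℝ) / (u * (h + 1))) with hXdef
    have hXsq : X ^ 2 = p / (u * (h + 1)) := Real.sq_sqrt (by positivity)
    have hXp : X ^ 2 * (u * (h + 1)) = p := by
      rw [hXsq]
      field_simp
    have hX25 : 25 ≤ X := by
      rw [hXdef]
      refine Real.le_sqrt_of_sq_le ?_
      rw [le_div_iff₀ (by positivity)]
      have h1 : (u : ℝ) * (h + 1) ≤ 1.5 * L ^ (m + 1) := by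
        calc (u : ℝ) * (h + 1) ≤ u * (1.5 * h) := by gcongr; linarith
          _ = 1.5 * (u * h) := by ring
          _ ≤ _ := by gcongr
      have h2 : 937.5 * L ^ (m + 1) ≤ p := by
        rcases lt_or_ge m 2 with hm | hm
        · have h3 := thirty_one_mul_le_exp_half hL
          rw [hexp] at h3
          calc 937.5 * L ^ (m + 1) ≤ 937.5 * L ^ 2 := by
                gcongr
                · linarith
                · omega
            _ ≤ (31 * L) ^ 2 := by nlinarith
            _ ≤ √(p : ℝ) ^ 2 := by gcongr
            _ = p := hRR
        · have h3 : 9.68 * L ^ m ≤ √p := by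
            refine le_trans ?_ hR
            gcongr
            refine le_mul_of_one_le_right (by norm_num) (one_le_pow₀ ?_)
            rw [le_div_iff₀ (by positivity)]
            linarith
          have h4 : L ^ (m + 2) ≤ L ^ (2 * m) := pow_le_pow_right₀ (by linarith) (by omega)
          have h5 : 0 ≤ L ^ (m + 1) := by positivity
          calc 937.5 * L ^ (m + 1) ≤ 9.68 ^ 2 * (L ^ (m + 1) * L) := by nlinarith
            _ = 9.68 ^ 2 * L ^ (m + 2) := by ring
            _ ≤ 9.68 ^ 2 * L ^ (2 * m) := by gcongr
            _ = (9.68 * L ^ m) ^ 2 := by ring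
            _ ≤ √(p : ℝ) ^ 2 := by gcongr
            _ = p := hRR
      linarith
    have hXX : X ≤ Y / (u * h) := by
      refine le_of_sq_le_sq ?_ (by linarith)
      rw [hXsq, div_le_iff₀ (by positivity)]
      exact (not_le.1 hcase).le
    refine absurd (hmain X (by linarith) hXp.le ((le_div_iff₀ (by positivity)).1 hXX))
      (not_le.2 ?_)
    refine count_contradiction_of_large (k := k) hu0' hφ0 hh0 (by positivity) hν0 hR0 hX25
      (by rw [hXp, hRR]) hu2 ?_
    refine choose_weight_lt hkj hs1 hsL hL hmL hexp.le ?_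
    rintro rfl
    refine le_trans ?_ hR
    push_cast
    norm_num
    nlinarith

/-- Corollary: fix positive integers `n₀`, `p₀` with `X*(p₀,n₀) > 3.8` and
`p₀ > max{2·10⁶, exp(8(n₀-1))}`, and set `C = g(n₀,p₀)`.  Then for every prime `p ≥ p₀`,
every nonprincipal Dirichlet character `χ` mod `p`, and every `1 ≤ n ≤ n₀`, the `n`-th
smallest prime nonresidue `qₙ` of `χ` (i.e. the prime nonresidue `q` preceded by exactly
`n - 1` smaller prime nonresidues) satisfies `qₙ ≤ C p^(1/4) (log p)^((n+1)/2)`. -/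
theorem stmt_1 (n₀ p₀ : ℕ) (hn₀ : 0 < n₀) (hp₀ : 0 < p₀)
    (hX : Xstar n₀ p₀ > 3.8)
    (hp₀big : (p₀ : ℝ) > max (2 * 10 ^ 6) (Real.exp (8 * ((n₀ : ℝ) - 1))))
    (C : ℝ) (hC : C = gconst n₀ p₀) :
    ∀ p : ℕ, p.Prime → p₀ ≤ p →
      ∀ χ : DirichletCharacter ℂ p, χ ≠ 1 →
        ∀ n : ℕ, 1 ≤ n → n ≤ n₀ →
          ∀ q : ℕ,
            (q.Prime ∧ χ ((q : ZMod p)) ≠ 0 ∧ χ ((q : ZMod p)) ≠ 1) →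
            ({r : ℕ | r < q ∧ r.Prime ∧ χ ((r : ZMod p)) ≠ 0 ∧ χ ((r : ZMod p)) ≠ 1}.ncard
              = n - 1) →
            (q : ℝ) ≤ C * (p : ℝ) ^ ((1 : ℝ) / 4) * Real.log p ^ (((n : ℝ) + 1) / 2) := by
  subst hC
  intro p hp hpp₀ χ hχ n hn hnn₀ q _ hcard
  by_contra! hlt
  have : Fact p.Prime := ⟨hp⟩
  obtain ⟨ℓ, g, hℓ, hg, hres⟩ := exists_prime_index_of_ne_one hχ
  have : Fact ℓ.Prime := ⟨hℓ⟩
  obtain ⟨hp₀2, hp₀exp⟩ := max_lt_iff.1 hp₀big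
  have hpp₀' : (p₀ : ℝ) ≤ p := by exact_mod_cast hpp₀
  obtain ⟨hY2, hYn, hY1, hR, hLn⟩ :=
    size_bounds hn hnn₀ hp₀2.le hp₀exp hX hpp₀' rfl
  have hfin : {r : ℕ | r < q ∧ r.Prime ∧ χ (r : ZMod p) ≠ 0 ∧ χ (r : ZMod p) ≠ 1}.Finite :=
    (Set.finite_lt_nat q).subset fun r hr => hr.1
  refine not_all_residues_below hg (by linarith) hn hY2 hYn hY1 hR hLn
    (Q := hfin.toFinset) ?_ ?_ ?_
  · intro r hr
    obtain ⟨-, hr1, hr2, -⟩ := hfin.mem_toFinset.1 hr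
    refine ⟨hr1, ?_⟩
    rintro rfl
    simp [MulChar.map_zero] at hr2
  · rw [← hcard, Set.ncard_eq_toFinset_card _ hfin]
  · intro r hr hrY hrp hrQ
    refine hres _ ?_
    by_contra hne
    refine hrQ (hfin.mem_toFinset.2 ⟨by exact_mod_cast hrY.trans hlt, hr, ?_, hne⟩)
    intro h0
    have hu : IsUnit (r : ZMod p) := by
      rw [ZMod.isUnit_iff_coprime]
      exact (Nat.coprime_primes hr hp).2 hrp
    exact (hu.map χ).ne_zero h0
end

section
/- Let p be a prime, and let H, h be positive reals with h ≥ 1. For integers 0 ≤ b < a with gcd(a,b) = 1, define the real intervals I(a,b) = (bp/a, (bp+H)/a] and J(a,b) = [(bp−H)/a, bp/a). Let X be a real number with 2XH < p. Then the intervals I(a,b) and J(a,b), ranging over all pairs (a,b) with 0 ≤ b < a ≤ X and gcd(a,b) = 1, are pairwise disjoint subintervals of (0, p − H), with the single exception of J(1,0) = [−H, 0). -/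
/-- The interval `I(a,b) = (bp/a, (bp+H)/a]`. -/
def Iab (p : ℕ) (H : ℝ) (a b : ℕ) : Set ℝ :=
  Set.Ioc ((b * p : ℝ) / a) (((b * p : ℝ) + H) / a)

/-- The interval `J(a,b) = [(bp-H)/a, bp/a)`. -/
def Jab (p : ℕ) (H : ℝ) (a b : ℕ) : Set ℝ :=
  Set.Ico (((b * p : ℝ) - H) / a) ((b * p : ℝ) / a)

theorem mem_Iab_iff {p : ℕ} {H : ℝ} {a b : ℕ} (ha : 0 < a) {x : ℝ} :
    x ∈ Iab p H a b ↔ (b * p : ℝ) < a * x ∧ a * x ≤ b * p + H := by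
  have ha' : (0 : ℝ) < a := by exact_mod_cast ha
  rw [Iab, Set.mem_Ioc, div_lt_iff₀' ha', le_div_iff₀' ha']

theorem mem_Jab_iff {p : ℕ} {H : ℝ} {a b : ℕ} (ha : 0 < a) {x : ℝ} :
    x ∈ Jab p H a b ↔ (b * p : ℝ) - H ≤ a * x ∧ a * x < b * p := by
  have ha' : (0 : ℝ) < a := by exact_mod_cast ha
  rw [Jab, Set.mem_Ico, div_le_iff₀' ha', lt_div_iff₀' ha']

theorem Nat.eq_and_eq_of_coprime_of_mul_eq_mul {a b a' b' : ℕ} (ha : 0 < a)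
    (hab : Nat.Coprime a b) (hab' : Nat.Coprime a' b') (h : a' * b = a * b') :
    a = a' ∧ b = b' := by
  have haa' : a = a' := Nat.dvd_antisymm
    (hab.dvd_of_dvd_mul_right (h ▸ Nat.dvd_mul_right a b'))
    (hab'.dvd_of_dvd_mul_right (h ▸ Nat.dvd_mul_right a' b))
  subst haa'
  exact ⟨rfl, Nat.eq_of_mul_eq_mul_left ha h⟩

/-- A real number lies close to at most one of the fractions `bp/a` with bounded denominator. -/
theorem eq_and_eq_of_abs_mul_sub_le {p : ℕ} {H X x : ℝ} (hXH : 2 * X * H < p) (hH : 0 < H)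
    {a b a' b' : ℕ} (ha : 0 < a) (haX : (a : ℝ) ≤ X) (haX' : (a' : ℝ) ≤ X)
    (hab : Nat.Coprime a b) (hab' : Nat.Coprime a' b')
    (hx : |a * x - b * p| ≤ H) (hx' : |a' * x - b' * p| ≤ H) : a = a' ∧ b = b' := by
  refine Nat.eq_and_eq_of_coprime_of_mul_eq_mul ha hab hab' ?_
  rw [abs_le] at hx hx'
  have ha₀ : (0 : ℝ) ≤ a := a.cast_nonneg
  have ha₀' : (0 : ℝ) ≤ a' := a'.cast_nonneg
  have hp : (0 : ℝ) < p := by nlinarith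
  have hsum : (a + a') * H < p := by nlinarith
  have hupper : ((a' : ℝ) * b - a * b') * p < 1 * p := by
    nlinarith [mul_le_mul_of_nonneg_left hx.1 ha₀', mul_le_mul_of_nonneg_left hx'.2 ha₀]
  have hlower : (-1 : ℝ) * p < ((a' : ℝ) * b - a * b') * p := by
    nlinarith [mul_le_mul_of_nonneg_left hx.2 ha₀', mul_le_mul_of_nonneg_left hx'.1 ha₀]
  have hlt : ((a' : ℤ) * b - a * b') < 1 := by
    exact_mod_cast lt_of_mul_lt_mul_right hupper hp.le
  have hgt : (-1 : ℤ) < (a' : ℤ) * b - a * b' := by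
    exact_mod_cast lt_of_mul_lt_mul_right hlower hp.le
  have heq : (a' : ℤ) * b = a * b' := by omega
  exact_mod_cast heq

theorem abs_mul_sub_le_of_mem_Iab {p : ℕ} {H : ℝ} {a b : ℕ} (ha : 0 < a) {x : ℝ}
    (hx : x ∈ Iab p H a b) : |a * x - b * p| ≤ H := by
  rw [mem_Iab_iff ha] at hx
  rw [abs_le]
  constructor <;> linarith

theorem abs_mul_sub_le_of_mem_Jab {p : ℕ} {H : ℝ} {a b : ℕ} (ha : 0 < a) {x : ℝ}
    (hx : x ∈ Jab p H a b) : |a * x - b * p| ≤ H := by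
  rw [mem_Jab_iff ha] at hx
  rw [abs_le]
  constructor <;> linarith

theorem Iab_subset_Ioo {p : ℕ} {H X : ℝ} (hH : 0 < H) (hXH : 2 * X * H < p) {a b : ℕ}
    (hba : b < a) (haX : (a : ℝ) ≤ X) : Iab p H a b ⊆ Set.Ioo 0 ((p : ℝ) - H) := by
  intro x hx
  obtain ⟨hlower, hupper⟩ := (mem_Iab_iff (by omega)).1 hx
  have ha : (1 : ℝ) ≤ a := by exact_mod_cast (by omega : 1 ≤ a)
  have hb : (b : ℝ) + 1 ≤ a := by exact_mod_cast hba
  have hp : (0 : ℝ) ≤ p := p.cast_nonneg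
  have haH : 2 * a * H < p := by nlinarith
  have hbp : ((b : ℝ) + 1) * p ≤ a * p := mul_le_mul_of_nonneg_right hb hp
  constructor
  · exact pos_of_mul_pos_right (lt_of_le_of_lt (by positivity) hlower) (by linarith)
  · refine lt_of_mul_lt_mul_left (a := (a : ℝ)) ?_ (by linarith)
    nlinarith

theorem Jab_subset_Ioo {p : ℕ} {H X : ℝ} (hH : 0 < H) (hXH : 2 * X * H < p) {a b : ℕ}
    (hba : b < a) (hb₀ : 0 < b) (haX : (a : ℝ) ≤ X) :
    Jab p H a b ⊆ Set.Ioo 0 ((p : ℝ) - H) := by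
  intro x hx
  obtain ⟨hlower, hupper⟩ := (mem_Jab_iff (by omega)).1 hx
  have ha : (1 : ℝ) ≤ a := by exact_mod_cast (by omega : 1 ≤ a)
  have hb₁ : (1 : ℝ) ≤ b := by exact_mod_cast hb₀
  have hb : (b : ℝ) + 1 ≤ a := by exact_mod_cast hba
  have hp : (0 : ℝ) ≤ p := p.cast_nonneg
  have haH : 2 * a * H < p := by nlinarith
  have hbp : ((b : ℝ) + 1) * p ≤ a * p := mul_le_mul_of_nonneg_right hb hp
  constructor
  · refine pos_of_mul_pos_right (a := (a : ℝ)) ?_ (by linarith)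
    nlinarith
  · refine lt_of_mul_lt_mul_left (a := (a : ℝ)) ?_ (by linarith)
    nlinarith

/-- Let `p` be prime, `H, h` positive reals with `h ≥ 1`, and `X` a real with `2XH < p`.
The intervals `I(a,b)` and `J(a,b)`, over coprime pairs `0 ≤ b < a ≤ X`, are pairwise
disjoint subintervals of `(0, p - H)`, the single exception being `J(1,0) = [-H, 0)`. -/
theorem stmt_3 (p : ℕ) (hp : p.Prime) (H h X : ℝ) (hH : 0 < H) (hh : 1 ≤ h)
    (hXH : 2 * X * H < p) :
    (∀ a b : ℕ, b < a → (a : ℝ) ≤ X → Nat.Coprime a b →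
      Iab p H a b ⊆ Set.Ioo 0 ((p : ℝ) - H) ∧
        (¬(a = 1 ∧ b = 0) → Jab p H a b ⊆ Set.Ioo 0 ((p : ℝ) - H))) ∧
    Jab p H 1 0 = Set.Ico (-H) 0 ∧
    (∀ a b a' b' : ℕ, b < a → (a : ℝ) ≤ X → Nat.Coprime a b →
      b' < a' → (a' : ℝ) ≤ X → Nat.Coprime a' b' →
      ((a, b) ≠ (a', b') →
        Disjoint (Iab p H a b) (Iab p H a' b') ∧ Disjoint (Jab p H a b) (Jab p H a' b')) ∧
      Disjoint (Iab p H a b) (Jab p H a' b')) := by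
  refine ⟨fun a b hba haX hab => ⟨Iab_subset_Ioo hH hXH hba haX, fun hne => ?_⟩,
    by simp [Jab], ?_⟩
  · refine Jab_subset_Ioo hH hXH hba (Nat.pos_of_ne_zero fun hb => hne ⟨?_, hb⟩) haX
    simpa [hb] using hab
  · intro a b a' b' hba haX hab hba' haX' hab'
    have ha : 0 < a := by omega
    have ha' : 0 < a' := by omega
    refine ⟨fun hne => ⟨?_, ?_⟩, ?_⟩ <;> refine Set.disjoint_left.2 fun x hx hx' => ?_
    · obtain ⟨rfl, rfl⟩ := eq_and_eq_of_abs_mul_sub_le hXH hH ha haX haX' hab hab'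
        (abs_mul_sub_le_of_mem_Iab ha hx) (abs_mul_sub_le_of_mem_Iab ha' hx')
      exact hne rfl
    · obtain ⟨rfl, rfl⟩ := eq_and_eq_of_abs_mul_sub_le hXH hH ha haX haX' hab hab'
        (abs_mul_sub_le_of_mem_Jab ha hx) (abs_mul_sub_le_of_mem_Jab ha' hx')
      exact hne rfl
    · obtain ⟨rfl, rfl⟩ := eq_and_eq_of_abs_mul_sub_le hXH hH ha haX haX' hab hab'
        (abs_mul_sub_le_of_mem_Iab ha hx) (abs_mul_sub_le_of_mem_Jab ha' hx')
      exact lt_asymm hx.1 hx'.2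
end

section
/- Let x > 1 be a real number. Then 2x Σ_{a ≤ x} φ(a)/a − Σ_{a ≤ x} φ(a) ≥ (9/π²) x² f(x), where f(x) = 1 − (π²/9)(log x + 9)/(3x) and the sums range over positive integers a ≤ x. -/
open Real

open scoped ArithmeticFunction.Moebius

/-- Summing over all factorizations `d * k = n` with `n ≤ N` amounts to summing over `d ≤ N`
and `k ≤ N / d`. -/
theorem sum_Icc_sum_divisorsAntidiagonal (N : ℕ) (F : ℕ → ℕ → ℝ) :
    ∑ n ∈ Finset.Icc 1 N, ∑ p ∈ n.divisorsAntidiagonal, F p.1 p.2 =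
      ∑ d ∈ Finset.Icc 1 N, ∑ k ∈ Finset.Icc 1 (N / d), F d k := by
  rw [Finset.sum_sigma', Finset.sum_sigma']
  refine Finset.sum_nbij' (fun p => ⟨p.2.1, p.2.2⟩) (fun p => ⟨p.1 * p.2, (p.1, p.2)⟩)
    ?_ ?_ ?_ ?_ ?_
  · rintro ⟨n, d, k⟩ h
    simp only [Finset.mem_sigma, Finset.mem_Icc, Nat.mem_divisorsAntidiagonal] at h ⊢
    obtain ⟨⟨h1, hN⟩, rfl, h0⟩ := h
    have hd : 0 < d := Nat.pos_of_ne_zero (left_ne_zero_of_mul h0)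
    have hk : 0 < k := Nat.pos_of_ne_zero (right_ne_zero_of_mul h0)
    refine ⟨⟨hd, (Nat.le_mul_of_pos_right d hk).trans hN⟩, hk, ?_⟩
    rwa [Nat.le_div_iff_mul_le hd, mul_comm]
  · rintro ⟨d, k⟩ h
    simp only [Finset.mem_sigma, Finset.mem_Icc, Nat.mem_divisorsAntidiagonal] at h ⊢
    obtain ⟨⟨hd, -⟩, hk, hkN⟩ := h
    rw [Nat.le_div_iff_mul_le hd, mul_comm] at hkN
    have := Nat.mul_pos hd hk
    exact ⟨⟨this, hkN⟩, trivial, this.ne'⟩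
  · rintro ⟨n, d, k⟩ h
    simp only [Finset.mem_sigma, Nat.mem_divisorsAntidiagonal] at h
    obtain ⟨-, rfl, -⟩ := h
    rfl
  · rintro ⟨d, k⟩ -
    rfl
  · rintro ⟨n, d, k⟩ -
    rfl

theorem totient_eq_sum_moebius_mul {n : ℕ} (hn : 0 < n) :
    (Nat.totient n : ℝ) = ∑ p ∈ n.divisorsAntidiagonal, (μ p.1 : ℝ) * p.2 := by
  refine ((ArithmeticFunction.sum_eq_iff_sum_mul_moebius_eq (f := fun m => (Nat.totient m : ℝ))
    (g := fun m => (m : ℝ))).1 (fun m _ => ?_) n hn).symm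
  exact_mod_cast Nat.sum_totient m

theorem sum_Icc_natCast (n : ℕ) : ∑ k ∈ Finset.Icc 1 n, (k : ℝ) = n * (n + 1) / 2 := by
  induction n with
  | zero => simp
  | succ n ih =>
    rw [Finset.sum_Icc_succ_top (by omega), ih]
    push_cast
    ring

theorem two_mul_sum_totient_div_sub_sum_totient (x : ℝ) (N : ℕ) :
    2 * x * ∑ a ∈ Finset.Icc 1 N, (Nat.totient a : ℝ) / a -
        ∑ a ∈ Finset.Icc 1 N, (Nat.totient a : ℝ) =
      ∑ d ∈ Finset.Icc 1 N, (μ d : ℝ) *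
        (2 * (x / d) * (N / d : ℕ) - (N / d : ℕ) * ((N / d : ℕ) + 1) / 2) := by
  have hterm : ∀ a ∈ Finset.Icc 1 N, 2 * x * ((Nat.totient a : ℝ) / a) - Nat.totient a =
      ∑ p ∈ a.divisorsAntidiagonal, (μ p.1 : ℝ) * (2 * (x / p.1) - p.2) := by
    intro a ha
    have ha1 := (Finset.mem_Icc.1 ha).1
    rw [totient_eq_sum_moebius_mul ha1, Finset.sum_div, Finset.mul_sum,
      ← Finset.sum_sub_distrib]
    refine Finset.sum_congr rfl fun p hp => ?_
    obtain ⟨hp, h0⟩ := Nat.mem_divisorsAntidiagonal.1 hp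
    have h1 : (p.1 : ℝ) ≠ 0 := by
      exact_mod_cast left_ne_zero_of_mul (hp ▸ h0)
    have h2 : (p.2 : ℝ) ≠ 0 := by
      exact_mod_cast right_ne_zero_of_mul (hp ▸ h0)
    rw [← hp]
    push_cast
    field_simp
  rw [Finset.mul_sum, ← Finset.sum_sub_distrib, Finset.sum_congr rfl hterm,
    sum_Icc_sum_divisorsAntidiagonal N fun d k => (μ d : ℝ) * (2 * (x / d) - k)]
  refine Finset.sum_congr rfl fun d _ => ?_
  rw [← Finset.mul_sum, Finset.sum_sub_distrib, sum_Icc_natCast]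
  simp only [Finset.sum_const, Nat.card_Icc, Nat.add_sub_cancel, nsmul_eq_mul]
  ring

theorem sum_moebius_mul_div {N : ℕ} (hN : 1 ≤ N) :
    ∑ d ∈ Finset.Icc 1 N, (μ d : ℝ) * (N / d : ℕ) = 1 := by
  have h := sum_Icc_sum_divisorsAntidiagonal N fun d _ => (μ d : ℝ)
  simp only [Finset.sum_const, Nat.card_Icc, Nat.add_sub_cancel, nsmul_eq_mul] at h
  rw [Finset.sum_congr rfl fun d _ => mul_comm (μ d : ℝ) _, ← h]
  have hterm : ∀ n ∈ Finset.Icc 1 N,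
      ∑ p ∈ n.divisorsAntidiagonal, (μ p.1 : ℝ) = if n = 1 then 1 else 0 := by
    intro n hn
    rw [Nat.sum_divisorsAntidiagonal fun i _ => (μ i : ℝ)]
    have hone : ∑ i ∈ n.divisors, μ i = if n = 1 then 1 else 0 := by
      rw [← ArithmeticFunction.coe_mul_zeta_apply, ArithmeticFunction.moebius_mul_coe_zeta,
        ArithmeticFunction.one_apply]
    exact_mod_cast hone
  rw [Finset.sum_congr rfl hterm]
  simp [hN]

theorem abs_moebius_cast_le_one (n : ℕ) : |(μ n : ℝ)| ≤ 1 := by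
  exact_mod_cast ArithmeticFunction.abs_moebius_le_one (n := n)

theorem moebius_eq_zero_of_sq_dvd {n m : ℕ} (hm : m ≠ 1) (h : m * m ∣ n) : μ n = 0 :=
  ArithmeticFunction.moebius_eq_zero_of_not_squarefree fun hs => hm (Nat.isUnit_iff.1 (hs m h))

theorem sum_moebius_div_le {N : ℕ} (hN : 1 ≤ N) :
    ∑ d ∈ Finset.Icc 1 N, (μ d : ℝ) / d ≤ 1 + 1 / N := by
  have hN0 : (0 : ℝ) < N := by exact_mod_cast hN
  have hle : ∑ d ∈ Finset.Icc 1 N, ((μ d : ℝ) * (N / d) - (μ d : ℝ) * (N / d : ℕ)) ≤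
      ∑ d ∈ Finset.Icc 1 N, (1 : ℝ) := by
    refine Finset.sum_le_sum fun d hd => ?_
    have h1 : ((N / d : ℕ) : ℝ) ≤ (N : ℝ) / d := Nat.cast_div_le
    have h2 : (N : ℝ) / d < (N / d : ℕ) + 1 := by
      have := Nat.lt_floor_add_one ((N : ℝ) / d)
      rwa [Nat.floor_div_eq_div] at this
    have h3 := abs_le.1 (abs_moebius_cast_le_one d)
    nlinarith
  rw [Finset.sum_sub_distrib, sum_moebius_mul_div hN] at hle
  simp only [Finset.sum_const, Nat.card_Icc, Nat.add_sub_cancel, nsmul_eq_mul, mul_one] at hle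
  have hsum : ∑ d ∈ Finset.Icc 1 N, (μ d : ℝ) * (N / d) =
      N * ∑ d ∈ Finset.Icc 1 N, (μ d : ℝ) / d := by
    rw [Finset.mul_sum]
    exact Finset.sum_congr rfl fun d _ => by ring
  rw [hsum] at hle
  rw [← mul_le_mul_iff_right₀ hN0]
  field_simp
  linarith

theorem hasSum_moebius_div_sq : HasSum (fun n : ℕ => (μ n : ℝ) / (n : ℝ) ^ 2) (6 / π ^ 2) := by
  have h2 : 1 < (2 : ℂ).re := by norm_num
  have hs := (ArithmeticFunction.LSeriesSummable_moebius_iff.2 h2).LSeriesHasSum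
  have hprod := LSeries_one_mul_Lseries_moebius h2
  rw [LSeries_one_eq_riemannZeta h2, riemannZeta_two] at hprod
  have hpi : (π : ℂ) ≠ 0 := by exact_mod_cast Real.pi_ne_zero
  rw [show LSeries (fun n => ((μ n : ℤ) : ℂ)) 2 = ((6 / π ^ 2 : ℝ) : ℂ) by
    push_cast
    field_simp at hprod ⊢
    linear_combination hprod] at hs
  rw [← Complex.hasSum_ofReal]
  unfold LSeriesHasSum at hs
  convert hs using 1
  funext n
  rcases eq_or_ne n 0 with rfl | hn
  · simp
  · simp [LSeries.term_of_ne_zero hn]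

/-- Bound for `∑_{d > N} μ(d) / d ^ 2` that uses that `μ` vanishes on multiples of `4`. -/
noncomputable def moebiusTailBound (N : ℕ) : ℝ := 1 / (N + 1 / 2) - 1 / (16 * ((N / 4 : ℕ) + 1))

theorem moebius_div_sq_le_moebiusTailBound_sub (N : ℕ) :
    (μ (N + 1) : ℝ) / ((N + 1 : ℕ) : ℝ) ^ 2 ≤ moebiusTailBound N - moebiusTailBound (N + 1) := by
  unfold moebiusTailBound
  have hN : (0 : ℝ) ≤ N := N.cast_nonneg
  by_cases h : 4 ∣ N + 1
  · rw [moebius_eq_zero_of_sq_dvd (m := 2) (by norm_num) h]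
    obtain ⟨k, hk⟩ := h
    obtain ⟨j, rfl⟩ : ∃ j, k = j + 1 := ⟨k - 1, by omega⟩
    have h1 : N / 4 = j := by omega
    have h2 : (N + 1) / 4 = j + 1 := by omega
    have h3 : N = 4 * j + 3 := by omega
    rw [h1, h2, h3]
    have hj : (0 : ℝ) ≤ j := j.cast_nonneg
    push_cast
    rw [show (1 / (4 * (j : ℝ) + 3 + 1 / 2) - 1 / (16 * (j + 1)) -
      (1 / (4 * (j : ℝ) + 3 + 1 + 1 / 2) - 1 / (16 * (j + 1 + 1)))) =
      1 / ((4 * (j : ℝ) + 3 + 1 / 2) * (4 * (j : ℝ) + 3 + 1 + 1 / 2)) -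
        1 / (16 * (j + 1) * (j + 2)) by field_simp; ring]
    rw [zero_div, sub_nonneg]
    apply one_div_le_one_div_of_le (by positivity)
    nlinarith
  · have h1 : (N + 1) / 4 = N / 4 := by omega
    rw [h1]
    have hμ := (abs_le.1 (abs_moebius_cast_le_one (N + 1))).2
    calc (μ (N + 1) : ℝ) / ((N + 1 : ℕ) : ℝ) ^ 2 ≤ 1 / ((N + 1 / 2) * (N + 3 / 2)) := by
          push_cast
          apply div_le_div₀ zero_le_one hμ (by positivity)
          nlinarith
      _ = _ := by
          push_cast
          field_simp
          ring

theorem moebiusTailBound_le (N : ℕ) :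
    moebiusTailBound N ≤ 1 / (N + 1 / 2) - 1 / (4 * (N + 4)) := by
  have h : ((N / 4 : ℕ) : ℝ) ≤ N / 4 := Nat.cast_div_le
  have : 1 / (4 * ((N : ℝ) + 4)) ≤ 1 / (16 * ((N / 4 : ℕ) + 1)) :=
    one_div_le_one_div_of_le (by positivity) (by linarith)
  unfold moebiusTailBound
  linarith

theorem six_div_pi_sq_le (N : ℕ) :
    6 / π ^ 2 ≤ ∑ d ∈ Finset.Icc 1 N, (μ d : ℝ) / (d : ℝ) ^ 2 + moebiusTailBound N := by
  have hanti : Antitone fun N : ℕ =>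
      ∑ d ∈ Finset.Icc 1 N, (μ d : ℝ) / (d : ℝ) ^ 2 + moebiusTailBound N := by
    refine antitone_nat_of_succ_le fun n => ?_
    rw [Finset.sum_Icc_succ_top (by omega)]
    linarith [moebius_div_sq_le_moebiusTailBound_sub n]
  refine hanti.le_of_tendsto ?_ N
  have h1 : Filter.Tendsto (fun N : ℕ => ∑ d ∈ Finset.Icc 1 N, (μ d : ℝ) / (d : ℝ) ^ 2)
      Filter.atTop (nhds (6 / π ^ 2)) := by
    refine (hasSum_moebius_div_sq.tendsto_sum_nat.comp (Filter.tendsto_add_atTop_nat 1)).congr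
      fun n => ?_
    simp only [Function.comp_apply]
    rw [Finset.range_eq_Ico, Finset.sum_eq_sum_Ico_succ_bot (by omega)]
    simp
    rfl
  have h2 : Filter.Tendsto moebiusTailBound Filter.atTop (nhds 0) := by
    have ha : Filter.Tendsto (fun N : ℕ => 1 / ((N : ℝ) + 1 / 2)) Filter.atTop (nhds 0) :=
      tendsto_const_nhds.div_atTop
        (Filter.tendsto_atTop_add_const_right _ _ tendsto_natCast_atTop_atTop)
    have hb : Filter.Tendsto (fun N : ℕ => 1 / (16 * (((N / 4 : ℕ) : ℝ) + 1)))
        Filter.atTop (nhds 0) :=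
      tendsto_const_nhds.div_atTop (Filter.Tendsto.const_mul_atTop (by norm_num)
        (Filter.tendsto_atTop_add_const_right _ _ (tendsto_natCast_atTop_atTop.comp
          (Nat.tendsto_div_const_atTop (by norm_num)))))
    rw [← sub_zero (0 : ℝ)]
    exact ha.sub hb
  simpa using h1.add h2

theorem harmonic_succ_div (N m : ℕ) (hm : 0 < m) :
    (harmonic ((N + 1) / m) : ℝ) / m = harmonic (N / m) / m +
      if m ∣ N + 1 then 1 / ((N : ℝ) + 1) else 0 := by
  rw [Nat.succ_div]
  split_ifs with h
  · obtain ⟨k, hk⟩ := h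
    obtain ⟨j, rfl⟩ : ∃ j, k = j + 1 := ⟨k - 1, by
      rcases k with _ | k
      · simp at hk
      · simp⟩
    have hj : N / m = j := by
      have h2 := Nat.succ_div_of_dvd (a := N) (b := m) ⟨j + 1, hk⟩
      rw [hk, Nat.mul_div_cancel_left _ hm] at h2
      omega
    have hN : (N : ℝ) + 1 = m * (j + 1) := by exact_mod_cast hk
    have hm' : (m : ℝ) ≠ 0 := by exact_mod_cast hm.ne'
    have hj' : (j : ℝ) + 1 ≠ 0 := by positivity
    rw [hj, harmonic_succ, hN]
    push_cast
    field_simp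
  · simp

/-- The sum of `1 / d` over squarefree `d ≤ N` is at most the sum over those `d ≤ N` divisible
neither by `4` nor by `9`. -/
theorem sum_abs_moebius_div_le_harmonic (N : ℕ) :
    ∑ d ∈ Finset.Icc 1 N, |(μ d : ℝ)| / d ≤
      harmonic N - harmonic (N / 4) / 4 - harmonic (N / 9) / 9 + harmonic (N / 36) / 36 := by
  induction N with
  | zero => simp
  | succ N ih =>
    rw [Finset.sum_Icc_succ_top (by omega)]
    have h4 := harmonic_succ_div N 4 (by norm_num)
    have h9 := harmonic_succ_div N 9 (by norm_num)
    have h36 := harmonic_succ_div N 36 (by norm_num)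
    have h1 : (harmonic (N + 1) : ℝ) = harmonic N + 1 / ((N : ℝ) + 1) := by
      rw [harmonic_succ]
      push_cast
      ring
    push_cast at h4 h9 h36 ⊢
    have hterm : |(μ (N + 1) : ℝ)| / ((N : ℝ) + 1) ≤ 1 / ((N : ℝ) + 1) -
        (if 4 ∣ N + 1 then 1 / ((N : ℝ) + 1) else 0) -
        (if 9 ∣ N + 1 then 1 / ((N : ℝ) + 1) else 0) +
        (if 36 ∣ N + 1 then 1 / ((N : ℝ) + 1) else 0) := by
      by_cases d4 : 4 ∣ N + 1
      · rw [moebius_eq_zero_of_sq_dvd (m := 2) (by norm_num) d4]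
        by_cases d9 : 9 ∣ N + 1
        · have d36 : 36 ∣ N + 1 := by omega
          simp [d4, d9, d36]
        · have d36 : ¬ 36 ∣ N + 1 := by omega
          simp [d4, d9, d36]
      · have d36 : ¬ 36 ∣ N + 1 := by omega
        by_cases d9 : 9 ∣ N + 1
        · rw [moebius_eq_zero_of_sq_dvd (m := 3) (by norm_num) d9]
          simp [d4, d9, d36]
        · simp only [d4, d9, d36, if_false, sub_zero, add_zero]
          gcongr
          exact abs_moebius_cast_le_one _
    linarith

theorem harmonic_lt_log_add (n : ℕ) :
    (harmonic n : ℝ) < log (n + 1) + eulerMascheroniConstant := by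
  have := eulerMascheroniSeq_lt_eulerMascheroniConstant n
  unfold eulerMascheroniSeq at this
  linarith

theorem log_add_sub_lt_harmonic (n : ℕ) :
    log (n + 1) + eulerMascheroniConstant - 1 / ((n : ℝ) + 1) < harmonic n := by
  have := eulerMascheroniConstant_lt_eulerMascheroniSeq' (n + 1)
  unfold eulerMascheroniSeq' at this
  simp only [Nat.add_eq_zero_iff, one_ne_zero, and_false, if_false, harmonic_succ] at this
  push_cast at this
  rw [one_div]
  linarith

theorem harmonic_div_le {N m : ℕ} (hN : 0 < N) (hm : 0 < m) :
    (harmonic (N / m) : ℝ) ≤ log N - log m + m / N + eulerMascheroniConstant := by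
  have hN' : (0 : ℝ) < N := by exact_mod_cast hN
  have hm' : (0 : ℝ) < m := by exact_mod_cast hm
  have h1 : ((N / m : ℕ) : ℝ) + 1 ≤ (N : ℝ) / m * (1 + m / N) := by
    have : ((N / m : ℕ) : ℝ) ≤ (N : ℝ) / m := Nat.cast_div_le
    have h : (N : ℝ) / m * (1 + m / N) = N / m + 1 := by field_simp
    linarith
  have h2 := Real.log_le_log (by positivity) h1
  rw [Real.log_mul (by positivity) (by positivity), Real.log_div hN'.ne' hm'.ne'] at h2
  have h3 := Real.log_le_sub_one_of_pos (show 0 < 1 + (m : ℝ) / N by positivity)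
  linarith [harmonic_lt_log_add (N / m)]

theorem le_harmonic_div {N m : ℕ} (hN : 0 < N) (hm : 0 < m) :
    log N - log m - m / N + eulerMascheroniConstant ≤ (harmonic (N / m) : ℝ) := by
  have hN' : (0 : ℝ) < N := by exact_mod_cast hN
  have hm' : (0 : ℝ) < m := by exact_mod_cast hm
  have h1 : (N : ℝ) / m ≤ (N / m : ℕ) + 1 := by
    have := Nat.lt_floor_add_one ((N : ℝ) / m)
    rw [Nat.floor_div_eq_div] at this
    exact this.le
  have h2 := Real.log_le_log (by positivity) h1
  rw [Real.log_div hN'.ne' hm'.ne'] at h2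
  have h3 : 1 / (((N / m : ℕ) : ℝ) + 1) ≤ m / N := by
    rw [← one_div_div (N : ℝ)]
    exact one_div_le_one_div_of_le (by positivity) h1
  linarith [log_add_sub_lt_harmonic (N / m)]

theorem sum_abs_moebius_div_le {N : ℕ} (hN : 0 < N) :
    ∑ d ∈ Finset.Icc 1 N, |(μ d : ℝ)| / d ≤ 2 / 3 * log N + 0.94 + 4 / N := by
  have h0 := sum_abs_moebius_div_le_harmonic N
  have h1 := harmonic_div_le hN one_pos
  have h4 := le_harmonic_div hN (m := 4) (by norm_num)
  have h9 := le_harmonic_div hN (m := 9) (by norm_num)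
  have h36 := harmonic_div_le hN (m := 36) (by norm_num)
  have l4 : log (4 : ℝ) = 2 * log 2 := by
    rw [show (4 : ℝ) = 2 ^ 2 by norm_num, Real.log_pow]; norm_num
  have l9 : log (9 : ℝ) = 2 * log 3 := by
    rw [show (9 : ℝ) = 3 ^ 2 by norm_num, Real.log_pow]; norm_num
  have l36 : log (36 : ℝ) = 2 * log 2 + 2 * log 3 := by
    rw [show (36 : ℝ) = 4 * 9 by norm_num, Real.log_mul (by norm_num) (by norm_num), l4, l9]
  simp only [Nat.div_one, Nat.cast_one, Real.log_one, Nat.cast_ofNat, l4, l9, l36,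
    div_eq_mul_inv _ (N : ℝ)] at h1 h4 h9 h36 ⊢
  linarith [Real.log_two_lt_d9, Real.log_three_lt_d9, eulerMascheroniConstant_lt_two_thirds]

theorem le_two_mul_sum_totient_of_lt_sixteen {x : ℝ} {N : ℕ} (h1 : 1 ≤ N) (h2 : N < 16)
    (hN : (N : ℝ) ≤ x) (hx : x < N + 1) :
    0.92 * x ^ 2 - 3 * x ≤ 2 * x * ∑ a ∈ Finset.Icc 1 N, (Nat.totient a : ℝ) / a -
        ∑ a ∈ Finset.Icc 1 N, (Nat.totient a : ℝ) := by
  have hconv : 0 ≤ (x - N) * (N + 1 - x) :=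
    mul_nonneg (sub_nonneg.2 hN) (by linarith)
  interval_cases N <;>
    simp only [Finset.sum_Icc_succ_top, Nat.reduceLeDiff, Finset.Icc_self, Finset.sum_singleton,
      Nat.reduceAdd, show Nat.totient 1 = 1 by decide, show Nat.totient 2 = 1 by decide,
      show Nat.totient 3 = 2 by decide, show Nat.totient 4 = 2 by decide,
      show Nat.totient 5 = 4 by decide, show Nat.totient 6 = 2 by decide,
      show Nat.totient 7 = 6 by decide, show Nat.totient 8 = 4 by decide,
      show Nat.totient 9 = 6 by decide, show Nat.totient 10 = 4 by decide,
      show Nat.totient 11 = 10 by decide, show Nat.totient 12 = 4 by decide,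
      show Nat.totient 13 = 12 by decide, show Nat.totient 14 = 6 by decide,
      show Nat.totient 15 = 8 by decide] <;>
    norm_num at * <;> nlinarith

theorem moebius_mul_le_moebius_mul {y n : ℝ} (d : ℕ) (hn : n ≤ y) (hn' : y ≤ n + 1)
    (hy : 1 ≤ y) :
    (μ d : ℝ) * (3 / 2 * y ^ 2 - y) - |(μ d : ℝ)| * (y / 2) ≤
      μ d * (2 * y * n - n * (n + 1) / 2) := by
  have hprod := mul_nonneg (sub_nonneg.2 hn) (sub_nonneg.2 hn')
  rcases ArithmeticFunction.moebius_eq_or d with h | h | h <;> rw [h] <;> norm_num <;> nlinarith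

theorem le_two_mul_sum_totient {x : ℝ} {N : ℕ} (hN : (N : ℝ) ≤ x) (hx : x < N + 1) :
    3 / 2 * x ^ 2 * ∑ d ∈ Finset.Icc 1 N, (μ d : ℝ) / (d : ℝ) ^ 2 -
        x * ∑ d ∈ Finset.Icc 1 N, (μ d : ℝ) / d -
        x / 2 * ∑ d ∈ Finset.Icc 1 N, |(μ d : ℝ)| / d ≤
      2 * x * ∑ a ∈ Finset.Icc 1 N, (Nat.totient a : ℝ) / a -
        ∑ a ∈ Finset.Icc 1 N, (Nat.totient a : ℝ) := by
  rw [two_mul_sum_totient_div_sub_sum_totient, Finset.mul_sum, Finset.mul_sum, Finset.mul_sum,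
    ← Finset.sum_sub_distrib, ← Finset.sum_sub_distrib]
  refine Finset.sum_le_sum fun d hd => ?_
  obtain ⟨hd1, hdN⟩ := Finset.mem_Icc.1 hd
  have hd0 : (0 : ℝ) < d := by exact_mod_cast hd1
  have hdx : (d : ℝ) ≤ x := (Nat.cast_le.2 hdN).trans hN
  have hx0 : 0 ≤ x := hd0.le.trans hdx
  have hfloor : ⌊x / d⌋₊ = N / d := by
    rw [Nat.floor_div_natCast, (Nat.floor_eq_iff hx0).2 ⟨hN, hx⟩]
  have h1 : ((N / d : ℕ) : ℝ) ≤ x / d := hfloor ▸ Nat.floor_le (by positivity)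
  have h2 : x / d ≤ (N / d : ℕ) + 1 := hfloor ▸ (Nat.lt_floor_add_one (x / d)).le
  refine le_of_eq_of_le ?_ (moebius_mul_le_moebius_mul d h1 h2 ((one_le_div hd0).2 hdx))
  ring

theorem moebiusTailBound_add_le {x : ℝ} {N : ℕ} (h16 : 16 ≤ N) (hN : (N : ℝ) ≤ x)
    (hx : x < N + 1) : 3 / 2 * x * moebiusTailBound N + 3 / N ≤ 1.53 := by
  have h16' : (16 : ℝ) ≤ N := by exact_mod_cast h16
  have hG := moebiusTailBound_le N
  have hG0 : 0 ≤ 1 / ((N : ℝ) + 1 / 2) - 1 / (4 * (N + 4)) :=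
    sub_nonneg.2 (one_div_le_one_div_of_le (by positivity) (by linarith))
  have h1 : 3 / 2 * x * moebiusTailBound N ≤
      3 / 2 * ((N : ℝ) + 1) * (1 / ((N : ℝ) + 1 / 2) - 1 / (4 * (N + 4))) := by
    calc _ ≤ 3 / 2 * x * (1 / ((N : ℝ) + 1 / 2) - 1 / (4 * (N + 4))) := by
          gcongr
          linarith
      _ ≤ _ := by gcongr
  have h2 : 3 / (N : ℝ) ≤ 3 / 16 := by gcongr
  have h3 : ((N : ℝ) + 1) * (1 / ((N : ℝ) + 1 / 2)) ≤ 1 + 1 / 33 := by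
    rw [mul_one_div, div_le_iff₀ (by positivity)]
    linarith
  have h4 : 17 / 80 ≤ ((N : ℝ) + 1) * (1 / (4 * (N + 4))) := by
    rw [mul_one_div, le_div_iff₀ (by positivity)]
    linarith
  linarith

/-- Treviño's totient sum bound: for real `x > 1`,
`2x ∑_{a ≤ x} φ(a)/a - ∑_{a ≤ x} φ(a) ≥ (9/π²) x² f(x)` where
`f(x) = 1 - (π²/9)(log x + 9)/(3x)`. -/
theorem stmt_5 (x : ℝ) (hx : 1 < x) :
    (9 / π ^ 2) * x ^ 2 * (1 - (π ^ 2 / 9) * (Real.log x + 9) / (3 * x)) ≤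
      2 * x * ∑ a ∈ Finset.Icc 1 ⌊x⌋₊, (Nat.totient a : ℝ) / (a : ℝ) -
        ∑ a ∈ Finset.Icc 1 ⌊x⌋₊, (Nat.totient a : ℝ) := by
  have hx0 : 0 < x := by linarith
  set N := ⌊x⌋₊
  have hN : (N : ℝ) ≤ x := Nat.floor_le hx0.le
  have hxN : x < N + 1 := Nat.lt_floor_add_one x
  have hN1 : 1 ≤ N := Nat.le_floor (by exact_mod_cast hx.le)
  have hlhs : (9 / π ^ 2) * x ^ 2 * (1 - (π ^ 2 / 9) * (Real.log x + 9) / (3 * x)) =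
      9 / π ^ 2 * x ^ 2 - x * log x / 3 - 3 * x := by
    field_simp
    ring
  rw [hlhs]
  rcases lt_or_ge N 16 with h16 | h16
  · have hpi : 9 / π ^ 2 ≤ 0.92 := by
      rw [div_le_iff₀ (by positivity)]
      nlinarith [Real.pi_gt_d2]
    have h1 := mul_le_mul_of_nonneg_right hpi (sq_nonneg x)
    have h2 := mul_nonneg hx0.le (Real.log_nonneg hx.le)
    linarith [le_two_mul_sum_totient_of_lt_sixteen hN1 h16 hN hxN]
  · have hN0 : (0 : ℝ) < N := by exact_mod_cast hN1
    have hsq := mul_le_mul_of_nonneg_left (six_div_pi_sq_le N)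
      (show 0 ≤ 3 / 2 * x ^ 2 by positivity)
    have hm := mul_le_mul_of_nonneg_left (sum_moebius_div_le hN1) hx0.le
    have hS := mul_le_mul_of_nonneg_left (sum_abs_moebius_div_le hN1)
      (show 0 ≤ x / 2 by positivity)
    have hlog := mul_le_mul_of_nonneg_left (Real.log_le_log hN0 hN) hx0.le
    have htail := mul_le_mul_of_nonneg_left (moebiusTailBound_add_le h16 hN hxN) hx0.le
    refine le_trans ?_ (le_two_mul_sum_totient hN hxN)
    ring_nf at hsq hm hS hlog htail ⊢
    linarith
end

section
/- For every positive integer r, (2r)!/(2^r · r!) ≤ √2 · (2r/e)^r. -/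
/-- For every positive integer `r`, `(2r)!/(2^r r!) ≤ √2 (2r/e)^r`. -/
theorem stmt_8 (r : ℕ) (hr : 0 < r) :
    ((2 * r).factorial : ℝ) / (2 ^ r * r.factorial) ≤
      Real.sqrt 2 * ((2 * r : ℝ) / Real.exp 1) ^ r := by
  have hanti : Stirling.stirlingSeq (2 * r) ≤ Stirling.stirlingSeq r := by
    have h := Stirling.stirlingSeq'_antitone (show r - 1 ≤ 2 * r - 1 by omega)
    simpa [Nat.sub_add_cancel hr, Nat.sub_add_cancel (show 1 ≤ 2 * r by omega)] using h
  have hr' : (0 : ℝ) < r := by exact_mod_cast hr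
  have hx : 0 < (r : ℝ) / Real.exp 1 := by positivity
  simp only [Stirling.stirlingSeq, Nat.cast_mul, Nat.cast_ofNat] at hanti
  rw [Real.sqrt_mul (by norm_num) (2 * (r : ℝ)), mul_div_assoc] at hanti
  rw [mul_div_assoc]
  generalize (r : ℝ) / Real.exp 1 = x at hanti hx ⊢
  have hs : 0 < Real.sqrt (2 * (r : ℝ)) := by positivity
  have hf : (0 : ℝ) < r.factorial := by positivity
  rw [div_le_iff₀ (by positivity)] at hanti ⊢
  refine hanti.trans_eq ?_
  rw [mul_pow, mul_pow, pow_mul', pow_mul']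
  field_simp
end

section
/- Let n be a positive integer and p a real number with log p > max{exp(8/3), 8(n−1)} (so in particular n ≤ (1/4) log p). Set A = (n/(n+1)) e^{1/n} and h = ⌈A log p⌉. Let u₁ be a positive integer with u₁ ≤ (h−1)^k for some nonnegative integer k ≤ n−1, and suppose H > (π/3)√(2e) (n/(n+1)) p^{1/4} (log p)^{(n+1)/2}. Then X/u₁ ≥ X*, where X = H/(2h) and X* = (π/3)(2e)^{-1/2} ((n+1)/n)^{n-1} p^{1/4} (log p)^{-(n-1)/2} (1 − ((n+1)/n) e^{-1/n} (log p)^{-1}). -/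
open Real

/-- The real power `p ^ (1 / 4)` is nonnegative for every real base, because `cos (π / 4) > 0`. -/
lemma rpow_one_fourth_nonneg (p : ℝ) : 0 ≤ p ^ ((1 : ℝ) / 4) := by
  rcases le_or_gt 0 p with hp | hp
  · exact Real.rpow_nonneg hp _
  · rw [Real.rpow_def_of_neg hp]
    refine mul_nonneg (Real.exp_pos _).le (Real.cos_nonneg_of_mem_Icc ⟨?_, ?_⟩) <;>
      linarith [Real.pi_pos]

/-- If `h ≤ c + 1` and `u ≤ c ^ m`, then dividing `H ≥ K` by `2 * h * u` loses at most the factor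
`1 - 1 / c` compared with dividing `K` by `2 * c ^ (m + 1)`. -/
lemma div_pow_mul_one_sub_le {K H c h u : ℝ} {m : ℕ} (hK : 0 ≤ K) (hKH : K ≤ H) (hc : 0 < c)
    (hh : 0 < h) (hhc : h ≤ c + 1) (hu : 0 < u) (huc : u ≤ c ^ m) :
    K / (2 * c ^ (m + 1)) * (1 - 1 / c) ≤ H / (2 * h) / u := by
  have hcm : 0 < c ^ m := pow_pos hc m
  calc K / (2 * c ^ (m + 1)) * (1 - 1 / c)
      = K / (2 * c ^ m) * ((1 - 1 / c) / c) := by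
        field_simp
        ring
    _ ≤ K / (2 * c ^ m) * (1 / (c + 1)) := by
        refine mul_le_mul_of_nonneg_left ?_ (by positivity)
        rw [div_le_div_iff₀ hc (by linarith)]
        have : (1 - 1 / c) * (c + 1) = c - 1 / c := by
          field_simp
          ring
        have : 0 < 1 / c := by positivity
        linarith
    _ = K / (2 * (c + 1) * c ^ m) := by
        field_simp
    _ ≤ H / (2 * h * u) := by
        gcongr
        exact hK.trans hKH
    _ = H / (2 * h) / u := by rw [div_div]

/-- Let `n ≥ 1`, `p` real with `log p > max{exp(8/3), 8(n-1)}`, `A = (n/(n+1)) e^(1/n)`,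
`h = ⌈A log p⌉`, and `u₁ ≤ (h-1)^k` with `k ≤ n-1`.  If
`H > (π/3)√(2e)(n/(n+1)) p^(1/4) (log p)^((n+1)/2)`, then `X/u₁ ≥ X*` where `X = H/(2h)` and
`X* = (π/3)(2e)^(-1/2)((n+1)/n)^(n-1) p^(1/4) (log p)^(-(n-1)/2) (1 - ((n+1)/n) e^(-1/n)/log p)`. -/
theorem stmt_14 (n : ℕ) (hn : 0 < n) (p : ℝ)
    (hp : Real.log p > max (Real.exp (8 / 3)) (8 * ((n : ℝ) - 1)))
    (A : ℝ) (hA : A = ((n : ℝ) / ((n : ℝ) + 1)) * Real.exp (1 / (n : ℝ)))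
    (h : ℕ) (hh : h = ⌈A * Real.log p⌉₊)
    (u₁ : ℕ) (hu₁ : 0 < u₁) (k : ℕ) (hk : k ≤ n - 1) (hu : u₁ ≤ (h - 1) ^ k)
    (H : ℝ)
    (hH : H > (π / 3) * Real.sqrt (2 * Real.exp 1) * ((n : ℝ) / ((n : ℝ) + 1)) *
      p ^ ((1 : ℝ) / 4) * Real.log p ^ (((n : ℝ) + 1) / 2)) :
    (π / 3) * (2 * Real.exp 1) ^ (-(1 : ℝ) / 2) * (((n : ℝ) + 1) / (n : ℝ)) ^ (n - 1) *
        p ^ ((1 : ℝ) / 4) * Real.log p ^ (-(((n : ℝ) - 1) / 2)) *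
        (1 - ((n : ℝ) + 1) / (n : ℝ) * Real.exp (-1 / (n : ℝ)) / Real.log p) ≤
      H / (2 * h) / u₁ := by
  have hn0 : (0 : ℝ) < n := by exact_mod_cast hn
  have hn1 : (1 : ℝ) ≤ n := by exact_mod_cast hn
  set L := Real.log p
  have hL2 : 2 < L := by
    have h1 := (le_max_left (Real.exp (8 / 3)) (8 * ((n : ℝ) - 1))).trans_lt hp
    have h2 := Real.add_one_le_exp (8 / 3 : ℝ)
    linarith
  have hL0 : 0 < L := by linarith
  have hA2 : 1 / 2 ≤ A := by
    have h1 : (1 : ℝ) / 2 ≤ (n : ℝ) / ((n : ℝ) + 1) := by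
      rw [div_le_div_iff₀ two_pos (by linarith)]
      linarith
    have h2 : 1 ≤ Real.exp (1 / (n : ℝ)) := Real.one_le_exp (by positivity)
    rw [hA]
    nlinarith
  have hA0 : 0 < A := by linarith
  have hc1 : 1 ≤ A * L := by nlinarith
  have hhpos : 0 < h := by
    rw [hh, Nat.ceil_pos]
    linarith
  have hhc : (h : ℝ) < A * L + 1 := by
    rw [hh]
    exact Nat.ceil_lt_add_one (by linarith)
  have huc : (u₁ : ℝ) ≤ (A * L) ^ (n - 1) := by
    have h1 : (u₁ : ℝ) ≤ ((h : ℝ) - 1) ^ k := by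
      rw [← Nat.cast_pred hhpos]
      exact_mod_cast hu
    have h2 : (0 : ℝ) ≤ (h : ℝ) - 1 := by
      rw [← Nat.cast_pred hhpos]
      positivity
    exact h1.trans ((pow_le_pow_left₀ h2 (by linarith) k).trans (pow_le_pow_right₀ hc1 hk))
  have hP := rpow_one_fourth_nonneg p
  refine le_trans (le_of_eq ?_) (div_pow_mul_one_sub_le (by positivity) hH.le
    (by linarith : 0 < A * L) (by exact_mod_cast hhpos) hhc.le (by exact_mod_cast hu₁) huc)
  have hQ : L ^ (((n : ℝ) + 1) / 2) = L ^ (-(((n : ℝ) - 1) / 2)) * L ^ n := by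
    rw [← Real.rpow_natCast, ← Real.rpow_add hL0]
    congr 1
    ring
  have hs : (2 * Real.exp 1) ^ (-(1 : ℝ) / 2) = Real.sqrt (2 * Real.exp 1) / (2 * Real.exp 1) := by
    rw [Real.sqrt_eq_rpow, ← Real.rpow_sub_one (by positivity)]
    norm_num
  have hAn : A ^ n = ((n : ℝ) / ((n : ℝ) + 1)) ^ n * Real.exp 1 := by
    rw [hA, mul_pow, ← Real.exp_nat_mul]
    congr 2
    field_simp
  have hAinv : ((n : ℝ) + 1) / n * Real.exp (-1 / (n : ℝ)) / L = 1 / (A * L) := by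
    rw [hA, neg_div, Real.exp_neg]
    field_simp
  have ha : (((n : ℝ) + 1) / n) ^ (n - 1) =
      ((n : ℝ) / ((n : ℝ) + 1)) / ((n : ℝ) / ((n : ℝ) + 1)) ^ n := by
    rw [← inv_div, inv_pow, ← Nat.sub_one_add_one hn.ne', pow_succ, Nat.add_sub_cancel]
    field_simp
  rw [hAinv, hQ, hs, ha, Nat.sub_add_cancel hn, mul_pow, hAn]
  congr 1
  have hepos := Real.exp_pos 1
  have hapos : 0 < (n : ℝ) / ((n : ℝ) + 1) := by positivity
  generalize (n : ℝ) / ((n : ℝ) + 1) = a at hapos ⊢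
  field_simp
end
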